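/- (Cartan) Let N be a closed normal subgroup of G, Q = G/N, and let A be a G-operation equipped with a G-invariant N-connection, i.e. a G-equivariant morphism of N-operations θ̃ : W_N → A. Let B = A_{N,bas} = {ω ∈ A : ω is N-invariant and I_X ω = 0 for all X ∈ n}, equipped with the residual Q-operation structure. Then the natural inclusion j : W_Q ⊗ B → W_G ⊗ A maps (W_Q ⊗ B)_{Q,bas} into (W_G ⊗ A)_{G,bas} and induces an isomorphism WH^*_Q(B) ≅ WH^*_G(A) in basic cohomology. -/

import Mathlib

/-!
Common algebraic framework (following H. Cartan, and Guillemin–Sternberg):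
*operations* of a Lie algebra on a ℤ-graded supercommutative algebra.

For a **compact connected** Lie group `G`, a smooth `G`-action on a graded algebra is
determined infinitesimally, invariance under `G` coincides with infinitesimal invariance
(kernel of the Lie derivative), and `G`-equivariance of maps coincides with infinitesimal
equivariance.  Accordingly the smooth `G`-action is encoded by its infinitesimal Lie
derivative `L` below; topological (Fréchet) requirements, which play no role in the
statements, are omitted.
-/

open scoped TensorProduct

set_option synthInstance.maxHeartbeats 1000000
set_option maxHeartbeats 1600000

noncomputable section

/-- The sign `(-1)^n` for an integer `n`. -/
def sgn (n : ℤ) : ℤ := if Even n then 1 else -1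

/-- An *operation* of a real Lie algebra `𝔤` on a `ℤ`-graded supercommutative real
algebra `A`: a degree `+1` odd derivation `d` with `d² = 0`, an (infinitesimal) action
`L` of `𝔤` by even degree-`0` derivations commuting with `d`, and an equivariant
contraction `I` by odd degree-`(-1)` derivations satisfying anticommutation,
`[L_X, I_Y] = I_[X,Y]` and Cartan's formula `I_X d + d I_X = L_X`. -/
structure Operation (𝔤 : Type) [LieRing 𝔤] [LieAlgebra ℝ 𝔤]
    (A : Type) [Ring A] [Algebra ℝ A] : Type where
  grading : ℤ → Submodule ℝ A
  decomposition : DirectSum.Decomposition grading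
  one_mem : (1 : A) ∈ grading 0
  mul_mem : ∀ {m n : ℤ} {a b : A}, a ∈ grading m → b ∈ grading n → a * b ∈ grading (m + n)
  supercomm : ∀ {m n : ℤ} {a b : A}, a ∈ grading m → b ∈ grading n →
      a * b = sgn (m * n) • (b * a)
  d : Module.End ℝ A
  d_mem : ∀ {n : ℤ} {a : A}, a ∈ grading n → d a ∈ grading (n + 1)
  d_mul : ∀ {n : ℤ} {a : A}, a ∈ grading n → ∀ b : A,
      d (a * b) = d a * b + sgn n • (a * d b)
  d_sq : d ∘ₗ d = 0
  L : 𝔤 →ₗ[ℝ] Module.End ℝ A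
  L_mem : ∀ (X : 𝔤) {n : ℤ} {a : A}, a ∈ grading n → L X a ∈ grading n
  L_mul : ∀ (X : 𝔤) (a b : A), L X (a * b) = L X a * b + a * L X b
  L_bracket : ∀ X Y : 𝔤, L ⁅X, Y⁆ = L X ∘ₗ L Y - L Y ∘ₗ L X
  L_d : ∀ X : 𝔤, L X ∘ₗ d = d ∘ₗ L X
  I : 𝔤 →ₗ[ℝ] Module.End ℝ A
  I_mem : ∀ (X : 𝔤) {n : ℤ} {a : A}, a ∈ grading n → I X a ∈ grading (n - 1)
  I_mul : ∀ (X : 𝔤) {n : ℤ} {a : A}, a ∈ grading n → ∀ b : A,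
      I X (a * b) = I X a * b + sgn n • (a * I X b)
  I_I : ∀ X Y : 𝔤, I X ∘ₗ I Y + I Y ∘ₗ I X = 0
  L_I : ∀ X Y : 𝔤, L X ∘ₗ I Y - I Y ∘ₗ L X = I ⁅X, Y⁆
  cartan : ∀ X : 𝔤, I X ∘ₗ d + d ∘ₗ I X = L X

namespace Operation

variable {𝔤 : Type} [LieRing 𝔤] [LieAlgebra ℝ 𝔤] {A : Type} [Ring A] [Algebra ℝ A]

/-- Invariant elements (`= G`-invariant elements, for `G` compact connected). -/
def inv (op : Operation 𝔤 A) : Submodule ℝ A := ⨅ X : 𝔤, LinearMap.ker (op.L X)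

/-- Horizontal elements. -/
def hor (op : Operation 𝔤 A) : Submodule ℝ A := ⨅ X : 𝔤, LinearMap.ker (op.I X)

/-- Basic elements. -/
def bas (op : Operation 𝔤 A) : Submodule ℝ A := op.inv ⊓ op.hor

end Operation

/-- `n`-cocycles of the complex obtained by restricting `d` to the graded pieces `P n`. -/
def cocycles {A : Type} [AddCommGroup A] [Module ℝ A] (d : Module.End ℝ A)
    (P : ℤ → Submodule ℝ A) (n : ℤ) : Submodule ℝ A :=
  P n ⊓ LinearMap.ker d

/-- Degree-`n` cohomology of the subcomplex `P` (with differential `d`):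
cocycles in `P n` modulo `d (P (n-1))`. -/
abbrev gradedCoh {A : Type} [AddCommGroup A] [Module ℝ A] (d : Module.End ℝ A)
    (P : ℤ → Submodule ℝ A) (n : ℤ) :=
  ↥(cocycles d P n) ⧸
    Submodule.comap (cocycles d P n).subtype (Submodule.map d (P (n - 1)))

/-- Structure constants `C^i_{jk}` of `𝔤`: `⁅e_j, e_k⁆ = C^i_{jk} e_i`. -/
def structConst {ι 𝔤 : Type} [Fintype ι] [LieRing 𝔤] [LieAlgebra ℝ 𝔤]
    (b : Module.Basis ι ℝ 𝔤) (i j k : ι) : ℝ :=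
  b.repr ⁅b j, b k⁆ i

/-- The Weil algebra `W_𝔤 = S𝔤* ⊗ Λ𝔤*` of `𝔤`, presented axiomatically: an operation `W`
together with generators `θ^i` (degree 1) and `Ω^i` (degree 2) on which `d_W`, `L`, `I`
take the classical values, and such that the monomials `Ω^m · θ^S` form a basis
(this pins `W` down as `S𝔤* ⊗ Λ𝔤*`). -/
structure WeilData (ι : Type) [Fintype ι] [DecidableEq ι] [LinearOrder ι]
    {𝔤 : Type} [LieRing 𝔤] [LieAlgebra ℝ 𝔤] (b : Module.Basis ι ℝ 𝔤)
    (W : Type) [Ring W] [Algebra ℝ W] extends Operation 𝔤 W where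
  θ : ι → W
  Ω : ι → W
  θ_mem : ∀ i, θ i ∈ grading 1
  Ω_mem : ∀ i, Ω i ∈ grading 2
  d_θ : ∀ i, d (θ i) =
      (-(1/2 : ℝ)) • ∑ j, ∑ k, structConst b i j k • (θ j * θ k) + Ω i
  d_Ω : ∀ i, d (Ω i) = -∑ j, ∑ k, structConst b i j k • (θ j * Ω k)
  L_θ : ∀ i j, L (b i) (θ j) = -∑ k, structConst b j i k • θ k
  L_Ω : ∀ i j, L (b i) (Ω j) = -∑ k, structConst b j i k • Ω k
  I_θ : ∀ i j, I (b i) (θ j) = if i = j then 1 else 0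
  I_Ω : ∀ i j, I (b i) (Ω j) = 0
  free : ∃ w : Module.Basis ((ι →₀ ℕ) × Finset ι) ℝ W, ∀ p : (ι →₀ ℕ) × Finset ι,
      w p = ((Finset.univ.sort (· ≤ ·)).map fun i => Ω i ^ p.1 i).prod *
        ((p.2.sort (· ≤ ·)).map θ).prod

/-- An algebraic connection on an operation, in the coordinates given by the basis `b`:
elements `θ̃^i` of degree 1 with `I_j θ̃^k = δ^k_j` and `L_k θ̃^i = -C^i_{kj} θ̃^j`
(the latter is `G`-equivariance, infinitesimally). -/
structure Connection {ι : Type} [Fintype ι] [DecidableEq ι]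
    {𝔤 : Type} [LieRing 𝔤] [LieAlgebra ℝ 𝔤] (b : Module.Basis ι ℝ 𝔤)
    {A : Type} [Ring A] [Algebra ℝ A] (op : Operation 𝔤 A) where
  θ : ι → A
  θ_mem : ∀ i, θ i ∈ op.grading 1
  I_θ : ∀ i j, op.I (b i) (θ j) = if i = j then 1 else 0
  L_θ : ∀ i j, op.L (b i) (θ j) = -∑ k, structConst b j i k • θ k

/-- The curvature `ω̃^i = dθ̃^i - ½ C^i_{jk} θ̃^j θ̃^k` of a connection. -/
def Connection.curv {ι : Type} [Fintype ι] [DecidableEq ι]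
    {𝔤 : Type} [LieRing 𝔤] [LieAlgebra ℝ 𝔤] {b : Module.Basis ι ℝ 𝔤}
    {A : Type} [Ring A] [Algebra ℝ A] {op : Operation 𝔤 A}
    (c : Connection b op) (i : ι) : A :=
  op.d (c.θ i) - (1/2 : ℝ) • ∑ j, ∑ k, structConst b i j k • (c.θ j * c.θ k)

end

noncomputable section
open scoped TensorProduct

variable {ι : Type} [Fintype ι] [DecidableEq ι] [LinearOrder ι]
variable {𝔤 : Type} [LieRing 𝔤] [LieAlgebra ℝ 𝔤]
variable {A : Type} [Ring A] [Algebra ℝ A]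
variable {W : Type} [Ring W] [Algebra ℝ W]

/-- Truncated exponential `exp(f) = Σ_{n<N} fⁿ/n!` of an endomorphism (all our
exponents are of nilpotent operators, so a suitable finite truncation is exact). -/
def expEnd {M : Type} [AddCommGroup M] [Module ℝ M] (N : ℕ) (f : Module.End ℝ M) :
    Module.End ℝ M :=
  ∑ n ∈ Finset.range N, ((n.factorial : ℝ)⁻¹) • f ^ n

/-- The operator `𝔸^j_i = θ^j ⊗ I_i` on `B = W_𝔤 ⊗ A`: left multiplication by `θ^j`
composed with the contraction `I_i` of `A` (extended to the tensor product with the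
usual Koszul sign operator `ε` of `W`). -/
def AOp (b : Module.Basis ι ℝ 𝔤) (wd : WeilData ι b W) (op : Operation 𝔤 A)
    (ε : Module.End ℝ W) (j i : ι) : Module.End ℝ (W ⊗[ℝ] A) :=
  TensorProduct.map (LinearMap.mulLeft ℝ (wd.θ j) ∘ₗ ε) (op.I (b i))

/-- `𝔸_T = t^i_j 𝔸^j_i` for `T = t^i_j θ^j ⊗ e_i ∈ 𝔤* ⊗ 𝔤`. -/
def AOpT (b : Module.Basis ι ℝ 𝔤) (wd : WeilData ι b W) (op : Operation 𝔤 A)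
    (ε : Module.End ℝ W) (T : ι → ι → ℝ) : Module.End ℝ (W ⊗[ℝ] A) :=
  ∑ i, ∑ j, T i j • AOp b wd op ε j i

/-- The operator `𝕃^j_i = θ^j ⊗ L_i - Ω^j ⊗ I_i` on `B = W_𝔤 ⊗ A`. -/
def LOp (b : Module.Basis ι ℝ 𝔤) (wd : WeilData ι b W) (op : Operation 𝔤 A)
    (ε : Module.End ℝ W) (j i : ι) : Module.End ℝ (W ⊗[ℝ] A) :=
  TensorProduct.map (LinearMap.mulLeft ℝ (wd.θ j)) (op.L (b i)) -
    TensorProduct.map (LinearMap.mulLeft ℝ (wd.Ω j) ∘ₗ ε) (op.I (b i))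

/-- `𝕃_T = t^i_j 𝕃^j_i` for `T = t^i_j θ^j ⊗ e_i ∈ 𝔤* ⊗ 𝔤`. -/
def LOpT (b : Module.Basis ι ℝ 𝔤) (wd : WeilData ι b W) (op : Operation 𝔤 A)
    (ε : Module.End ℝ W) (T : ι → ι → ℝ) : Module.End ℝ (W ⊗[ℝ] A) :=
  ∑ i, ∑ j, T i j • LOp b wd op ε j i

/-- The differential `D = d_W ⊗ 1 + ε ⊗ d` of the tensor product operation
`B = W_𝔤 ⊗ A` (`ε` the grading/sign operator of `W`). -/
def DTot {b : Module.Basis ι ℝ 𝔤} (wd : WeilData ι b W) (op : Operation 𝔤 A)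
    (ε : Module.End ℝ W) : Module.End ℝ (W ⊗[ℝ] A) :=
  LinearMap.rTensor A wd.d + TensorProduct.map ε op.d

/-- The total Lie derivative `L_X = L_X ⊗ 1 + 1 ⊗ L_X` of `B = W_𝔤 ⊗ A`. -/
def LTot {b : Module.Basis ι ℝ 𝔤} (wd : WeilData ι b W) (op : Operation 𝔤 A)
    (X : 𝔤) : Module.End ℝ (W ⊗[ℝ] A) :=
  LinearMap.rTensor A (wd.L X) + LinearMap.lTensor W (op.L X)

/-- The total contraction `I_X = ι_X ⊗ 1 + ε ⊗ I_X` of `B = W_𝔤 ⊗ A`. -/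
def ITot {b : Module.Basis ι ℝ 𝔤} (wd : WeilData ι b W) (op : Operation 𝔤 A)
    (ε : Module.End ℝ W) (X : 𝔤) : Module.End ℝ (W ⊗[ℝ] A) :=
  LinearMap.rTensor A (wd.I X) + TensorProduct.map ε (op.I X)

/-- The degree-`n` part of `W ⊗ A`. -/
def grTensor (b : Module.Basis ι ℝ 𝔤) (wd : WeilData ι b W) (op : Operation 𝔤 A) (n : ℤ) :
    Submodule ℝ (W ⊗[ℝ] A) :=
  ⨆ p : ℤ, LinearMap.range
    (TensorProduct.map ((wd.grading p).subtype) ((op.grading (n - p)).subtype))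



/-- For an ideal `𝔫 ⊆ 𝔤` (a submodule closed under bracketing by `𝔤`), the adjoint
action `ad_Y = ⁅Y, ·⁆` of `Y ∈ 𝔤` restricts to `𝔫`. -/
def adRes (𝔫 : Submodule ℝ 𝔤) (hn : ∀ (Y : 𝔤), ∀ x ∈ 𝔫, ⁅Y, x⁆ ∈ 𝔫) (Y : 𝔤) :
    ↥𝔫 →ₗ[ℝ] ↥𝔫 where
  toFun X := ⟨⁅Y, (X : 𝔤)⁆, hn Y X X.2⟩
  map_add' X₁ X₂ := by ext; simp
  map_smul' t X := by ext; simp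

/-- The moment map `μ(X) = -I_X θ̃ ∈ A⁰ ⊗ 𝔫` of a `G`-equivariant `N`-connection `θ̃`,
viewed (by pairing with `α ∈ 𝔫*`) as a linear map `𝔫* → A⁰` for each `X ∈ 𝔤`. -/
def moment {𝔫 : Submodule ℝ 𝔤} (op : Operation 𝔤 A)
    (θN : Module.Dual ℝ ↥𝔫 →ₗ[ℝ] A) (X : 𝔤) (α : Module.Dual ℝ ↥𝔫) : A :=
  -op.I X (θN α)

/-! ### Statement 18 -/

variable {κ : Type} [Fintype κ] [DecidableEq κ] [LinearOrder κ]
variable {𝔮 : Type} [LieRing 𝔮] [LieAlgebra ℝ 𝔮]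
variable {B : Type} [Ring B] [Algebra ℝ B]
variable {WQ : Type} [Ring WQ] [Algebra ℝ WQ]


/-! ### Signs -/

theorem sgn_zero : sgn 0 = 1 := by simp [sgn]
theorem sgn_one : sgn 1 = -1 := by simp [sgn]
theorem sgn_two_mul (n : ℤ) : sgn (2 * n) = 1 := by simp [sgn]
theorem sgn_two : sgn 2 = 1 := by simp [sgn]
theorem sgn_succ (n : ℤ) : sgn (n + 1) = - sgn n := by
  unfold sgn; by_cases h : Even n <;> simp [h]
theorem sgn_pred (n : ℤ) : sgn (n - 1) = - sgn n := by
  have := sgn_succ (n - 1); simp at this; omega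
theorem sgn_mul_self (n : ℤ) : sgn n * sgn n = 1 := by
  unfold sgn; split_ifs <;> simp
theorem sgn_cases (n : ℤ) : sgn n = 1 ∨ sgn n = -1 := by
  unfold sgn; split_ifs <;> simp

/-! ### Basic identities in a Weil algebra -/

section WeilBasic

variable {b : Module.Basis ι ℝ 𝔤} (wd : WeilData ι b W)

theorem weil_θθ (i j : ι) : wd.θ i * wd.θ j = - (wd.θ j * wd.θ i) := by
  have := wd.supercomm (wd.θ_mem i) (wd.θ_mem j)
  simpa [sgn_one] using this

theorem weil_θsq (i : ι) : wd.θ i * wd.θ i = 0 := by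
  have h := weil_θθ wd i i
  have h2 : (2 : ℝ) • (wd.θ i * wd.θ i) = 0 := by
    rw [two_smul]; nth_rewrite 1 [h]; simp
  simpa using h2

theorem weil_ΩΩ (i j : ι) : wd.Ω i * wd.Ω j = wd.Ω j * wd.Ω i := by
  have := wd.supercomm (wd.Ω_mem i) (wd.Ω_mem j)
  rwa [sgn_two_mul, one_smul] at this

theorem weil_Ωθ (i j : ι) : wd.Ω i * wd.θ j = wd.θ j * wd.Ω i := by
  have := wd.supercomm (wd.Ω_mem i) (wd.θ_mem j)
  rwa [sgn_two_mul, one_smul] at this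

/-- The Weil algebra is generated from `1` by left multiplications by generators. -/
theorem weil_gen (U : Submodule ℝ W) (h1 : (1 : W) ∈ U)
    (hθ : ∀ i, ∀ x ∈ U, wd.θ i * x ∈ U) (hΩ : ∀ i, ∀ x ∈ U, wd.Ω i * x ∈ U) : U = ⊤ := by
  obtain ⟨w, hw⟩ := wd.free
  rw [eq_top_iff, ← w.span_eq, Submodule.span_le]
  rintro _ ⟨p, rfl⟩
  rw [SetLike.mem_coe, hw]
  have hpow : ∀ i (n : ℕ), ∀ x ∈ U, wd.Ω i ^ n * x ∈ U := by
    intro i n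
    induction n with
    | zero => intro x hx; simpa using hx
    | succ n ih => intro x hx; rw [pow_succ, mul_assoc]; exact ih _ (hΩ i x hx)
  have hl1 : ∀ l : List ι, (l.map wd.θ).prod ∈ U := by
    intro l
    induction l with
    | nil => simpa using h1
    | cons a l ih => simpa using hθ a _ ih
  have hl2 : ∀ (l : List ι), ∀ x ∈ U, (l.map fun i => wd.Ω i ^ p.1 i).prod * x ∈ U := by
    intro l
    induction l with
    | nil => intro x hx; simpa using hx
    | cons a l ih =>
      intro x hx
      rw [List.map_cons, List.prod_cons, mul_assoc]
      exact hpow _ _ _ (ih x hx)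
  exact hl2 _ _ (hl1 _)

theorem weil_ext {M : Type} [AddCommGroup M] [Module ℝ M] (f g : W →ₗ[ℝ] M)
    (h1 : f 1 = g 1) (hθ : ∀ i x, f x = g x → f (wd.θ i * x) = g (wd.θ i * x))
    (hΩ : ∀ i x, f x = g x → f (wd.Ω i * x) = g (wd.Ω i * x)) : f = g := by
  have := weil_gen wd (LinearMap.eqLocus f g) (by simpa using h1)
    (fun i x hx => hθ i x hx) (fun i x hx => hΩ i x hx)
  ext x
  have hx : x ∈ LinearMap.eqLocus f g := by rw [this]; trivial
  exact hx

/-- Monomials in the `θ`'s. -/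
def thS (S : Finset ι) : W := ((S.sort (· ≤ ·)).map wd.θ).prod

/-- Monomials in the `Ω`'s. -/
def omM (m : ι →₀ ℕ) : W := ((Finset.univ.sort (· ≤ ·)).map fun i => wd.Ω i ^ m i).prod

theorem omM_zero : omM wd 0 = 1 := by
  unfold omM
  simp

theorem Ωpow_comm (i j : ι) (n : ℕ) : wd.Ω j * wd.Ω i ^ n = wd.Ω i ^ n * wd.Ω j :=
  (Commute.pow_right (weil_ΩΩ wd j i : Commute (wd.Ω j) (wd.Ω i)) n)

theorem Ω_mul_omM (j : ι) (m : ι →₀ ℕ) :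
    wd.Ω j * omM wd m = omM wd (m + Finsupp.single j 1) := by
  have key : ∀ l : List ι, l.Nodup → j ∈ l →
      wd.Ω j * (l.map fun i => wd.Ω i ^ m i).prod =
        (l.map fun i => wd.Ω i ^ (m + Finsupp.single j 1 : ι →₀ ℕ) i).prod := by
    intro l
    induction l with
    | nil => simp
    | cons a l ih =>
      intro hnd hj
      rw [List.nodup_cons] at hnd
      rw [List.map_cons, List.prod_cons, List.map_cons, List.prod_cons]
      by_cases haj : a = j
      · subst haj
        have : (l.map fun i => wd.Ω i ^ (m + Finsupp.single a 1 : ι →₀ ℕ) i) =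
            l.map fun i => wd.Ω i ^ m i := by
          apply List.map_congr_left
          intro i hi
          have : a ≠ i := fun h => hnd.1 (h ▸ hi)
          simp [Finsupp.single_eq_of_ne' this]
        rw [this, ← mul_assoc]
        simp [pow_succ']
      · have hjl : j ∈ l := by
          rcases List.mem_cons.1 hj with h | h
          · exact absurd h.symm haj
          · exact h
        rw [← mul_assoc, Ωpow_comm, mul_assoc, ih hnd.2 hjl]
        simp [Finsupp.single_eq_of_ne haj]
  exact key _ (Finset.sort_nodup _ _) (by simp)

theorem θ_mul_omM (j : ι) (m : ι →₀ ℕ) :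
    wd.θ j * omM wd m = omM wd m * wd.θ j := by
  have : ∀ l : List ι, Commute (wd.θ j) (l.map fun i => wd.Ω i ^ m i).prod := by
    intro l
    induction l with
    | nil => simp
    | cons a l ih =>
      rw [List.map_cons, List.prod_cons]
      exact Commute.mul_right (Commute.pow_right (weil_Ωθ wd a j).symm _) ih
  exact this _

theorem thS_cons (j : ι) (S : Finset ι) (h : ∀ i ∈ S, j < i) :
    wd.θ j * thS wd S = thS wd (insert j S) := by
  unfold thS
  have hj : j ∉ S := fun hj => lt_irrefl _ (h j hj)
  rw [Finset.sort_insert (· ≤ ·) (fun i hi => (h i hi).le) hj]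
  simp

theorem θ_mul_list (j : ι) (l : List ι) (hl : l.Pairwise (· < ·)) :
    wd.θ j * (l.map wd.θ).prod ∈
      Submodule.span ℝ (thS wd '' {S | ∀ i ∈ S, i = j ∨ i ∈ l}) := by
  have hsort : ∀ l : List ι, l.Pairwise (· < ·) → l.toFinset.sort (· ≤ ·) = l := by
    intro l hl
    rw [List.toFinset_sort (· ≤ ·) (hl.imp (fun h => ne_of_lt h))]
    exact hl.imp le_of_lt
  induction l with
  | nil =>
    apply Submodule.subset_span
    refine ⟨{j}, by simp, ?_⟩
    simp [thS]
  | cons a l ih =>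
    rw [List.pairwise_cons] at hl
    rcases lt_trichotomy j a with h | h | h
    · apply Submodule.subset_span
      refine ⟨(j :: a :: l).toFinset, by simp, ?_⟩
      unfold thS
      rw [hsort]
      · simp
      · rw [List.pairwise_cons, List.pairwise_cons]
        refine ⟨?_, hl⟩
        intro c hc
        rcases List.mem_cons.1 hc with rfl | hc
        · exact h
        · exact h.trans (hl.1 c hc)
    · subst h
      rw [List.map_cons, List.prod_cons, ← mul_assoc, weil_θsq, zero_mul]
      exact Submodule.zero_mem _
    · rw [List.map_cons, List.prod_cons, ← mul_assoc, weil_θθ, neg_mul, mul_assoc]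
      apply Submodule.neg_mem
      have h2 := ih hl.2
      refine Submodule.span_induction (p := fun x _ => wd.θ a * x ∈ _) ?_ ?_ ?_ ?_ h2
      · rintro _ ⟨S, hS, rfl⟩
        have hS' : ∀ i ∈ S, a < i := by
          intro i hi
          rcases hS i hi with rfl | h3
          · exact h
          · exact hl.1 i h3
        rw [thS_cons wd a S hS']
        apply Submodule.subset_span
        refine ⟨_, ?_, rfl⟩
        intro i hi
        rcases Finset.mem_insert.1 hi with rfl | hi
        · simp
        · rcases hS i hi with h3 | h3 <;> simp [h3]
      · simp
      · intro x y _ _ hx hy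
        rw [mul_add]; exact Submodule.add_mem _ hx hy
      · intro c x _ hx
        rw [mul_smul_comm]; exact Submodule.smul_mem _ _ hx

theorem θ_mul_thS (j : ι) (S : Finset ι) :
    wd.θ j * thS wd S ∈ Submodule.span ℝ (Set.range (thS wd)) := by
  have h := θ_mul_list wd j (S.sort (· ≤ ·)) (Finset.sortedLT_sort S).pairwise
  exact Submodule.span_mono (Set.image_subset_range _ _) h

/-- The basis of monomials. -/
def wbas : Module.Basis ((ι →₀ ℕ) × Finset ι) ℝ W := wd.free.choose

theorem wbas_apply (m : ι →₀ ℕ) (S : Finset ι) : wbas wd (m, S) = omM wd m * thS wd S :=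
  wd.free.choose_spec (m, S)

/-- The derivation `∂/∂Ω^i` of the Weil algebra. -/
def wpd (i : ι) : Module.End ℝ W :=
  (wbas wd).constr ℝ fun p => (p.1 i : ℝ) • wbas wd (p.1 - Finsupp.single i 1, p.2)

theorem wpd_bas (i : ι) (m : ι →₀ ℕ) (S : Finset ι) :
    wpd wd i (omM wd m * thS wd S) =
      (m i : ℝ) • (omM wd (m - Finsupp.single i 1) * thS wd S) := by
  rw [← wbas_apply, ← wbas_apply]
  unfold wpd
  rw [Module.Basis.constr_basis]

theorem wpd_one (i : ι) : wpd wd i 1 = 0 := by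
  have h := wpd_bas wd i 0 ∅
  simpa [omM_zero, thS] using h

theorem wpd_Ω (i j : ι) (x : W) :
    wpd wd i (wd.Ω j * x) = wd.Ω j * wpd wd i x + (if i = j then (1 : ℝ) else 0) • x := by
  have : wpd wd i ∘ₗ LinearMap.mulLeft ℝ (wd.Ω j) =
      LinearMap.mulLeft ℝ (wd.Ω j) ∘ₗ wpd wd i +
        (if i = j then (1 : ℝ) else 0) • LinearMap.id := by
    apply (wbas wd).ext
    rintro ⟨m, S⟩
    simp only [LinearMap.comp_apply, LinearMap.mulLeft_apply, LinearMap.add_apply,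
      LinearMap.smul_apply, LinearMap.id_apply]
    rw [wbas_apply, ← mul_assoc, Ω_mul_omM, wpd_bas, wpd_bas, mul_smul_comm, ← mul_assoc,
      Ω_mul_omM]
    by_cases hij : i = j
    · subst hij
      rw [if_pos rfl, add_tsub_cancel_right]
      by_cases hm : m i = 0
      · simp [hm]
      · have h2 : m - Finsupp.single i 1 + Finsupp.single i 1 = m := by
          apply tsub_add_cancel_of_le
          rw [Finsupp.single_le_iff]; omega
        rw [h2]
        simp [add_smul]
    · rw [if_neg hij]
      have h3 : (m + Finsupp.single j 1 : ι →₀ ℕ) i = m i := by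
        simp [Finsupp.single_eq_of_ne hij]
      rw [h3]
      by_cases hm : m i = 0
      · simp [hm]
      · have h2 : m + Finsupp.single j 1 - Finsupp.single i 1 =
            m - Finsupp.single i 1 + Finsupp.single j 1 := by
          rw [tsub_add_eq_add_tsub]
          rw [Finsupp.single_le_iff]; omega
        rw [h2]
        simp
  exact LinearMap.congr_fun this x

theorem wpd_θ (i j : ι) (x : W) : wpd wd i (wd.θ j * x) = wd.θ j * wpd wd i x := by
  have : wpd wd i ∘ₗ LinearMap.mulLeft ℝ (wd.θ j) =
      LinearMap.mulLeft ℝ (wd.θ j) ∘ₗ wpd wd i := by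
    apply (wbas wd).ext
    rintro ⟨m, S⟩
    simp only [LinearMap.comp_apply, LinearMap.mulLeft_apply]
    rw [wbas_apply, wpd_bas, ← mul_assoc, θ_mul_omM, mul_smul_comm, ← mul_assoc, θ_mul_omM,
      mul_assoc, mul_assoc]
    have h : ∀ y ∈ Submodule.span ℝ (Set.range (thS wd)),
        wpd wd i (omM wd m * y) = (m i : ℝ) • (omM wd (m - Finsupp.single i 1) * y) := by
      intro y hy
      refine Submodule.span_induction ?_ ?_ ?_ ?_ hy
      · rintro _ ⟨S, rfl⟩; exact wpd_bas wd i m S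
      · simp
      · intro x y _ _ hx hy
        rw [mul_add, map_add, hx, hy, mul_add, smul_add]
      · intro c x _ hx
        rw [mul_smul_comm, map_smul, hx, mul_smul_comm, smul_comm]
    exact h _ (θ_mul_thS wd j S)
  exact LinearMap.congr_fun this x

theorem weil_I_one (X : 𝔤) {op : Operation 𝔤 A} : op.I X 1 = 0 := by
  have := op.I_mul X op.one_mem 1
  simp [sgn_zero] at this
  exact this

theorem op_L_one (X : 𝔤) (op : Operation 𝔤 A) : op.L X 1 = 0 := by
  have := op.L_mul X 1 1
  simp at this
  exact this

theorem op_d_one (op : Operation 𝔤 A) : op.d 1 = 0 := by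
  have := op.d_mul op.one_mem 1
  simp [sgn_zero] at this
  exact this

end WeilBasic

/-! ### Homogeneous components -/

section Proj

theorem sgn_add (m n : ℤ) : sgn (m + n) = sgn m * sgn n := by
  unfold sgn
  by_cases hm : Even m <;> by_cases hn : Even n <;> simp [hm, hn, Int.even_add]

/-- Projection to the degree `n` component. -/
def gproj (op : Operation 𝔤 A) (n : ℤ) : Module.End ℝ A :=
  letI := op.decomposition
  (op.grading n).subtype ∘ₗ DirectSum.component ℝ ℤ (fun i => op.grading i) n ∘ₗ
    (DirectSum.decomposeLinearEquiv op.grading).toLinearMap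

theorem gproj_mem (op : Operation 𝔤 A) (n : ℤ) (a : A) : gproj op n a ∈ op.grading n := by
  simp [gproj]

theorem gproj_same (op : Operation 𝔤 A) {n : ℤ} {a : A} (h : a ∈ op.grading n) :
    gproj op n a = a := by
  letI := op.decomposition
  simp only [gproj, LinearMap.comp_apply, LinearEquiv.coe_coe,
    DirectSum.decomposeLinearEquiv_apply]
  exact DirectSum.decompose_of_mem_same op.grading h

theorem gproj_ne (op : Operation 𝔤 A) {m n : ℤ} {a : A} (h : a ∈ op.grading m) (hmn : m ≠ n) :
    gproj op n a = 0 := by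
  letI := op.decomposition
  simp only [gproj, LinearMap.comp_apply, LinearEquiv.coe_coe,
    DirectSum.decomposeLinearEquiv_apply]
  exact DirectSum.decompose_of_mem_ne op.grading h hmn

theorem gr_iSup (op : Operation 𝔤 A) : ⨆ n, op.grading n = ⊤ := by
  letI := op.decomposition
  exact (DirectSum.Decomposition.isInternal op.grading).submodule_iSup_eq_top

theorem gr_ind (op : Operation 𝔤 A) (U : Submodule ℝ A)
    (h : ∀ n, ∀ a ∈ op.grading n, a ∈ U) (a : A) : a ∈ U := by
  have : (⨆ n, op.grading n) ≤ U := iSup_le fun n a ha => h n a ha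
  rw [gr_iSup] at this
  exact this trivial

theorem gr_ext {M : Type} [AddCommGroup M] [Module ℝ M] (op : Operation 𝔤 A)
    (f g : A →ₗ[ℝ] M) (h : ∀ n, ∀ a ∈ op.grading n, f a = g a) : f = g := by
  ext a
  exact gr_ind op (LinearMap.eqLocus f g) h a

theorem gproj_comm (op : Operation 𝔤 A) (op' : Operation 𝔮 B) (k : ℤ) (f : A →ₗ[ℝ] B)
    (h : ∀ n, ∀ a ∈ op.grading n, f a ∈ op'.grading (n + k)) (n : ℤ) (a : A) :
    gproj op' n (f a) = f (gproj op (n - k) a) := by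
  have : gproj op' n ∘ₗ f = f ∘ₗ gproj op (n - k) := by
    apply gr_ext op
    intro m a ha
    simp only [LinearMap.comp_apply]
    by_cases hm : m + k = n
    · obtain rfl : m = n - k := by omega
      rw [gproj_same op ha, gproj_same op']
      simpa using h _ a ha
    · rw [gproj_ne op' (h _ a ha) hm, gproj_ne op ha (by omega), map_zero]
  exact LinearMap.congr_fun this a

theorem gproj_comm' (op : Operation 𝔤 A) (op' : Operation 𝔮 B) (k : ℤ) (f : A →ₗ[ℝ] B)
    (h : ∀ n a, gproj op' n (f a) = f (gproj op (n - k) a)) {n : ℤ} {a : A}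
    (ha : a ∈ op.grading n) : f a ∈ op'.grading (n + k) := by
  have := h (n + k) a
  rw [add_sub_cancel_right, gproj_same op ha] at this
  rw [← this]
  exact gproj_mem _ _ _

theorem gproj_mul (op : Operation 𝔤 A) {k : ℤ} {a : A} (ha : a ∈ op.grading k) (n : ℤ) (x : A) :
    gproj op n (a * x) = a * gproj op (n - k) x :=
  gproj_comm op op k (LinearMap.mulLeft ℝ a)
    (fun m y hy => by rw [add_comm]; exact op.mul_mem ha hy) n x

theorem gproj_one (op : Operation 𝔤 A) (n : ℤ) : gproj op n 1 = if n = 0 then 1 else 0 := by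
  split_ifs with h
  · subst h; exact gproj_same op op.one_mem
  · exact gproj_ne op op.one_mem (Ne.symm h)

end Proj

/-- `ε` is the sign operator of `op`. -/
def IsSign (op : Operation 𝔤 A) (ε : Module.End ℝ A) : Prop :=
  ∀ (n : ℤ), ∀ w ∈ op.grading n, ε w = sgn n • w

section Sign
variable {op : Operation 𝔤 A} {ε : Module.End ℝ A}

theorem IsSign.one (h : IsSign op ε) : ε 1 = 1 := by
  rw [h 0 1 op.one_mem, sgn_zero, one_smul]

theorem IsSign.mul (h : IsSign op ε) {k : ℤ} {a : A} (ha : a ∈ op.grading k) (x : A) :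
    ε (a * x) = sgn k • (a * ε x) := by
  have : ε ∘ₗ LinearMap.mulLeft ℝ a = sgn k • (LinearMap.mulLeft ℝ a ∘ₗ ε) := by
    apply gr_ext op
    intro n x hx
    simp only [LinearMap.comp_apply, LinearMap.mulLeft_apply, LinearMap.smul_apply]
    rw [h _ _ (op.mul_mem ha hx), h _ _ hx, sgn_add, mul_smul, mul_smul_comm]
  exact LinearMap.congr_fun this x

theorem IsSign.sq (h : IsSign op ε) (x : A) : ε (ε x) = x := by
  have : ε ∘ₗ ε = LinearMap.id := by
    apply gr_ext op
    intro n x hx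
    simp only [LinearMap.comp_apply, LinearMap.id_apply]
    rw [h _ _ hx, map_zsmul, h _ _ hx, ← mul_smul, sgn_mul_self, one_smul]
  exact LinearMap.congr_fun this x

theorem IsSign.odd (h : IsSign op ε) (f : Module.End ℝ A) (k : ℤ) (hk : sgn k = -1)
    (hf : ∀ n, ∀ a ∈ op.grading n, f a ∈ op.grading (n + k)) (x : A) :
    ε (f x) = - f (ε x) := by
  have : ε ∘ₗ f = - (f ∘ₗ ε) := by
    apply gr_ext op
    intro n x hx
    simp only [LinearMap.comp_apply, LinearMap.neg_apply]
    rw [h _ _ (hf _ _ hx), h _ _ hx, map_zsmul, sgn_add, hk]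
    simp
  exact LinearMap.congr_fun this x

theorem IsSign.even (h : IsSign op ε) (f : Module.End ℝ A) (k : ℤ) (hk : sgn k = 1)
    (hf : ∀ n, ∀ a ∈ op.grading n, f a ∈ op.grading (n + k)) (x : A) :
    ε (f x) = f (ε x) := by
  have : ε ∘ₗ f = f ∘ₗ ε := by
    apply gr_ext op
    intro n x hx
    simp only [LinearMap.comp_apply]
    rw [h _ _ (hf _ _ hx), h _ _ hx, map_zsmul, sgn_add, hk]
    simp
  exact LinearMap.congr_fun this x

theorem IsSign.d (h : IsSign op ε) (x : A) : ε (op.d x) = - op.d (ε x) :=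
  h.odd op.d 1 sgn_one (fun _ _ ha => op.d_mem ha) x

theorem IsSign.I (h : IsSign op ε) (X : 𝔤) (x : A) : ε (op.I X x) = - op.I X (ε x) :=
  h.odd (op.I X) (-1) (by simp [sgn]) (fun _ _ ha => op.I_mem X ha) x

theorem IsSign.L (h : IsSign op ε) (X : 𝔤) (x : A) : ε (op.L X x) = op.L X (ε x) :=
  h.even (op.L X) 0 sgn_zero (fun n a ha => by simpa using op.L_mem X ha) x

theorem IsSign.mem (h : IsSign op ε) {n : ℤ} {x : A} (hx : x ∈ op.grading n) :
    ε x ∈ op.grading n := by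
  rw [h _ _ hx]
  exact zsmul_mem hx _

end Sign

section WeilMore
variable {b : Module.Basis ι ℝ 𝔤} (wd : WeilData ι b W)

theorem wpd_mem (i : ι) {n : ℤ} {x : W} (hx : x ∈ wd.grading n) :
    wpd wd i x ∈ wd.grading (n + (-2)) := by
  refine gproj_comm' wd.toOperation wd.toOperation (-2) (wpd wd i) ?_ hx
  have : ∀ x : W, x ∈ (⨅ n : ℤ, LinearMap.eqLocus (gproj wd.toOperation n ∘ₗ wpd wd i)
      (wpd wd i ∘ₗ gproj wd.toOperation (n - -2))) := by
    intro x
    rw [weil_gen wd (⨅ n : ℤ, _) ?_ ?_ ?_]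
    · trivial
    · simp only [Submodule.mem_iInf, LinearMap.mem_eqLocus, LinearMap.comp_apply]
      intro n
      rw [gproj_one, wpd_one]
      split_ifs <;> simp [wpd_one]
    · intro i x
      simp only [Submodule.mem_iInf, LinearMap.mem_eqLocus, LinearMap.comp_apply]
      intro h n
      rw [wpd_θ, gproj_mul _ (wd.θ_mem i), h, gproj_mul _ (wd.θ_mem i), wpd_θ]
      congr 4; ring
    · intro i x
      simp only [Submodule.mem_iInf, LinearMap.mem_eqLocus, LinearMap.comp_apply]
      intro h n
      rw [wpd_Ω, map_add, gproj_mul _ (wd.Ω_mem i), h, gproj_mul _ (wd.Ω_mem i), wpd_Ω,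
        map_smul]
      congr 4
      · congr 1; ring
      · congr 1; ring
  intro n a
  have := this a
  simp only [Submodule.mem_iInf, LinearMap.mem_eqLocus, LinearMap.comp_apply] at this
  exact this n

theorem weil_I_θ (X : 𝔤) (j : ι) (x : W) :
    wd.I X (wd.θ j * x) = b.repr X j • x - wd.θ j * wd.I X x := by
  have h0 : wd.I X (wd.θ j) = b.repr X j • (1 : W) := by
    conv_lhs => rw [← b.sum_repr X]
    rw [map_sum, LinearMap.sum_apply]
    rw [Finset.sum_eq_single j]
    · simp [wd.I_θ]
    · intro i _ hij
      simp [wd.I_θ, hij]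
    · simp
  rw [wd.I_mul X (wd.θ_mem j), h0, sgn_one]
  simp [sub_eq_add_neg]

theorem weil_I_Ω (X : 𝔤) (j : ι) (x : W) :
    wd.I X (wd.Ω j * x) = wd.Ω j * wd.I X x := by
  have h0 : wd.I X (wd.Ω j) = 0 := by
    conv_lhs => rw [← b.sum_repr X]
    rw [map_sum, LinearMap.sum_apply]
    apply Finset.sum_eq_zero
    intro i _
    simp [wd.I_Ω]
  rw [wd.I_mul X (wd.Ω_mem j), h0, sgn_two]
  simp

/-- The counting operator of the Weil algebra. -/
def wcount : Module.End ℝ W :=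
  ∑ k, (LinearMap.mulLeft ℝ (wd.θ k) ∘ₗ wd.I (b k)) +
    ∑ k, (LinearMap.mulLeft ℝ (wd.Ω k) ∘ₗ wpd wd k)

theorem wcount_apply (x : W) : wcount wd x =
    ∑ k, wd.θ k * wd.I (b k) x + ∑ k, wd.Ω k * wpd wd k x := by
  simp [wcount]

theorem wcount_one : wcount wd 1 = 0 := by
  rw [wcount_apply]
  simp [wpd_one, weil_I_one]

theorem wcount_θ (j : ι) (x : W) :
    wcount wd (wd.θ j * x) = wd.θ j * wcount wd x + wd.θ j * x := by
  rw [wcount_apply, wcount_apply]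
  have h1 : ∀ k, wd.θ k * wd.I (b k) (wd.θ j * x) =
      (if k = j then wd.θ j * x else 0) + wd.θ j * (wd.θ k * wd.I (b k) x) := by
    intro k
    rw [weil_I_θ, mul_sub, ← mul_assoc, weil_θθ wd k j, neg_mul, sub_neg_eq_add, mul_assoc]
    congr 1
    split_ifs with h
    · subst h; simp
    · simp [h]
  have h2 : ∀ k, wd.Ω k * wpd wd k (wd.θ j * x) = wd.θ j * (wd.Ω k * wpd wd k x) := by
    intro k
    rw [wpd_θ, ← mul_assoc, weil_Ωθ, mul_assoc]
  simp only [h1, h2, Finset.sum_add_distrib, ← Finset.mul_sum, mul_add]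
  simp only [Finset.sum_ite_eq', Finset.mem_univ, if_true]
  abel

theorem wcount_Ω (j : ι) (x : W) :
    wcount wd (wd.Ω j * x) = wd.Ω j * wcount wd x + wd.Ω j * x := by
  rw [wcount_apply, wcount_apply]
  have h1 : ∀ k, wd.θ k * wd.I (b k) (wd.Ω j * x) =
      wd.Ω j * (wd.θ k * wd.I (b k) x) := by
    intro k
    rw [weil_I_Ω, ← mul_assoc, ← weil_Ωθ, mul_assoc]
  have h2 : ∀ k, wd.Ω k * wpd wd k (wd.Ω j * x) =
      wd.Ω j * (wd.Ω k * wpd wd k x) + if k = j then wd.Ω j * x else 0 := by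
    intro k
    rw [wpd_Ω, mul_add, ← mul_assoc, weil_ΩΩ, mul_assoc]
    congr 1
    split_ifs with h
    · subst h; simp
    · simp
  simp only [h1, h2, Finset.sum_add_distrib, ← Finset.mul_sum, mul_add]
  simp only [Finset.sum_ite_eq', Finset.mem_univ, if_true]
  abel

theorem wcount_bas (p : (ι →₀ ℕ) × Finset ι) :
    wcount wd (wbas wd p) = ((∑ i, p.1 i + p.2.card : ℕ) : ℝ) • wbas wd p := by
  obtain ⟨m, S⟩ := p
  rw [wbas_apply]
  have hl1 : ∀ l : List ι, wcount wd (l.map wd.θ).prod = (l.length : ℝ) • (l.map wd.θ).prod := by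
    intro l
    induction l with
    | nil => simp [wcount_one]
    | cons a l ih =>
      rw [List.map_cons, List.prod_cons, wcount_θ, ih]
      simp [add_smul]
  have hpow : ∀ i (n : ℕ) x (c : ℝ), wcount wd x = c • x →
      wcount wd (wd.Ω i ^ n * x) = ((n : ℝ) + c) • (wd.Ω i ^ n * x) := by
    intro i n x c hx
    induction n with
    | zero => simpa using hx
    | succ n ih =>
      rw [pow_succ', mul_assoc, wcount_Ω, ih]
      rw [mul_smul_comm]
      push_cast
      module
  have hl2 : ∀ (l : List ι) x (c : ℝ), wcount wd x = c • x →
      wcount wd ((l.map fun i => wd.Ω i ^ m i).prod * x) =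
        (((l.map fun i => (m i : ℝ)).sum) + c) • ((l.map fun i => wd.Ω i ^ m i).prod * x) := by
    intro l x c hx
    induction l with
    | nil => simpa using hx
    | cons a l ih =>
      rw [List.map_cons, List.prod_cons, mul_assoc, hpow _ _ _ _ ih, List.map_cons, List.sum_cons]
      congr 1; ring
  have := hl2 (Finset.univ.sort (· ≤ ·)) (thS wd S) (S.card : ℝ) (by
    have := hl1 (S.sort (· ≤ ·))
    rwa [Finset.length_sort] at this)
  unfold omM
  rw [this]
  congr 1
  push_cast
  congr 1
  rw [← List.sum_toFinset _ (Finset.sort_nodup _ _)]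
  simp

theorem wcount_ker (x : W) (hx : wcount wd x = 0) : ∃ c : ℝ, x = c • (1 : W) := by
  refine ⟨(wbas wd).repr x (0, ∅), ?_⟩
  have h1 : (1 : W) = wbas wd (0, ∅) := by
    rw [wbas_apply]; simp [omM_zero, thS]
  have key : ∀ p x, (wbas wd).repr (wcount wd x) p =
      ((∑ i, p.1 i + p.2.card : ℕ) : ℝ) * (wbas wd).repr x p := by
    intro p x
    have : (wbas wd).coord p ∘ₗ wcount wd =
        ((∑ i, p.1 i + p.2.card : ℕ) : ℝ) • (wbas wd).coord p := by
      apply (wbas wd).ext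
      intro q
      rw [LinearMap.comp_apply, wcount_bas]
      by_cases hpq : q = p
      · subst hpq; simp
      · simp [Finsupp.single_eq_of_ne' hpq]
    exact LinearMap.congr_fun this x
  rw [h1]
  apply (wbas wd).repr.injective
  ext p
  by_cases hp : p = (0, ∅)
  · subst hp; simp
  · have h2 := key p x
    rw [hx] at h2
    simp only [map_zero, Finsupp.coe_zero, Pi.zero_apply] at h2
    have h3 : (∑ i, p.1 i + p.2.card : ℕ) ≠ 0 := by
      intro h
      apply hp
      have h4 : p.2.card = 0 := by omega
      have h5 : ∑ i, p.1 i = 0 := by omega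
      rw [Finset.card_eq_zero] at h4
      rw [Finset.sum_eq_zero_iff] at h5
      ext i
      · simpa using h5 i (Finset.mem_univ _)
      · simp [h4]
    have h6 : (wbas wd).repr x p = 0 := by
      rcases mul_eq_zero.1 h2.symm with h | h
      · exact absurd (by exact_mod_cast h) h3
      · exact h
    rw [h6]
    simp [Finsupp.single_eq_of_ne hp]

/-- Filtration of the Weil algebra by word length. -/
def wfil : ℕ → Submodule ℝ W
  | 0 => Submodule.span ℝ {1}
  | n + 1 => wfil n ⊔ (⨆ k, (wfil n).map (LinearMap.mulLeft ℝ (wd.θ k))) ⊔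
      (⨆ k, (wfil n).map (LinearMap.mulLeft ℝ (wd.Ω k)))

theorem wfil_le (n : ℕ) : wfil wd n ≤ wfil wd (n + 1) := by
  rw [wfil]; exact le_sup_of_le_left le_sup_left

theorem wfil_θ (n : ℕ) (k : ι) {x : W} (hx : x ∈ wfil wd n) : wd.θ k * x ∈ wfil wd (n + 1) := by
  rw [wfil]
  exact Submodule.mem_sup_left (Submodule.mem_sup_right (Submodule.mem_iSup_of_mem k ⟨x, hx, rfl⟩))

theorem wfil_Ω (n : ℕ) (k : ι) {x : W} (hx : x ∈ wfil wd n) : wd.Ω k * x ∈ wfil wd (n + 1) := by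
  rw [wfil]
  exact Submodule.mem_sup_right (Submodule.mem_iSup_of_mem k ⟨x, hx, rfl⟩)

theorem wfil_succ_ind (n : ℕ) (U : Submodule ℝ W) (h0 : wfil wd n ≤ U)
    (h1 : ∀ k, ∀ x ∈ wfil wd n, wd.θ k * x ∈ U) (h2 : ∀ k, ∀ x ∈ wfil wd n, wd.Ω k * x ∈ U) :
    wfil wd (n + 1) ≤ U := by
  rw [wfil]
  refine sup_le (sup_le h0 ?_) ?_
  · refine iSup_le fun k => ?_
    rintro _ ⟨x, hx, rfl⟩
    exact h1 k x hx
  · refine iSup_le fun k => ?_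
    rintro _ ⟨x, hx, rfl⟩
    exact h2 k x hx

theorem wfil_top (x : W) : ∃ n, x ∈ wfil wd n := by
  have hmono : Monotone (wfil wd) := monotone_nat_of_le_succ (wfil_le wd)
  have : (⨆ n, wfil wd n) = ⊤ := by
    apply weil_gen wd
    · exact Submodule.mem_iSup_of_mem 0 (by rw [wfil]; exact Submodule.subset_span rfl)
    · intro i x hx
      obtain ⟨n, hn⟩ := (Submodule.mem_iSup_of_directed _ hmono.directed_le).1 hx
      exact Submodule.mem_iSup_of_mem (n + 1) (wfil_θ wd n i hn)
    · intro i x hx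
      obtain ⟨n, hn⟩ := (Submodule.mem_iSup_of_directed _ hmono.directed_le).1 hx
      exact Submodule.mem_iSup_of_mem (n + 1) (wfil_Ω wd n i hn)
  exact (Submodule.mem_iSup_of_directed _ hmono.directed_le).1 (this ▸ Submodule.mem_top)

theorem wfil_I (n : ℕ) (X : 𝔤) : wfil wd (n + 1) ≤ (wfil wd n).comap (wd.I X) ∧
    wfil wd 0 ≤ LinearMap.ker (wd.I X) := by
  have h0 : wfil wd 0 ≤ LinearMap.ker (wd.I X) := by
    rw [wfil, Submodule.span_le]
    rintro _ rfl
    exact weil_I_one X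
  refine ⟨?_, h0⟩
  induction n with
  | zero =>
    apply wfil_succ_ind
    · intro x hx
      rw [Submodule.mem_comap, h0 hx]; exact zero_mem _
    · intro k x hx
      rw [Submodule.mem_comap, weil_I_θ, LinearMap.mem_ker.1 (h0 hx)]
      simpa using Submodule.smul_mem _ _ hx
    · intro k x hx
      rw [Submodule.mem_comap, weil_I_Ω, LinearMap.mem_ker.1 (h0 hx)]
      simp
  | succ n ih =>
    apply wfil_succ_ind
    · intro x hx
      exact wfil_le wd n (ih hx)
    · intro k x hx
      rw [Submodule.mem_comap, weil_I_θ]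
      exact sub_mem (Submodule.smul_mem _ _ hx) (wfil_θ wd n k (ih hx))
    · intro k x hx
      rw [Submodule.mem_comap, weil_I_Ω]
      exact wfil_Ω wd n k (ih hx)

theorem wfil_pd (n : ℕ) (i : ι) : wfil wd (n + 1) ≤ (wfil wd n).comap (wpd wd i) ∧
    wfil wd 0 ≤ LinearMap.ker (wpd wd i) := by
  have h0 : wfil wd 0 ≤ LinearMap.ker (wpd wd i) := by
    rw [wfil, Submodule.span_le]
    rintro _ rfl
    exact wpd_one wd i
  refine ⟨?_, h0⟩
  induction n with
  | zero =>
    apply wfil_succ_ind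
    · intro x hx
      rw [Submodule.mem_comap, h0 hx]; exact zero_mem _
    · intro k x hx
      rw [Submodule.mem_comap, wpd_θ, LinearMap.mem_ker.1 (h0 hx)]
      simp
    · intro k x hx
      rw [Submodule.mem_comap, wpd_Ω, LinearMap.mem_ker.1 (h0 hx), mul_zero, zero_add]
      exact Submodule.smul_mem _ _ hx
  | succ n ih =>
    apply wfil_succ_ind
    · intro x hx
      exact wfil_le wd n (ih hx)
    · intro k x hx
      rw [Submodule.mem_comap, wpd_θ]
      exact wfil_θ wd n k (ih hx)
    · intro k x hx
      rw [Submodule.mem_comap, wpd_Ω]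
      exact add_mem (wfil_Ω wd n k (ih hx)) (Submodule.smul_mem _ _ hx)

/-- A submodule stable under the contractions and the `∂/∂Ω^i` which meets `ℝ·1` trivially
vanishes. -/
theorem weil_zero_of_stable (U : Submodule ℝ W) (hI : ∀ k, ∀ x ∈ U, wd.I (b k) x ∈ U)
    (hp : ∀ k, ∀ x ∈ U, wpd wd k x ∈ U) (h1 : ∀ c : ℝ, c • (1 : W) ∈ U → c = 0) : U = ⊥ := by
  have key : ∀ n, ∀ x ∈ U, x ∈ wfil wd n → x = 0 := by
    intro n
    induction n with
    | zero =>
      intro x hx hx0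
      rw [wfil, Submodule.mem_span_singleton] at hx0
      obtain ⟨c, rfl⟩ := hx0
      rw [h1 c hx, zero_smul]
    | succ n ih =>
      intro x hx hxn
      have hc : wcount wd x = 0 := by
        rw [wcount_apply]
        have e1 : ∀ k, wd.I (b k) x = 0 := fun k =>
          ih _ (hI k x hx) ((wfil_I wd n (b k)).1 hxn)
        have e2 : ∀ k, wpd wd k x = 0 := fun k =>
          ih _ (hp k x hx) ((wfil_pd wd n k).1 hxn)
        simp [e1, e2]
      obtain ⟨c, rfl⟩ := wcount_ker wd x hc
      rw [h1 c hx, zero_smul]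
  rw [eq_bot_iff]
  intro x hx
  obtain ⟨n, hn⟩ := wfil_top wd x
  exact key n x hx hn

end WeilMore

/-! ### Coordinate-free generators, and the inclusion `j_W` -/

section WeilFree
variable {b : Module.Basis ι ℝ 𝔤} (wd : WeilData ι b W)

/-- The generator `θ(η)` for `η ∈ 𝔤*`. -/
def wth : Module.Dual ℝ 𝔤 →ₗ[ℝ] W where
  toFun η := ∑ i, η (b i) • wd.θ i
  map_add' η η' := by simp [add_smul, Finset.sum_add_distrib]
  map_smul' c η := by simp [Finset.smul_sum, smul_smul]

/-- The generator `Ω(η)` for `η ∈ 𝔤*`. -/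
def wom : Module.Dual ℝ 𝔤 →ₗ[ℝ] W where
  toFun η := ∑ i, η (b i) • wd.Ω i
  map_add' η η' := by simp [add_smul, Finset.sum_add_distrib]
  map_smul' c η := by simp [Finset.smul_sum, smul_smul]

theorem wth_apply (η : Module.Dual ℝ 𝔤) : wth wd η = ∑ i, η (b i) • wd.θ i := rfl
theorem wom_apply (η : Module.Dual ℝ 𝔤) : wom wd η = ∑ i, η (b i) • wd.Ω i := rfl

theorem wth_coord (i : ι) : wth wd (b.coord i) = wd.θ i := by
  rw [wth_apply, Finset.sum_eq_single i]
  · simp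
  · intro j _ hj
    simp [Finsupp.single_eq_of_ne' hj]
  · simp

theorem wom_coord (i : ι) : wom wd (b.coord i) = wd.Ω i := by
  rw [wom_apply, Finset.sum_eq_single i]
  · simp
  · intro j _ hj
    simp [Finsupp.single_eq_of_ne' hj]
  · simp

theorem wth_mem (η : Module.Dual ℝ 𝔤) : wth wd η ∈ wd.grading 1 :=
  Submodule.sum_mem _ fun i _ => Submodule.smul_mem _ _ (wd.θ_mem i)

theorem wom_mem (η : Module.Dual ℝ 𝔤) : wom wd η ∈ wd.grading 2 :=
  Submodule.sum_mem _ fun i _ => Submodule.smul_mem _ _ (wd.Ω_mem i)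

theorem dual_sum (η : Module.Dual ℝ 𝔤) (X : 𝔤) : ∑ i, η (b i) * b.repr X i = η X := by
  conv_rhs => rw [← b.sum_repr X]
  rw [map_sum]
  exact Finset.sum_congr rfl fun i _ => by rw [map_smul, smul_eq_mul, mul_comm]

theorem wth_I (X : 𝔤) (η : Module.Dual ℝ 𝔤) (x : W) :
    wd.I X (wth wd η * x) = η X • x - wth wd η * wd.I X x := by
  rw [wth_apply, Finset.sum_mul, Finset.sum_mul, map_sum]
  simp only [smul_mul_assoc, map_smul, weil_I_θ, smul_sub, Finset.sum_sub_distrib, smul_smul]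
  rw [← Finset.sum_smul, dual_sum]

theorem wom_I (X : 𝔤) (η : Module.Dual ℝ 𝔤) (x : W) :
    wd.I X (wom wd η * x) = wom wd η * wd.I X x := by
  rw [wom_apply, Finset.sum_mul, Finset.sum_mul, map_sum]
  simp only [smul_mul_assoc, map_smul, weil_I_Ω]

theorem wth_L (X : 𝔤) (η : Module.Dual ℝ 𝔤) :
    wd.L X (wth wd η) = - wth wd (η ∘ₗ (LieAlgebra.ad ℝ 𝔤 X : Module.End ℝ 𝔤)) := by
  have h : ∀ i, wd.L (b i) (wth wd η) =
      - wth wd (η ∘ₗ (LieAlgebra.ad ℝ 𝔤 (b i) : Module.End ℝ 𝔤)) := by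
    intro i
    rw [wth_apply, wth_apply, map_sum]
    simp only [map_smul, wd.L_θ, smul_neg, Finset.smul_sum, smul_smul, Finset.sum_neg_distrib]
    congr 1
    rw [Finset.sum_comm]
    refine Finset.sum_congr rfl fun k _ => ?_
    rw [← Finset.sum_smul]
    congr 1
    simp only [structConst]
    rw [dual_sum]
    simp
  rw [← b.sum_repr X]
  rw [map_sum, LinearMap.sum_apply]
  simp only [map_smul, LinearMap.smul_apply, h, map_sum]
  have : (η ∘ₗ (∑ i, b.repr X i • (LieAlgebra.ad ℝ 𝔤 (b i) : Module.End ℝ 𝔤))) =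
      ∑ i, b.repr X i • (η ∘ₗ (LieAlgebra.ad ℝ 𝔤 (b i) : Module.End ℝ 𝔤)) := by
    ext y; simp [LinearMap.sum_apply]
  rw [this]
  simp

/-- `∂/∂Ω` in the direction of `Y ∈ 𝔤`. -/
def wpdv (Y : 𝔤) : Module.End ℝ W := ∑ i, b.repr Y i • wpd wd i

theorem wpdv_one (Y : 𝔤) : wpdv wd Y 1 = 0 := by
  simp [wpdv, wpd_one]

theorem wpdv_wth (Y : 𝔤) (η : Module.Dual ℝ 𝔤) (x : W) :
    wpdv wd Y (wth wd η * x) = wth wd η * wpdv wd Y x := by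
  have h : ∀ i, wpd wd i (wth wd η * x) = wth wd η * wpd wd i x := by
    intro i
    rw [wth_apply, Finset.sum_mul, Finset.sum_mul, map_sum]
    simp only [smul_mul_assoc, map_smul, wpd_θ]
  simp only [wpdv, LinearMap.sum_apply, LinearMap.smul_apply, h, Finset.mul_sum, mul_smul_comm]

theorem wpd_wom (i : ι) (η : Module.Dual ℝ 𝔤) (x : W) :
    wpd wd i (wom wd η * x) = wom wd η * wpd wd i x + η (b i) • x := by
  rw [wom_apply, Finset.sum_mul, Finset.sum_mul, map_sum]
  simp only [smul_mul_assoc, map_smul, wpd_Ω, smul_add, Finset.sum_add_distrib]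
  congr 1
  simp

theorem wpdv_wom (Y : 𝔤) (η : Module.Dual ℝ 𝔤) (x : W) :
    wpdv wd Y (wom wd η * x) = wom wd η * wpdv wd Y x + η Y • x := by
  simp only [wpdv, LinearMap.sum_apply, LinearMap.smul_apply, wpd_wom, Finset.mul_sum,
    mul_smul_comm, smul_add, Finset.sum_add_distrib, smul_smul]
  rw [← Finset.sum_smul]
  congr 2
  rw [← dual_sum (b := b) η Y]
  exact Finset.sum_congr rfl fun i _ => mul_comm _ _

end WeilFree

/-- The pulled back dual basis `ξ^k = bq^k ∘ π`. -/
def xi (π : 𝔤 →ₗ⁅ℝ⁆ 𝔮) (bq : Module.Basis κ ℝ 𝔮) (k : κ) : Module.Dual ℝ 𝔤 :=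
  bq.coord k ∘ₗ (π : 𝔤 →ₗ[ℝ] 𝔮)

section JW
variable {b : Module.Basis ι ℝ 𝔤} {bq : Module.Basis κ ℝ 𝔮} {π : 𝔤 →ₗ⁅ℝ⁆ 𝔮}
  {wdG : WeilData ι b W} {wdQ : WeilData κ bq WQ} {jW : WQ →ₐ[ℝ] W}

theorem xi_apply (k : κ) (Y : 𝔤) : xi π bq k Y = bq.repr (π Y) k := rfl

theorem jW_I (hjθ : ∀ k : κ, jW (wdQ.θ k) = wth wdG (xi π bq k))
    (hjΩ : ∀ k : κ, jW (wdQ.Ω k) = wom wdG (xi π bq k)) (Y : 𝔤) (x : WQ) :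
    jW (wdQ.I (π Y) x) = wdG.I Y (jW x) := by
  have : jW.toLinearMap ∘ₗ wdQ.I (π Y) = wdG.I Y ∘ₗ jW.toLinearMap := by
    apply weil_ext wdQ
    · simp [weil_I_one]
    · intro i x hx
      simp only [LinearMap.comp_apply, AlgHom.toLinearMap_apply] at hx ⊢
      rw [weil_I_θ, map_sub, map_smul, map_mul, map_mul, hjθ, hx, wth_I, xi_apply]
    · intro i x hx
      simp only [LinearMap.comp_apply, AlgHom.toLinearMap_apply] at hx ⊢
      rw [weil_I_Ω, map_mul, map_mul, hjΩ, hx, wom_I]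
  exact LinearMap.congr_fun this x

theorem struct_sum (k : κ) (u v : ι → W) :
    ∑ l, ∑ m, structConst bq k l m •
      ((∑ i, xi π bq l (b i) • u i) * (∑ j, xi π bq m (b j) • v j)) =
    ∑ i, xi π bq k (b i) • ∑ j, ∑ j', structConst b i j j' • (u j * v j') := by
  have hR : ∑ i, xi π bq k (b i) • ∑ j, ∑ j', structConst b i j j' • (u j * v j') =
      ∑ j, ∑ j', (bq.repr ⁅π (b j), π (b j')⁆ k) • (u j * v j') := by
    simp only [Finset.smul_sum, smul_smul]
    rw [Finset.sum_comm]
    refine Finset.sum_congr rfl fun j _ => ?_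
    rw [Finset.sum_comm]
    refine Finset.sum_congr rfl fun j' _ => ?_
    rw [← Finset.sum_smul]
    congr 1
    simp only [structConst]
    rw [dual_sum, xi_apply, LieHom.map_lie]
  have hB : ∀ X Y : 𝔮, bq.repr ⁅X, Y⁆ k =
      ∑ l, ∑ m, structConst bq k l m * (bq.repr X l * bq.repr Y m) := by
    intro X Y
    conv_lhs => rw [← bq.sum_repr X, ← bq.sum_repr Y]
    simp only [sum_lie, lie_sum, map_sum, Finsupp.coe_finsetSum,
      Finset.sum_apply, smul_lie, lie_smul, map_smul, Finsupp.smul_apply, smul_eq_mul,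
      structConst, Finset.mul_sum]
    rw [Finset.sum_comm]
    refine Finset.sum_congr rfl fun l _ => Finset.sum_congr rfl fun m _ => ?_
    ring
  rw [hR]
  simp only [hB, xi_apply, Finset.sum_smul]
  simp only [Finset.sum_mul, Finset.mul_sum, Finset.smul_sum, smul_mul_assoc, mul_smul_comm,
    smul_smul]
  -- now a reordering of four finite sums
  have e1 : ∀ F : κ → κ → ι → ι → W, ∑ l, ∑ m, ∑ i, ∑ j, F l m i j =
      ∑ i, ∑ j, ∑ l, ∑ m, F l m i j := by
    intro F
    calc ∑ l, ∑ m, ∑ i, ∑ j, F l m i j = ∑ l, ∑ i, ∑ m, ∑ j, F l m i j :=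
          Finset.sum_congr rfl fun l _ => Finset.sum_comm
      _ = ∑ i, ∑ l, ∑ m, ∑ j, F l m i j := Finset.sum_comm
      _ = ∑ i, ∑ l, ∑ j, ∑ m, F l m i j :=
          Finset.sum_congr rfl fun i _ => Finset.sum_congr rfl fun l _ => Finset.sum_comm
      _ = ∑ i, ∑ j, ∑ l, ∑ m, F l m i j :=
          Finset.sum_congr rfl fun i _ => Finset.sum_comm
  rw [e1, Finset.sum_comm]
  refine Finset.sum_congr rfl fun i _ => Finset.sum_congr rfl fun j _ =>
    Finset.sum_congr rfl fun l _ => Finset.sum_congr rfl fun m _ => ?_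
  congr 1
  ring

theorem jW_d (hjθ : ∀ k : κ, jW (wdQ.θ k) = wth wdG (xi π bq k))
    (hjΩ : ∀ k : κ, jW (wdQ.Ω k) = wom wdG (xi π bq k)) (x : WQ) :
    jW (wdQ.d x) = wdG.d (jW x) := by
  have hdθ : ∀ k, jW (wdQ.d (wdQ.θ k)) = wdG.d (jW (wdQ.θ k)) := by
    intro k
    rw [wdQ.d_θ, hjθ, wth_apply, map_add, hjΩ, wom_apply, map_smul, map_sum]
    simp only [map_sum, map_smul, map_mul, hjθ, wdG.d_θ, wth_apply]
    rw [struct_sum]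
    simp only [smul_add, Finset.sum_add_distrib]
    congr 1
    rw [Finset.smul_sum]
    exact Finset.sum_congr rfl fun i _ => smul_comm _ _ _
  have hdΩ : ∀ k, jW (wdQ.d (wdQ.Ω k)) = wdG.d (jW (wdQ.Ω k)) := by
    intro k
    rw [wdQ.d_Ω, hjΩ, wom_apply, map_neg, map_sum]
    simp only [map_sum, map_smul, map_mul, hjθ, hjΩ, wdG.d_Ω, wth_apply, wom_apply]
    rw [struct_sum]
    simp only [smul_neg, Finset.sum_neg_distrib]
  have : jW.toLinearMap ∘ₗ wdQ.d = wdG.d ∘ₗ jW.toLinearMap := by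
    apply weil_ext wdQ
    · simp [op_d_one]
    · intro i x hx
      simp only [LinearMap.comp_apply, AlgHom.toLinearMap_apply] at hx ⊢
      have hm : jW (wdQ.θ i) ∈ wdG.grading 1 := by rw [hjθ]; exact wth_mem _ _
      rw [wdQ.d_mul (wdQ.θ_mem i), map_add, map_zsmul, map_mul, map_mul, map_mul,
        wdG.d_mul hm, hdθ, hx]
    · intro i x hx
      simp only [LinearMap.comp_apply, AlgHom.toLinearMap_apply] at hx ⊢
      have hm : jW (wdQ.Ω i) ∈ wdG.grading 2 := by rw [hjΩ]; exact wom_mem _ _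
      rw [wdQ.d_mul (wdQ.Ω_mem i), map_add, map_zsmul, map_mul, map_mul, map_mul,
        wdG.d_mul hm, hdΩ, hx]
  exact LinearMap.congr_fun this x

theorem jW_L (hjθ : ∀ k : κ, jW (wdQ.θ k) = wth wdG (xi π bq k))
    (hjΩ : ∀ k : κ, jW (wdQ.Ω k) = wom wdG (xi π bq k)) (Y : 𝔤) (x : WQ) :
    jW (wdQ.L (π Y) x) = wdG.L Y (jW x) := by
  rw [← wdQ.cartan, ← wdG.cartan]
  simp [jW_I hjθ hjΩ, jW_d hjθ hjΩ]

theorem jW_proj (hjθ : ∀ k : κ, jW (wdQ.θ k) = wth wdG (xi π bq k))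
    (hjΩ : ∀ k : κ, jW (wdQ.Ω k) = wom wdG (xi π bq k)) (n : ℤ) (x : WQ) :
    gproj wdG.toOperation n (jW x) = jW (gproj wdQ.toOperation n x) := by
  have : ∀ x : WQ, x ∈ (⨅ n : ℤ, LinearMap.eqLocus (gproj wdG.toOperation n ∘ₗ jW.toLinearMap)
      (jW.toLinearMap ∘ₗ gproj wdQ.toOperation n)) := by
    intro x
    rw [weil_gen wdQ (⨅ n : ℤ, _) ?_ ?_ ?_]
    · trivial
    · simp only [Submodule.mem_iInf, LinearMap.mem_eqLocus, LinearMap.comp_apply,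
        AlgHom.toLinearMap_apply]
      intro n
      rw [gproj_one, map_one, gproj_one]
      split_ifs <;> simp
    · intro i x
      simp only [Submodule.mem_iInf, LinearMap.mem_eqLocus, LinearMap.comp_apply,
        AlgHom.toLinearMap_apply]
      intro h n
      rw [map_mul jW, gproj_mul _ (wdQ.θ_mem i), map_mul jW, hjθ, gproj_mul _ (wth_mem _ _), h]
    · intro i x
      simp only [Submodule.mem_iInf, LinearMap.mem_eqLocus, LinearMap.comp_apply,
        AlgHom.toLinearMap_apply]
      intro h n
      rw [map_mul jW, gproj_mul _ (wdQ.Ω_mem i), map_mul jW, hjΩ, gproj_mul _ (wom_mem _ _), h]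
  have := this x
  simp only [Submodule.mem_iInf, LinearMap.mem_eqLocus, LinearMap.comp_apply,
    AlgHom.toLinearMap_apply] at this
  exact this n

theorem jW_gr (hjθ : ∀ k : κ, jW (wdQ.θ k) = wth wdG (xi π bq k))
    (hjΩ : ∀ k : κ, jW (wdQ.Ω k) = wom wdG (xi π bq k)) {n : ℤ} {x : WQ}
    (hx : x ∈ wdQ.grading n) : jW x ∈ wdG.grading n := by
  have := jW_proj hjθ hjΩ n x
  rw [gproj_same _ hx] at this
  rw [← this]
  exact gproj_mem _ _ _

theorem jW_eps (hjθ : ∀ k : κ, jW (wdQ.θ k) = wth wdG (xi π bq k))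
    (hjΩ : ∀ k : κ, jW (wdQ.Ω k) = wom wdG (xi π bq k)) {εG : Module.End ℝ W}
    {εQ : Module.End ℝ WQ} (hεG : IsSign wdG.toOperation εG) (hεQ : IsSign wdQ.toOperation εQ)
    (x : WQ) : εG (jW x) = jW (εQ x) := by
  have : εG ∘ₗ jW.toLinearMap = jW.toLinearMap ∘ₗ εQ := by
    apply gr_ext wdQ.toOperation
    intro n x hx
    simp only [LinearMap.comp_apply, AlgHom.toLinearMap_apply]
    rw [hεG _ _ (jW_gr hjθ hjΩ hx), hεQ _ _ hx, map_zsmul]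
  exact LinearMap.congr_fun this x

theorem jW_inj (hjθ : ∀ k : κ, jW (wdQ.θ k) = wth wdG (xi π bq k))
    (hjΩ : ∀ k : κ, jW (wdQ.Ω k) = wom wdG (xi π bq k)) (hπ : Function.Surjective π) :
    Function.Injective jW := by
  have hnt : (1 : W) ≠ 0 := by
    have h1 : (1 : W) = wbas wdG (0, ∅) := by
      rw [wbas_apply]; simp [omM_zero, thS]
    rw [h1]
    exact (wbas wdG).ne_zero _
  have : LinearMap.ker jW.toLinearMap = ⊥ := by
    apply weil_zero_of_stable wdQ
    · intro k x hx
      obtain ⟨Y, hY⟩ := hπ (bq k)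
      rw [LinearMap.mem_ker, AlgHom.toLinearMap_apply] at hx ⊢
      rw [← hY, jW_I hjθ hjΩ, hx, map_zero]
    · intro k x hx
      obtain ⟨Y, hY⟩ := hπ (bq k)
      rw [LinearMap.mem_ker, AlgHom.toLinearMap_apply] at hx ⊢
      have : jW.toLinearMap ∘ₗ wpd wdQ k = wpdv wdG Y ∘ₗ jW.toLinearMap := by
        apply weil_ext wdQ
        · simp [wpd_one, wpdv_one]
        · intro i x hx
          simp only [LinearMap.comp_apply, AlgHom.toLinearMap_apply] at hx ⊢
          rw [wpd_θ, map_mul, map_mul, hjθ, hx, wpdv_wth]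
        · intro i x hx
          simp only [LinearMap.comp_apply, AlgHom.toLinearMap_apply] at hx ⊢
          rw [wpd_Ω, map_add, map_smul, map_mul, map_mul, hjΩ, hx, wpdv_wom, xi_apply, hY]
          congr 2
          by_cases hik : k = i
          · subst hik; simp
          · simp [hik]
      have h2 := LinearMap.congr_fun this x
      simp only [LinearMap.comp_apply, AlgHom.toLinearMap_apply] at h2
      rw [h2, hx, map_zero]
    · intro c hc
      rw [LinearMap.mem_ker, AlgHom.toLinearMap_apply, map_smul, map_one] at hc
      exact (smul_eq_zero.1 hc).resolve_right hnt
  exact LinearMap.ker_eq_bot.1 this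

end JW

/-! ### Abstract operator calculus -/

/-- The operators on `E = W ⊗ A` and the relations among them that are used in the proof. -/
structure Calc {ι 𝔤 κ : Type} [Fintype ι] [Fintype κ] [DecidableEq κ]
    [LieRing 𝔤] [LieAlgebra ℝ 𝔤] (b : Module.Basis ι ℝ 𝔤)
    (𝔫 : Submodule ℝ 𝔤) (hn : ∀ (Y : 𝔤), ∀ x ∈ 𝔫, ⁅Y, x⁆ ∈ 𝔫)
    (ξ : κ → Module.Dual ℝ 𝔤) (E : Type) [AddCommGroup E] [Module ℝ E] where
  y : κ → 𝔤
  ξ_y : ∀ k l, ξ k (y l) = if k = l then 1 else 0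
  mem_n : ∀ X, X ∈ 𝔫 ↔ ∀ k, ξ k X = 0
  D : Module.End ℝ E
  L : 𝔤 → Module.End ℝ E
  I : 𝔤 →ₗ[ℝ] Module.End ℝ E
  th : Module.Dual ℝ 𝔤 →ₗ[ℝ] Module.End ℝ E
  om : Module.Dual ℝ 𝔤 →ₗ[ℝ] Module.End ℝ E
  D_D : D * D = 0
  L_D : ∀ X, L X * D = D * L X
  D_I : ∀ X, D * I X = L X - I X * D
  L_I : ∀ X Y, L X * I Y = I Y * L X + I ⁅X, Y⁆
  I_I : ∀ X Y, I X * I Y = - (I Y * I X)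
  I_th : ∀ X η, I X * th η = η X • 1 - th η * I X
  I_om : ∀ X η, I X * om η = om η * I X
  L_th : ∀ X η, L X * th η = th η * L X - th (η ∘ₗ (LieAlgebra.ad ℝ 𝔤 X : Module.End ℝ 𝔤))
  L_om : ∀ X η, L X * om η = om η * L X - om (η ∘ₗ (LieAlgebra.ad ℝ 𝔤 X : Module.End ℝ 𝔤))
  th_th : ∀ η η', th η * th η' = - (th η' * th η)
  th_om : ∀ η η', th η * om η' = om η' * th η
  D_th : ∀ η, ∃ c : ι → ι → ℝ, D * th η = - (th η * D) + om η +
    ∑ i, ∑ j, c i j • (th (b.coord i) * th (b.coord j))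
  N : ℤ → Set (Module.End ℝ E)
  N_I : ∀ {q n}, n ∈ N q → ∀ X, ∃ n' ∈ N (q - 1), I X * n = n' + sgn q • (n * I X)
  N_D : ∀ {q n}, n ∈ N q → ∃ n' ∈ N (q + 1), D * n = n' + sgn q • (n * D)
  N_th : ∀ {q n}, n ∈ N q → ∀ η, th η * n = sgn q • (n * th η)
  N_om : ∀ {q n}, n ∈ N q → ∀ η, om η * n = n * om η
  N_N : ∀ {q n r m}, n ∈ N q → m ∈ N r → n * m = sgn (q * r) • (m * n)
  base : Submodule ℝ E
  base_I : ∀ X, ∀ v ∈ base, I X v ∈ base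
  base_L : ∀ X, ∀ v ∈ base, L X v ∈ base
  base_N : ∀ {q n}, n ∈ N q → ∀ v ∈ base, n v ∈ base
  gen : ∀ S : Submodule ℝ E, base ≤ S → (∀ i, ∀ v ∈ S, th (b.coord i) v ∈ S) →
    (∀ i, ∀ v ∈ S, om (b.coord i) v ∈ S) → S = ⊤
  gr : ℤ → Submodule ℝ E
  gr_I : ∀ X {m v}, v ∈ gr m → I X v ∈ gr (m - 1)
  gr_th : ∀ η {m v}, v ∈ gr m → th η v ∈ gr (m + 1)
  pd : ι → Module.End ℝ E
  pd_base : ∀ i, ∀ v ∈ base, pd i v = 0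
  pd_th : ∀ i η, pd i * th η = th η * pd i
  pd_om : ∀ i η, pd i * om η = om η * pd i + η (b i) • 1
  pd_gr : ∀ i {m v}, v ∈ gr m → pd i v ∈ gr (m + (-2))
  R : Submodule ℝ E
  base_R : base ≤ R
  R_D : ∀ v ∈ R, D v ∈ R
  R_I : ∀ X, ∀ v ∈ R, I X v ∈ R
  R_th : ∀ k, ∀ v ∈ R, th (ξ k) v ∈ R
  R_gen : ∀ S : Submodule ℝ E, base ≤ S → (∀ k, ∀ v ∈ S, th (ξ k) v ∈ S) →
    (∀ k, ∀ v ∈ S, om (ξ k) v ∈ S) → R ≤ S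
  nth : Module.Dual ℝ ↥𝔫 →ₗ[ℝ] Module.End ℝ E
  nth_N : ∀ α, nth α ∈ N 1
  nth_I : ∀ (X : ↥𝔫) α, I (X : 𝔤) * nth α = α X • 1 - nth α * I (X : 𝔤)
  nth_L : ∀ X α, L X * nth α = nth α * L X - nth (α ∘ₗ adRes 𝔫 hn X)
  nth_gr : ∀ α {m v}, v ∈ gr m → nth α v ∈ gr (m + 1)
  nth_R : ∀ α, ∀ v ∈ R, nth α v ∈ R

namespace Calc

variable {b : Module.Basis ι ℝ 𝔤}
    {𝔫 : Submodule ℝ 𝔤} {hn : ∀ (Y : 𝔤), ∀ x ∈ 𝔫, ⁅Y, x⁆ ∈ 𝔫}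
    {ξ : κ → Module.Dual ℝ 𝔤} {E : Type} [AddCommGroup E] [Module ℝ E]
    (C : Calc b 𝔫 hn ξ E)

/-- Projection `𝔤 → 𝔫` along the chosen lifts. -/
def p : 𝔤 →ₗ[ℝ] ↥𝔫 :=
  LinearMap.codRestrict 𝔫 (LinearMap.id - ∑ k, LinearMap.smulRight (ξ k) (C.y k)) (by
    intro X
    rw [C.mem_n]
    intro k
    simp [LinearMap.sum_apply, C.ξ_y])

theorem p_coe (X : 𝔤) : (C.p X : 𝔤) = X - ∑ k, ξ k X • C.y k := by
  simp [p, LinearMap.sum_apply]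

theorem p_n (X : ↥𝔫) : C.p (X : 𝔤) = X := by
  ext
  rw [p_coe]
  have := (C.mem_n X).1 X.2
  simp [this]

theorem eta_sum (η : Module.Dual ℝ 𝔤) (h : ∀ X ∈ 𝔫, η X = 0) : η = ∑ k, η (C.y k) • ξ k := by
  ext X
  have h1 := h _ (C.p X).2
  rw [p_coe, map_sub, map_sum, sub_eq_zero] at h1
  rw [h1]
  simp [LinearMap.sum_apply, mul_comm]

/-- The basic building block: `F ↦ F - θ(ξ^k) [I_k, F]`. -/
def hk (k : κ) : Module.End ℝ E →ₗ[ℝ] Module.End ℝ E where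
  toFun F := F - C.th (ξ k) * (C.I (C.y k) * F + F * C.I (C.y k))
  map_add' F G := by noncomm_ring
  map_smul' c F := by
    simp only [mul_smul_comm, smul_mul_assoc, smul_sub, smul_add, mul_add, RingHom.id_apply]

theorem hk_apply (k : κ) (F : Module.End ℝ E) :
    C.hk k F = F - C.th (ξ k) * (C.I (C.y k) * F + F * C.I (C.y k)) := rfl

/-- Iterated `hk`. -/
def hl : List κ → (Module.End ℝ E →ₗ[ℝ] Module.End ℝ E)
  | [] => LinearMap.id
  | k :: t => C.hk k ∘ₗ hl t

theorem hl_cons (k : κ) (t : List κ) (F : Module.End ℝ E) :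
    C.hl (k :: t) F = C.hk k (C.hl t F) := rfl

theorem hl_nil (F : Module.End ℝ E) : C.hl [] F = F := rfl

/-- The initial guess for `Θ`. -/
def F0 : Module.Dual ℝ ↥𝔫 →ₗ[ℝ] Module.End ℝ E :=
  C.nth - C.th ∘ₗ (LinearMap.lcomp ℝ ℝ C.p)

theorem F0_apply (α : Module.Dual ℝ ↥𝔫) : C.F0 α = C.nth α - C.th (α ∘ₗ C.p) := rfl

/-- The corrected `Θ`. -/
def Th : Module.Dual ℝ ↥𝔫 →ₗ[ℝ] Module.End ℝ E :=
  C.hl Finset.univ.toList ∘ₗ C.F0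

theorem Th_apply (α : Module.Dual ℝ ↥𝔫) : C.Th α = C.hl Finset.univ.toList (C.F0 α) := rfl

/-- A property preserved by `hk` is preserved by `hl`. -/
theorem hl_ind {P : Module.End ℝ E → Prop} (h : ∀ k F, P F → P (C.hk k F)) (l : List κ) :
    ∀ F, P F → P (C.hl l F) := by
  induction l with
  | nil => intro F hF; exact hF
  | cons k t ih => intro F hF; exact h k _ (ih F hF)

theorem I_sq (X : 𝔤) : C.I X * C.I X = 0 := by
  have := C.I_I X X
  have h2 : (2 : ℝ) • (C.I X * C.I X) = 0 := by
    rw [two_smul]; nth_rewrite 1 [this]; simp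
  exact (smul_eq_zero.1 h2).resolve_left (by norm_num)

theorem th_sq (η : Module.Dual ℝ 𝔤) : C.th η * C.th η = 0 := by
  have := C.th_th η η
  have h2 : (2 : ℝ) • (C.th η * C.th η) = 0 := by
    rw [two_smul]; nth_rewrite 1 [this]; simp
  exact (smul_eq_zero.1 h2).resolve_left (by norm_num)

theorem hk_anti_I (k : κ) (Z : 𝔤) (hZ : ξ k Z = 0) (F : Module.End ℝ E)
    (hF : C.I Z * F = - (F * C.I Z)) : C.I Z * C.hk k F = - (C.hk k F * C.I Z) := by
  have h1 := C.I_th Z (ξ k)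
  rw [hZ, zero_smul] at h1
  have h2 := C.I_I Z (C.y k)
  rw [hk_apply]
  linear_combination (norm := noncomm_ring) hF - h1 * (C.I (C.y k) * F + F * C.I (C.y k))
    + C.th (ξ k) * h2 * F - C.th (ξ k) * C.I (C.y k) * hF + C.th (ξ k) * hF * C.I (C.y k)
    - C.th (ξ k) * F * h2

theorem hk_anti_self (k : κ) (F : Module.End ℝ E) :
    C.I (C.y k) * C.hk k F = - (C.hk k F * C.I (C.y k)) := by
  have h1 := C.I_th (C.y k) (ξ k)
  rw [C.ξ_y, if_pos rfl, one_smul] at h1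
  have h2 := C.I_sq (C.y k)
  rw [hk_apply]
  linear_combination (norm := noncomm_ring) - h1 * (C.I (C.y k) * F + F * C.I (C.y k))
    + C.th (ξ k) * h2 * F - C.th (ξ k) * F * h2

theorem hl_anti (l : List κ) (k : κ) (hk : k ∈ l) (F : Module.End ℝ E) :
    C.I (C.y k) * C.hl l F = - (C.hl l F * C.I (C.y k)) := by
  induction l with
  | nil => simp at hk
  | cons m t ih =>
    rw [hl_cons]
    by_cases hkm : m = k
    · subst hkm; exact C.hk_anti_self _ _
    · apply hk_anti_I
      · rw [C.ξ_y, if_neg hkm]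
      · apply ih
        rcases List.mem_cons.1 hk with h | h
        · exact absurd h.symm hkm
        · exact h

theorem F0_anti (α : Module.Dual ℝ ↥𝔫) (X : ↥𝔫) :
    C.I (X : 𝔤) * C.F0 α = - (C.F0 α * C.I (X : 𝔤)) := by
  have h1 := C.nth_I X α
  have h2 := C.I_th (X : 𝔤) (α ∘ₗ C.p)
  rw [LinearMap.comp_apply, p_n] at h2
  rw [F0_apply]
  linear_combination (norm := noncomm_ring) h1 - h2

theorem Th_anti (α : Module.Dual ℝ ↥𝔫) (X : 𝔤) :
    C.I X * C.Th α = - (C.Th α * C.I X) := by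
  have hX : X = (C.p X : 𝔤) + ∑ k, ξ k X • C.y k := by rw [p_coe]; abel
  have h1 : C.I (C.p X : 𝔤) * C.Th α = - (C.Th α * C.I (C.p X : 𝔤)) := by
    rw [Th_apply]
    refine C.hl_ind (P := fun F => C.I (C.p X : 𝔤) * F = - (F * C.I (C.p X : 𝔤))) ?_ _ _
      (C.F0_anti α _)
    intro k F hF
    exact C.hk_anti_I k _ ((C.mem_n _).1 (C.p X).2 k) F hF
  have h2 : ∀ k, C.I (C.y k) * C.Th α = - (C.Th α * C.I (C.y k)) := fun k =>
    C.hl_anti _ k (by simp) _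
  rw [hX, map_add, map_sum, add_mul, mul_add, h1, Finset.sum_mul, Finset.mul_sum, neg_add,
    ← Finset.sum_neg_distrib]
  congr 1
  refine Finset.sum_congr rfl fun k _ => ?_
  rw [map_smul, smul_mul_assoc, mul_smul_comm, h2, smul_neg]

/-- The right ideal generated by the `θ(ξ^k)`. -/
def J : Submodule ℝ (Module.End ℝ E) where
  carrier := {F | ∃ G : κ → Module.End ℝ E, F = ∑ k, C.th (ξ k) * G k}
  zero_mem' := ⟨0, by simp⟩
  add_mem' := by
    rintro _ _ ⟨G, rfl⟩ ⟨G', rfl⟩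
    exact ⟨G + G', by simp [mul_add, Finset.sum_add_distrib]⟩
  smul_mem' := by
    rintro c _ ⟨G, rfl⟩
    exact ⟨c • G, by simp [Finset.smul_sum]⟩

theorem mem_J_mul (k : κ) (G : Module.End ℝ E) : C.th (ξ k) * G ∈ C.J := by
  refine ⟨Pi.single k G, ?_⟩
  rw [Finset.sum_eq_single k]
  · simp
  · intro l _ hl; simp [Pi.single_eq_of_ne hl]
  · simp

theorem J_ind {P : Module.End ℝ E → Prop} (h0 : P 0) (hadd : ∀ F G, P F → P G → P (F + G))
    (h : ∀ k G, P (C.th (ξ k) * G)) : ∀ F ∈ C.J, P F := by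
  rintro _ ⟨G, rfl⟩
  exact Finset.sum_induction _ P hadd h0 fun k _ => h k _

theorem J_of_vanish (η : Module.Dual ℝ 𝔤) (h : ∀ X ∈ 𝔫, η X = 0) (G : Module.End ℝ E) :
    C.th η * G ∈ C.J := by
  rw [C.eta_sum η h, map_sum, Finset.sum_mul]
  refine Submodule.sum_mem _ fun k _ => ?_
  rw [map_smul, smul_mul_assoc]
  exact Submodule.smul_mem _ _ (C.mem_J_mul _ _)

theorem hk_self (l : κ) (G : Module.End ℝ E) : C.hk l (C.th (ξ l) * G) = 0 := by
  have h1 := C.I_th (C.y l) (ξ l)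
  rw [C.ξ_y, if_pos rfl, one_smul] at h1
  have h2 := C.th_sq (ξ l)
  rw [hk_apply]
  linear_combination (norm := noncomm_ring) - C.th (ξ l) * h1 * G
    + h2 * C.I (C.y l) * G - h2 * G * C.I (C.y l)

theorem hk_other (k l : κ) (hkl : l ≠ k) (G : Module.End ℝ E) :
    C.hk k (C.th (ξ l) * G) =
      C.th (ξ l) * (G + C.th (ξ k) * (G * C.I (C.y k) - C.I (C.y k) * G)) := by
  have h1 := C.I_th (C.y k) (ξ l)
  rw [C.ξ_y, if_neg hkl, zero_smul] at h1
  have h2 := C.th_th (ξ k) (ξ l)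
  rw [hk_apply]
  linear_combination (norm := noncomm_ring) - C.th (ξ k) * h1 * G
    + h2 * C.I (C.y k) * G - h2 * G * C.I (C.y k)

theorem hl_other (t : List κ) (l : κ) (hl : l ∉ t) (G : Module.End ℝ E) :
    ∃ G', C.hl t (C.th (ξ l) * G) = C.th (ξ l) * G' := by
  induction t with
  | nil => exact ⟨G, rfl⟩
  | cons k t ih =>
    simp only [List.mem_cons, not_or] at hl
    obtain ⟨G', hG'⟩ := ih hl.2
    rw [hl_cons, hG', C.hk_other k l hl.1]
    exact ⟨_, rfl⟩

theorem hl_kill (t : List κ) (l : κ) (hl : l ∈ t) (G : Module.End ℝ E) :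
    C.hl t (C.th (ξ l) * G) = 0 := by
  induction t with
  | nil => simp at hl
  | cons k t ih =>
    rw [hl_cons]
    by_cases h : l ∈ t
    · rw [ih h, map_zero]
    · obtain ⟨G', hG'⟩ := C.hl_other t l h G
      have : l = k := by
        rcases List.mem_cons.1 hl with h' | h'
        · exact h'
        · exact absurd h' h
      subst this
      rw [hG', hk_self]

theorem hl_fix (t : List κ) (F : Module.End ℝ E)
    (hF : ∀ k, C.I (C.y k) * F = - (F * C.I (C.y k))) : C.hl t F = F := by
  induction t with
  | nil => rfl
  | cons k t ih => rw [hl_cons, ih, hk_apply, hF k]; simp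

theorem J_unique (F : Module.End ℝ E) (hJ : F ∈ C.J)
    (hF : ∀ k, C.I (C.y k) * F = - (F * C.I (C.y k))) : F = 0 := by
  rw [← C.hl_fix Finset.univ.toList F hF]
  refine C.J_ind (P := fun F => C.hl Finset.univ.toList F = 0) (map_zero _) ?_ ?_ F hJ
  · intro F G hF hG; rw [map_add, hF, hG, add_zero]
  · intro k G; exact C.hl_kill _ _ (by simp) _

theorem Th_sub_F0 (α : Module.Dual ℝ ↥𝔫) : C.Th α - C.F0 α ∈ C.J := by
  rw [Th_apply]
  refine C.hl_ind (P := fun F => F - C.F0 α ∈ C.J) ?_ _ _ (by simp)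
  intro k F hF
  have : C.hk k F - C.F0 α = (F - C.F0 α) -
    C.th (ξ k) * (C.I (C.y k) * F + F * C.I (C.y k)) := by rw [hk_apply]; abel
  rw [this]
  exact Submodule.sub_mem _ hF (C.mem_J_mul _ _)

theorem J_L (X : 𝔤) : ∀ F ∈ C.J, C.L X * F - F * C.L X ∈ C.J := by
  refine C.J_ind (by simp) ?_ ?_
  · intro F G hF hG
    have : C.L X * (F + G) - (F + G) * C.L X =
      (C.L X * F - F * C.L X) + (C.L X * G - G * C.L X) := by noncomm_ring
    rw [this]; exact Submodule.add_mem _ hF hG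
  · intro k G
    have h1 := C.L_th X (ξ k)
    have : C.L X * (C.th (ξ k) * G) - C.th (ξ k) * G * C.L X =
        C.th (ξ k) * (C.L X * G - G * C.L X) -
          C.th (ξ k ∘ₗ (LieAlgebra.ad ℝ 𝔤 X : Module.End ℝ 𝔤)) * G := by
      linear_combination (norm := noncomm_ring) h1 * G
    rw [this]
    refine Submodule.sub_mem _ (C.mem_J_mul _ _) (C.J_of_vanish _ ?_ _)
    intro Z hZ
    exact (C.mem_n _).1 (hn X Z hZ) k

theorem Th_L (X : 𝔤) (α : Module.Dual ℝ ↥𝔫) :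
    C.L X * C.Th α = C.Th α * C.L X - C.Th (α ∘ₗ adRes 𝔫 hn X) := by
  have key : C.L X * C.Th α - C.Th α * C.L X + C.Th (α ∘ₗ adRes 𝔫 hn X) = 0 := by
    apply C.J_unique
    · have h1 := C.J_L X _ (C.Th_sub_F0 α)
      have h2 := C.Th_sub_F0 (α ∘ₗ adRes 𝔫 hn X)
      have h3 := C.J_of_vanish ((α ∘ₗ C.p) ∘ₗ (LieAlgebra.ad ℝ 𝔤 X : Module.End ℝ 𝔤)
          - (α ∘ₗ adRes 𝔫 hn X) ∘ₗ C.p) (by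
        intro Z hZ
        have e1 : C.p Z = ⟨Z, hZ⟩ := C.p_n ⟨Z, hZ⟩
        have e2 : C.p ⁅X, Z⁆ = ⟨⁅X, Z⁆, hn X Z hZ⟩ := C.p_n ⟨⁅X, Z⁆, hn X Z hZ⟩
        simp [e1, e2, adRes]) 1
      have h4 := Submodule.add_mem _ (Submodule.add_mem _ h1 h2) h3
      convert h4 using 1
      have e1 := C.nth_L X α
      have e2 := C.L_th X (α ∘ₗ C.p)
      rw [F0_apply, F0_apply, map_sub]
      linear_combination (norm := noncomm_ring) e1 - e2
    · intro k
      have e1 := C.Th_anti α (C.y k)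
      have e2 := C.Th_anti (α ∘ₗ adRes 𝔫 hn X) (C.y k)
      have e3 := C.L_I X (C.y k)
      have e4 := C.Th_anti α ⁅X, C.y k⁆
      linear_combination (norm := noncomm_ring) e2 - e3 * C.Th α + C.L X * e1 - e1 * C.L X
        - C.Th α * e3 - e4
  linear_combination (norm := noncomm_ring) key

theorem Th_th (α : Module.Dual ℝ ↥𝔫) (η : Module.Dual ℝ 𝔤) :
    C.Th α * C.th η = - (C.th η * C.Th α) := by
  rw [Th_apply]
  refine C.hl_ind (P := fun F => F * C.th η = - (C.th η * F)) ?_ _ _ ?_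
  · intro k F hF
    have h1 := C.I_th (C.y k) η
    have h2 := C.th_th (ξ k) η
    rw [hk_apply]
    have h3 : (C.I (C.y k) * F + F * C.I (C.y k)) * C.th η =
        C.th η * (C.I (C.y k) * F + F * C.I (C.y k)) := by
      linear_combination (norm := noncomm_ring) C.I (C.y k) * hF + F * h1 - h1 * F - hF * C.I (C.y k)
    linear_combination (norm := noncomm_ring) hF - C.th (ξ k) * h3
      - h2 * (C.I (C.y k) * F + F * C.I (C.y k))
  · rw [F0_apply]
    have h1 := C.N_th (C.nth_N α) η
    have h2 := C.th_th (α ∘ₗ C.p) η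
    rw [sgn_one, neg_one_smul] at h1
    linear_combination (norm := noncomm_ring) -h2 + h1

theorem Th_om (α : Module.Dual ℝ ↥𝔫) (η : Module.Dual ℝ 𝔤) :
    C.Th α * C.om η = C.om η * C.Th α := by
  rw [Th_apply]
  refine C.hl_ind (P := fun F => F * C.om η = C.om η * F) ?_ _ _ ?_
  · intro k F hF
    have h1 := C.I_om (C.y k) η
    have h2 := C.th_om (ξ k) η
    rw [hk_apply]
    have h3 : (C.I (C.y k) * F + F * C.I (C.y k)) * C.om η =
        C.om η * (C.I (C.y k) * F + F * C.I (C.y k)) := by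
      linear_combination (norm := noncomm_ring) C.I (C.y k) * hF + F * h1 + h1 * F + hF * C.I (C.y k)
    linear_combination (norm := noncomm_ring) hF - C.th (ξ k) * h3
      - h2 * (C.I (C.y k) * F + F * C.I (C.y k))
  · rw [F0_apply]
    have h1 := C.N_om (C.nth_N α) η
    have h2 := C.th_om (α ∘ₗ C.p) η
    linear_combination (norm := noncomm_ring) -h2 - h1

theorem Th_N (α : Module.Dual ℝ ↥𝔫) :
    ∀ q, ∀ n ∈ C.N q, C.Th α * n = sgn q • (n * C.Th α) := by
  rw [Th_apply]
  refine C.hl_ind (P := fun F => ∀ q, ∀ n ∈ C.N q, F * n = sgn q • (n * F)) ?_ _ _ ?_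
  · intro k F hF q n hnq
    obtain ⟨n', hn', h1⟩ := C.N_I hnq (C.y k)
    have h2 := C.N_th hnq (ξ k)
    have hF1 := hF q n hnq
    have hF2 := hF (q - 1) n' hn'
    rw [sgn_pred] at hF2
    rw [hk_apply]
    rcases sgn_cases q with hq | hq <;> rw [hq] at h1 h2 hF1 hF2 ⊢ <;>
      simp only [neg_neg, one_smul, neg_smul] at h1 h2 hF1 hF2 ⊢
    · have h3 : (C.I (C.y k) * F + F * C.I (C.y k)) * n =
        n * (C.I (C.y k) * F + F * C.I (C.y k)) := by
        linear_combination (norm := noncomm_ring) C.I (C.y k) * hF1 + F * h1 + h1 * F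
          + hF1 * C.I (C.y k) + hF2
      linear_combination (norm := noncomm_ring) hF1 - C.th (ξ k) * h3
        - h2 * (C.I (C.y k) * F + F * C.I (C.y k))
    · have h3 : (C.I (C.y k) * F + F * C.I (C.y k)) * n =
        n * (C.I (C.y k) * F + F * C.I (C.y k)) := by
        linear_combination (norm := noncomm_ring) C.I (C.y k) * hF1 + F * h1 - h1 * F
          - hF1 * C.I (C.y k) + hF2
      linear_combination (norm := noncomm_ring) hF1 - C.th (ξ k) * h3
        - h2 * (C.I (C.y k) * F + F * C.I (C.y k))
  · intro q n hnq
    rw [F0_apply]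
    have h1 := C.N_N (C.nth_N α) hnq
    have h2 := C.N_th hnq (α ∘ₗ C.p)
    rw [one_mul] at h1
    rw [sub_mul, h1, h2, mul_sub, smul_sub]

theorem Th_gr (α : Module.Dual ℝ ↥𝔫) : ∀ m, ∀ v ∈ C.gr m, C.Th α v ∈ C.gr (m + 1) := by
  rw [Th_apply]
  refine C.hl_ind (P := fun F => ∀ m, ∀ v ∈ C.gr m, F v ∈ C.gr (m + 1)) ?_ _ _ ?_
  · intro k F hF m v hv
    rw [hk_apply]
    simp only [LinearMap.sub_apply, Module.End.mul_apply, LinearMap.add_apply]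
    refine Submodule.sub_mem _ (hF _ _ hv) (C.gr_th _ (Submodule.add_mem _ ?_ ?_))
    · have := C.gr_I (C.y k) (hF _ _ hv)
      rwa [add_sub_cancel_right] at this
    · have := hF _ _ (C.gr_I (C.y k) hv)
      rwa [sub_add_cancel] at this
  · intro m v hv
    rw [F0_apply]
    exact Submodule.sub_mem _ (C.nth_gr _ hv) (C.gr_th _ hv)

theorem Th_R (α : Module.Dual ℝ ↥𝔫) : ∀ v ∈ C.R, (C.Th α + C.th (α ∘ₗ C.p)) v ∈ C.R := by
  rw [Th_apply]
  refine C.hl_ind (P := fun F => ∀ v ∈ C.R, (F + C.th (α ∘ₗ C.p)) v ∈ C.R) ?_ _ _ ?_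
  · intro k F hF v hv
    have h1 := C.I_th (C.y k) (α ∘ₗ C.p)
    have e : C.hk k F + C.th (α ∘ₗ C.p) = (F + C.th (α ∘ₗ C.p)) -
        C.th (ξ k) * (C.I (C.y k) * (F + C.th (α ∘ₗ C.p)) + (F + C.th (α ∘ₗ C.p)) * C.I (C.y k)
          - (α ∘ₗ C.p) (C.y k) • 1) := by
      rw [hk_apply]
      linear_combination (norm := noncomm_ring) C.th (ξ k) * h1
    rw [e]
    refine Submodule.sub_mem _ (hF v hv) (C.R_th _ _ (Submodule.sub_mem _ (Submodule.add_mem _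
      (C.R_I _ _ (hF v hv)) (hF _ (C.R_I _ _ hv))) (Submodule.smul_mem _ _ hv)))
  · intro v hv
    rw [F0_apply, sub_add_cancel]
    exact C.nth_R _ _ hv

end Calc

namespace Calc

variable {b : Module.Basis ι ℝ 𝔤}
    {𝔫 : Submodule ℝ 𝔤} {hn : ∀ (Y : 𝔤), ∀ x ∈ 𝔫, ⁅Y, x⁆ ∈ 𝔫}
    {ξ : κ → Module.Dual ℝ 𝔤} {E : Type} [AddCommGroup E] [Module ℝ E]
    (C : Calc b 𝔫 hn ξ E)

/-- Restriction `𝔤* → 𝔫*`. -/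
def res : Module.Dual ℝ 𝔤 →ₗ[ℝ] Module.Dual ℝ ↥𝔫 := LinearMap.lcomp ℝ ℝ 𝔫.subtype

theorem res_apply (η : Module.Dual ℝ 𝔤) (X : ↥𝔫) : res (𝔫 := 𝔫) η X = η X := rfl

theorem res_ξ (C : Calc b 𝔫 hn ξ E) (k : κ) : res (𝔫 := 𝔫) (ξ k) = 0 := by
  ext X
  rw [res_apply]
  exact (C.mem_n X).1 X.2 k

theorem res_ad (η : Module.Dual ℝ 𝔤) (X : 𝔤) :
    res (𝔫 := 𝔫) (η ∘ₗ (LieAlgebra.ad ℝ 𝔤 X : Module.End ℝ 𝔤)) = res η ∘ₗ adRes 𝔫 hn X := by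
  ext Z
  rfl

theorem dual_coord_sum (η : Module.Dual ℝ 𝔤) : η = ∑ i, η (b i) • b.coord i := by
  refine b.ext fun j => ?_
  rw [LinearMap.sum_apply, Finset.sum_eq_single j]
  · simp
  · intro i _ hi
    simp [Finsupp.single_eq_of_ne' hi.symm, Finsupp.single_eq_of_ne hi]
  · simp

/-- The homotopy operator. -/
def K : Module.End ℝ E := ∑ i, C.Th (res (b.coord i)) * C.pd i

theorem K_base (v : E) (hv : v ∈ C.base) : C.K v = 0 := by
  simp [K, LinearMap.sum_apply, C.pd_base _ v hv]

theorem K_th (η : Module.Dual ℝ 𝔤) : C.K * C.th η = - (C.th η * C.K) := by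
  rw [K, Finset.sum_mul, Finset.mul_sum, ← Finset.sum_neg_distrib]
  refine Finset.sum_congr rfl fun i _ => ?_
  have h1 := C.pd_th i η
  have h2 := C.Th_th (res (b.coord i)) η
  linear_combination (norm := noncomm_ring) C.Th (res (b.coord i)) * h1 + h2 * C.pd i

theorem K_om (η : Module.Dual ℝ 𝔤) : C.K * C.om η = C.om η * C.K + C.Th (res η) := by
  have h0 : C.Th (res (𝔫 := 𝔫) η) = ∑ i, η (b i) • C.Th (res (b.coord i)) := by
    conv_lhs => rw [dual_coord_sum (b := b) η, map_sum, map_sum]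
    simp only [map_smul]
  rw [K, Finset.sum_mul, Finset.mul_sum, h0, ← Finset.sum_add_distrib]
  refine Finset.sum_congr rfl fun i _ => ?_
  have h1 := C.pd_om i η
  have h2 := C.Th_om (res (b.coord i)) η
  linear_combination (norm := noncomm_ring) C.Th (res (b.coord i)) * h1 + h2 * C.pd i

theorem end_ext (F G : Module.End ℝ E) (h0 : ∀ v ∈ C.base, F v = G v)
    (hθ : ∀ i v, F v = G v → F (C.th (b.coord i) v) = G (C.th (b.coord i) v))
    (hΩ : ∀ i v, F v = G v → F (C.om (b.coord i) v) = G (C.om (b.coord i) v)) : F = G := by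
  have := C.gen (LinearMap.eqLocus F G) h0 hθ hΩ
  ext v
  have hv : v ∈ LinearMap.eqLocus F G := by rw [this]; trivial
  exact hv

theorem K_I (X : 𝔤) : C.K * C.I X = - (C.I X * C.K) := by
  apply C.end_ext
  · intro v hv
    simp [C.K_base v hv, C.K_base _ (C.base_I X v hv)]
  · intro i v hv
    have h1 := C.I_th X (b.coord i)
    have h2 := C.K_th (b.coord i)
    have e : C.K * C.I X * C.th (b.coord i) - (-(C.I X * C.K)) * C.th (b.coord i) =
        C.th (b.coord i) * (C.K * C.I X - (-(C.I X * C.K))) := by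
      linear_combination (norm := noncomm_ring) C.K * h1 - h2 * C.I X + C.I X * h2 - h1 * C.K
    have := LinearMap.congr_fun e v
    simp only [LinearMap.sub_apply, Module.End.mul_apply (_ * _) _ _,
      Module.End.mul_apply (-(_ * _)) _ _, Module.End.mul_apply (C.th _) _ _, hv, sub_self,
      map_zero] at this
    exact sub_eq_zero.1 this
  · intro i v hv
    have h1 := C.I_om X (b.coord i)
    have h2 := C.K_om (b.coord i)
    have h3 := C.Th_anti (res (b.coord i)) X
    have e : C.K * C.I X * C.om (b.coord i) - (-(C.I X * C.K)) * C.om (b.coord i) =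
        C.om (b.coord i) * (C.K * C.I X - (-(C.I X * C.K))) := by
      linear_combination (norm := noncomm_ring) C.K * h1 + h2 * C.I X + C.I X * h2 + h1 * C.K + h3
    have := LinearMap.congr_fun e v
    simp only [LinearMap.sub_apply, Module.End.mul_apply (_ * _) _ _,
      Module.End.mul_apply (-(_ * _)) _ _, Module.End.mul_apply (C.om _) _ _, hv, sub_self,
      map_zero] at this
    exact sub_eq_zero.1 this

theorem end_zero (F : Module.End ℝ E) (h0 : ∀ v ∈ C.base, F v = 0)
    (hθ : ∀ η, ∃ G, F * C.th η = G * F) (hΩ : ∀ η, ∃ G, F * C.om η = G * F) : F = 0 := by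
  apply C.end_ext
  · intro v hv; rw [h0 v hv]; rfl
  · intro i v hv
    obtain ⟨G, hG⟩ := hθ (b.coord i)
    have := LinearMap.congr_fun hG v
    rw [Module.End.mul_apply, Module.End.mul_apply, hv] at this
    rw [this]; simp
  · intro i v hv
    obtain ⟨G, hG⟩ := hΩ (b.coord i)
    have := LinearMap.congr_fun hG v
    rw [Module.End.mul_apply, Module.End.mul_apply, hv] at this
    rw [this]; simp

theorem K_L (X : 𝔤) : C.K * C.L X = C.L X * C.K := by
  have : C.gen (LinearMap.ker (C.K * C.L X - C.L X * C.K)) = C.gen _ := rfl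
  have key : ∀ v, (C.K * C.L X - C.L X * C.K) v = 0 := by
    intro v
    have h : LinearMap.ker (C.K * C.L X - C.L X * C.K) = ⊤ := by
      have hθ : ∀ η, (C.K * C.L X - C.L X * C.K) * C.th η =
          - (C.th η * (C.K * C.L X - C.L X * C.K)) := by
        intro η
        have h1 := C.L_th X η
        have h2 := C.K_th η
        have h3 := C.K_th (η ∘ₗ (LieAlgebra.ad ℝ 𝔤 X : Module.End ℝ 𝔤))
        linear_combination (norm := noncomm_ring) C.K * h1 + h2 * C.L X - C.L X * h2
          + h1 * C.K - h3
      have hΩ : ∀ η, (C.K * C.L X - C.L X * C.K) * C.om η =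
          C.om η * (C.K * C.L X - C.L X * C.K) := by
        intro η
        have h1 := C.L_om X η
        have h2 := C.K_om η
        have h3 := C.K_om (η ∘ₗ (LieAlgebra.ad ℝ 𝔤 X : Module.End ℝ 𝔤))
        have h4 := C.Th_L X (res η)
        rw [res_ad (hn := hn)] at h3
        linear_combination (norm := noncomm_ring) C.K * h1 + h2 * C.L X - C.L X * h2
          - h1 * C.K - h3 - h4
      apply C.gen
      · intro v hv
        simp [C.K_base v hv, C.K_base _ (C.base_L X v hv)]
      · intro i v hv
        rw [LinearMap.mem_ker] at hv ⊢
        rw [← Module.End.mul_apply, hθ, LinearMap.neg_apply, Module.End.mul_apply, hv]; simp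
      · intro i v hv
        rw [LinearMap.mem_ker] at hv ⊢
        rw [← Module.End.mul_apply, hΩ, Module.End.mul_apply, hv]; simp
    have hv : v ∈ LinearMap.ker (C.K * C.L X - C.L X * C.K) := by rw [h]; trivial
    exact hv
  exact sub_eq_zero.1 (LinearMap.ext key)

theorem K_N (q : ℤ) (n : Module.End ℝ E) (hnq : n ∈ C.N q) : C.K * n = sgn q • (n * C.K) := by
  have hθ : ∀ η, (C.K * n - sgn q • (n * C.K)) * C.th η =
      - (sgn q • (C.th η * (C.K * n - sgn q • (n * C.K)))) := by
    intro η
    have h1 := C.N_th hnq η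
    have h2 := C.K_th η
    rcases sgn_cases q with hq | hq <;> rw [hq] at h1 ⊢ <;>
      simp only [neg_neg, one_smul, neg_smul] at h1 ⊢
    · linear_combination (norm := noncomm_ring) -C.K * h1 + h2 * n - n * h2 - h1 * C.K
    · linear_combination (norm := noncomm_ring) C.K * h1 - h2 * n + n * h2 - h1 * C.K
  have hΩ : ∀ η, (C.K * n - sgn q • (n * C.K)) * C.om η =
      C.om η * (C.K * n - sgn q • (n * C.K)) := by
    intro η
    have h1 := C.N_om hnq η
    have h2 := C.K_om η
    have h3 := C.Th_N (res η) q n hnq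
    rcases sgn_cases q with hq | hq <;> rw [hq] at h3 ⊢ <;>
      simp only [neg_neg, one_smul, neg_smul] at h3 ⊢
    · linear_combination (norm := noncomm_ring) -C.K * h1 + h2 * n - n * h2 + h1 * C.K + h3
    · linear_combination (norm := noncomm_ring) -C.K * h1 + h2 * n + n * h2 - h1 * C.K + h3
  have h : LinearMap.ker (C.K * n - sgn q • (n * C.K)) = ⊤ := by
    apply C.gen
    · intro v hv
      simp [C.K_base v hv, C.K_base _ (C.base_N hnq v hv)]
    · intro i v hv
      rw [LinearMap.mem_ker] at hv ⊢
      rw [← Module.End.mul_apply, hθ, LinearMap.neg_apply, LinearMap.smul_apply,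
        Module.End.mul_apply, hv]; simp
    · intro i v hv
      rw [LinearMap.mem_ker] at hv ⊢
      rw [← Module.End.mul_apply, hΩ, Module.End.mul_apply, hv]; simp
  exact sub_eq_zero.1 (LinearMap.ker_eq_top.1 h)

theorem K_gr {m : ℤ} {v : E} (hv : v ∈ C.gr m) : C.K v ∈ C.gr (m - 1) := by
  rw [K, LinearMap.sum_apply]
  refine Submodule.sum_mem _ fun i _ => ?_
  have := C.Th_gr (res (b.coord i)) _ _ (C.pd_gr i hv)
  rw [show m + -2 + 1 = m - 1 by ring] at this
  exact this

theorem K_R (v : E) (hv : v ∈ C.R) : C.K v = 0 := by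
  have := C.R_gen (LinearMap.ker C.K) (fun v hv => C.K_base v hv) ?_ ?_ hv
  · exact this
  · intro k v hv
    rw [LinearMap.mem_ker] at hv ⊢
    rw [← Module.End.mul_apply, C.K_th, LinearMap.neg_apply, Module.End.mul_apply, hv]; simp
  · intro k v hv
    rw [LinearMap.mem_ker] at hv ⊢
    rw [← Module.End.mul_apply, C.K_om, C.res_ξ, map_zero, add_zero, Module.End.mul_apply, hv]
    simp

/-- `T = -(DK + KD)`. -/
def T : Module.End ℝ E := -(C.D * C.K + C.K * C.D)

theorem T_D : C.T * C.D = C.D * C.T := by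
  have h := C.D_D
  rw [T]
  linear_combination (norm := noncomm_ring) - C.K * h + h * C.K

theorem T_I (X : 𝔤) : C.T * C.I X = C.I X * C.T := by
  have h1 := C.D_I X
  have h2 := C.K_I X
  have h3 := C.K_L X
  rw [T]
  linear_combination (norm := noncomm_ring) - C.D * h2 - C.K * h1 + h1 * C.K + h2 * C.D - h3

theorem T_L (X : 𝔤) : C.T * C.L X = C.L X * C.T := by
  have h1 := C.L_D X
  have h3 := C.K_L X
  rw [T]
  linear_combination (norm := noncomm_ring) - C.D * h3 + h1 * C.K + C.K * h1 - h3 * C.D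

theorem T_R (v : E) (hv : v ∈ C.R) : C.T v = 0 := by
  simp [T, C.K_R v hv, C.K_R _ (C.R_D v hv)]

theorem T_th (η : Module.Dual ℝ 𝔤) : C.T * C.th η = C.th η * C.T - C.Th (res η) := by
  obtain ⟨c, hc⟩ := C.D_th η
  have h1 := C.K_th η
  have h2 := C.K_om η
  set Q := ∑ i, ∑ j, c i j • (C.th (b.coord i) * C.th (b.coord j)) with hQ
  have h3 : C.K * Q = Q * C.K := by
    rw [hQ]
    simp only [Finset.mul_sum, Finset.sum_mul]
    refine Finset.sum_congr rfl fun i _ => Finset.sum_congr rfl fun j _ => ?_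
    have e1 := C.K_th (b.coord i)
    have e2 := C.K_th (b.coord j)
    rw [mul_smul_comm, smul_mul_assoc]
    congr 1
    linear_combination (norm := noncomm_ring) e1 * C.th (b.coord j) - C.th (b.coord i) * e2
  rw [T]
  linear_combination (norm := noncomm_ring) - C.D * h1 - C.K * hc + hc * C.K + h1 * C.D - h2 - h3

theorem T_nth (α : Module.Dual ℝ ↥𝔫) : C.T * C.nth α = C.nth α * C.T := by
  obtain ⟨n', hn', h1⟩ := C.N_D (C.nth_N α)
  have h2 := C.K_N _ _ (C.nth_N α)
  have h3 := C.K_N _ _ hn'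
  rw [show (1 : ℤ) + 1 = 2 by norm_num, sgn_two, one_smul] at h3
  rw [sgn_one, neg_one_smul] at h1 h2
  rw [T]
  linear_combination (norm := noncomm_ring) - C.D * h2 - C.K * h1 + h1 * C.K + h2 * C.D - h3

theorem J_T : ∀ F ∈ C.J, C.T * F - F * C.T ∈ C.J := by
  refine C.J_ind (by simp) ?_ ?_
  · intro F G hF hG
    have : C.T * (F + G) - (F + G) * C.T =
      (C.T * F - F * C.T) + (C.T * G - G * C.T) := by noncomm_ring
    rw [this]; exact Submodule.add_mem _ hF hG
  · intro k G
    have h1 := C.T_th (ξ k)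
    rw [C.res_ξ, map_zero] at h1
    have : C.T * (C.th (ξ k) * G) - C.th (ξ k) * G * C.T =
        C.th (ξ k) * (C.T * G - G * C.T) := by
      linear_combination (norm := noncomm_ring) h1 * G
    rw [this]
    exact C.mem_J_mul _ _

theorem T_Th (α : Module.Dual ℝ ↥𝔫) : C.T * C.Th α = C.Th α * C.T + C.Th α := by
  have key : C.T * C.Th α - C.Th α * C.T - C.Th α = 0 := by
    apply C.J_unique
    · have h1 := C.J_T _ (C.Th_sub_F0 α)
      convert h1 using 1
      have e1 := C.T_nth α
      have e2 := C.T_th (α ∘ₗ C.p)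
      have e3 : res (𝔫 := 𝔫) (α ∘ₗ C.p) = α := by
        ext X
        rw [res_apply, LinearMap.comp_apply, p_n]
      rw [e3] at e2
      rw [F0_apply]
      linear_combination (norm := noncomm_ring) e1 - e2
    · intro k
      have e1 := C.Th_anti α (C.y k)
      have e2 := C.T_I (C.y k)
      linear_combination (norm := noncomm_ring) C.T * e1 - e1 * C.T - e1 - e2 * C.Th α
        - C.Th α * e2
  linear_combination (norm := noncomm_ring) key

theorem T_gr (hD : ∀ m, ∀ v ∈ C.gr m, C.D v ∈ C.gr (m + 1)) {m : ℤ} {v : E}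
    (hv : v ∈ C.gr m) : C.T v ∈ C.gr m := by
  simp only [T, LinearMap.neg_apply, LinearMap.add_apply, Module.End.mul_apply]
  refine Submodule.neg_mem _ (Submodule.add_mem _ ?_ ?_)
  · have := hD _ _ (C.K_gr hv)
    rwa [sub_add_cancel] at this
  · have := C.K_gr (hD _ _ hv)
    rwa [add_sub_cancel_right] at this

/-- `ρ(η) = θ(η) + Θ(η|𝔫)`. -/
def rho (η : Module.Dual ℝ 𝔤) : Module.End ℝ E := C.th η + C.Th (res η)

theorem T_rho (η : Module.Dual ℝ 𝔤) : C.T * C.rho η = C.rho η * C.T := by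
  have h1 := C.T_th η
  have h2 := C.T_Th (res η)
  rw [rho]
  linear_combination (norm := noncomm_ring) h1 + h2

theorem rho_R (η : Module.Dual ℝ 𝔤) (v : E) (hv : v ∈ C.R) : C.rho η v ∈ C.R := by
  have h1 := C.Th_R (res η) v hv
  have h2 : C.th (η - res η ∘ₗ C.p) v ∈ C.R := by
    rw [C.eta_sum (η - res η ∘ₗ C.p) (by
      intro X hX
      have e1 : C.p X = ⟨X, hX⟩ := C.p_n ⟨X, hX⟩
      simp [e1, res_apply]), map_sum, LinearMap.sum_apply]
    refine Submodule.sum_mem _ fun k _ => ?_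
    rw [map_smul, LinearMap.smul_apply]
    exact Submodule.smul_mem _ _ (C.R_th _ _ hv)
  have := Submodule.add_mem _ h1 h2
  convert this using 1
  rw [rho, map_sub]
  simp only [LinearMap.add_apply, LinearMap.sub_apply]
  abel

/-- The polynomial `∏_{k=1}^M (X - k)`. -/
def fpol : ℕ → Polynomial ℝ
  | 0 => 1
  | M + 1 => fpol M * (Polynomial.X - Polynomial.C ((M : ℝ) + 1))

theorem fpol_eval (M : ℕ) : (fpol M).eval 0 ≠ 0 := by
  induction M with
  | zero => simp [fpol]
  | succ M ih =>
    simp only [fpol, Polynomial.eval_mul, Polynomial.eval_sub, Polynomial.eval_X,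
      Polynomial.eval_C]
    refine mul_ne_zero ih ?_
    have : (0 : ℝ) < (M : ℝ) + 1 := by positivity
    linarith

/-- `f_M(T)`. -/
def fT (M : ℕ) : Module.End ℝ E := Polynomial.aeval C.T (fpol M)

theorem fT_zero : C.fT 0 = 1 := by simp [fT, fpol]

theorem fT_succ (M : ℕ) : C.fT (M + 1) = C.fT M * (C.T - ((M : ℝ) + 1) • 1) := by
  rw [fT, fpol, map_mul, map_sub, Polynomial.aeval_X, Polynomial.aeval_C,
    Algebra.algebraMap_eq_smul_one]
  rfl

theorem aeval_comm {F : Module.End ℝ E} (h : C.T * F = F * C.T) (f : Polynomial ℝ) :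
    Polynomial.aeval C.T f * F = F * Polynomial.aeval C.T f := by
  induction f using Polynomial.induction_on' with
  | add p q hp hq => rw [map_add, add_mul, mul_add, hp, hq]
  | monomial n a =>
    rw [Polynomial.aeval_monomial, Algebra.algebraMap_eq_smul_one, smul_mul_assoc, one_mul,
      smul_mul_assoc, mul_smul_comm]
    congr 1
    exact (Commute.pow_left h n)

theorem fT_comm {F : Module.End ℝ E} (h : C.T * F = F * C.T) (M : ℕ) :
    C.fT M * F = F * C.fT M :=
  C.aeval_comm h _

theorem fT_Th (α : Module.Dual ℝ ↥𝔫) (M : ℕ) :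
    C.fT (M + 1) * C.Th α = C.Th α * C.T * C.fT M := by
  induction M with
  | zero =>
    have h := C.T_Th α
    rw [fT_succ, fT_zero]
    simp only [Nat.cast_zero, zero_add, one_smul]
    linear_combination (norm := noncomm_ring) h
  | succ M ih =>
    have h := C.T_Th α
    rw [fT_succ C (M + 1)]
    have hc : C.fT M * C.T = C.T * C.fT M := C.fT_comm rfl M
    have e : (C.T - (((M + 1 : ℕ) : ℝ) + 1) • (1 : Module.End ℝ E)) * C.Th α =
        C.Th α * (C.T - ((M : ℝ) + 1) • 1) := by
      push_cast
      rw [sub_mul, h, mul_sub, smul_mul_assoc, one_mul, mul_smul_comm, mul_one]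
      module
    rw [mul_assoc, e, ← mul_assoc, ih, mul_assoc, ← fT_succ]

theorem fT_R (M : ℕ) (v : E) (hv : v ∈ C.R) : C.fT M v = (fpol M).eval 0 • v := by
  induction M with
  | zero => simp [fT_zero, fpol]
  | succ M ih =>
    rw [fT_succ, Module.End.mul_apply, LinearMap.sub_apply, C.T_R v hv, zero_sub, map_neg,
      LinearMap.smul_apply, map_smul, Module.End.one_apply, ih]
    simp only [fpol, Polynomial.eval_mul, Polynomial.eval_sub, Polynomial.eval_X,
      Polynomial.eval_C]
    module

/-- The vectors moved into `R` by some `f_M(T)`. -/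
theorem fT_mono {M M' : ℕ} (h : M ≤ M') {v : E} (hv : C.fT M v ∈ C.R) : C.fT M' v ∈ C.R := by
  induction h with
  | refl => exact hv
  | step _ ih =>
    rename_i m _
    have hc : C.fT m * (C.T - ((m : ℝ) + 1) • 1) = (C.T - ((m : ℝ) + 1) • 1) * C.fT m :=
      C.fT_comm (by noncomm_ring) m
    rw [fT_succ, hc, Module.End.mul_apply, LinearMap.sub_apply, C.T_R _ ih, zero_sub]
    exact Submodule.neg_mem _ (Submodule.smul_mem _ _ ih)

/-- The submodule of vectors moved into `R` by some `f_M(T)`. -/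
def Z : Submodule ℝ E where
  carrier := {v | ∃ M, C.fT M v ∈ C.R}
  zero_mem' := ⟨0, by simp⟩
  add_mem' := by
    rintro v w ⟨M, hM⟩ ⟨M', hM'⟩
    refine ⟨max M M', ?_⟩
    rw [map_add]
    exact Submodule.add_mem _ (C.fT_mono (le_max_left _ _) hM) (C.fT_mono (le_max_right _ _) hM')
  smul_mem' := by
    rintro c v ⟨M, hM⟩
    exact ⟨M, by rw [map_smul]; exact Submodule.smul_mem _ _ hM⟩

theorem Z_th (η : Module.Dual ℝ 𝔤) (v : E) (hv : v ∈ C.Z) : C.th η v ∈ C.Z := by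
  obtain ⟨M, hM⟩ := hv
  have h1 : C.rho η v ∈ C.Z := by
    refine ⟨M, ?_⟩
    rw [← Module.End.mul_apply, C.fT_comm (C.T_rho η), Module.End.mul_apply]
    exact C.rho_R _ _ hM
  have h2 : C.Th (res η) v ∈ C.Z := by
    refine ⟨M + 1, ?_⟩
    rw [← Module.End.mul_apply, C.fT_Th, Module.End.mul_apply, Module.End.mul_apply, C.T_R _ hM]
    simp
  have := Submodule.sub_mem _ h1 h2
  simpa [rho] using this

theorem Z_D (v : E) (hv : v ∈ C.Z) : C.D v ∈ C.Z := by
  obtain ⟨M, hM⟩ := hv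
  refine ⟨M, ?_⟩
  rw [← Module.End.mul_apply, C.fT_comm C.T_D, Module.End.mul_apply]
  exact C.R_D _ hM

theorem Z_top : C.Z = ⊤ := by
  apply C.gen
  · intro v hv
    exact ⟨0, by rw [fT_zero]; exact C.base_R hv⟩
  · intro i v hv; exact C.Z_th _ _ hv
  · intro i v hv
    obtain ⟨c, hc⟩ := C.D_th (b.coord i)
    have e : C.om (b.coord i) = C.D * C.th (b.coord i) + C.th (b.coord i) * C.D -
        ∑ i, ∑ j, c i j • (C.th (b.coord i) * C.th (b.coord j)) := by
      rw [hc]; abel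
    rw [e]
    simp only [LinearMap.sub_apply, LinearMap.add_apply, Module.End.mul_apply,
      LinearMap.sum_apply, LinearMap.smul_apply]
    refine Submodule.sub_mem _ (Submodule.add_mem _ (C.Z_D _ (C.Z_th _ _ hv))
      (C.Z_th _ _ (C.Z_D _ hv))) (Submodule.sum_mem _ fun i _ => Submodule.sum_mem _ fun j _ =>
        Submodule.smul_mem _ _ (C.Z_th _ _ (C.Z_th _ _ hv)))

theorem exists_fT (v : E) : ∃ M, C.fT M v ∈ C.R := by
  have : v ∈ C.Z := by rw [Z_top]; trivial
  exact this

/-- The complementary polynomial in `T`: `f_M(T) = c_M + T g_M(T)`. -/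
def gT (M : ℕ) : Module.End ℝ E := Polynomial.aeval C.T (fpol M).divX

theorem fT_eq (M : ℕ) : C.fT M = (fpol M).eval 0 • 1 + C.T * C.gT M := by
  rw [fT, gT]
  conv_lhs => rw [← Polynomial.divX_mul_X_add (fpol M), mul_comm]
  simp [Algebra.algebraMap_eq_smul_one, Polynomial.coeff_zero_eq_eval_zero, add_comm]

theorem gT_comm {F : Module.End ℝ E} (h : C.T * F = F * C.T) (M : ℕ) :
    C.gT M * F = F * C.gT M :=
  C.aeval_comm h _

/-- `f(T)` preserves any submodule preserved by `T`. -/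
theorem aeval_mem {S : Submodule ℝ E} (h : ∀ v ∈ S, C.T v ∈ S) (f : Polynomial ℝ) :
    ∀ v ∈ S, Polynomial.aeval C.T f v ∈ S := by
  induction f using Polynomial.induction_on' with
  | add p q hp hq =>
    intro v hv
    rw [map_add]
    exact Submodule.add_mem _ (hp v hv) (hq v hv)
  | monomial n a =>
    intro v hv
    rw [Polynomial.aeval_monomial, Module.End.mul_apply, Module.algebraMap_end_apply]
    refine Submodule.smul_mem _ _ ?_
    induction n with
    | zero => simpa using hv
    | succ n ih => rw [pow_succ', Module.End.mul_apply]; exact h _ ih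

end Calc

/-! ### The operators on `W ⊗ A` -/

section TensorOps
variable {b : Module.Basis ι ℝ 𝔤} (wd : WeilData ι b W) (op : Operation 𝔤 A)
  (ε : Module.End ℝ W)

theorem DTot_tmul (w : W) (a : A) :
    DTot wd op ε (w ⊗ₜ a) = wd.d w ⊗ₜ a + ε w ⊗ₜ op.d a := by
  simp [DTot]

theorem LTot_tmul (X : 𝔤) (w : W) (a : A) :
    LTot wd op X (w ⊗ₜ a) = wd.L X w ⊗ₜ a + w ⊗ₜ op.L X a := by
  simp [LTot]

theorem ITot_tmul (X : 𝔤) (w : W) (a : A) :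
    ITot wd op ε X (w ⊗ₜ a) = wd.I X w ⊗ₜ a + ε w ⊗ₜ op.I X a := by
  simp [ITot]

/-- `ITot` as a linear map. -/
def eI : 𝔤 →ₗ[ℝ] Module.End ℝ (W ⊗[ℝ] A) where
  toFun X := ITot wd op ε X
  map_add' X Y := by
    refine TensorProduct.ext' fun w a => ?_
    simp only [LinearMap.add_apply, ITot_tmul, map_add, TensorProduct.add_tmul,
      TensorProduct.tmul_add]
    abel
  map_smul' c X := by
    refine TensorProduct.ext' fun w a => ?_
    simp only [LinearMap.smul_apply, ITot_tmul, map_smul, RingHom.id_apply, smul_add,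
      TensorProduct.smul_tmul', TensorProduct.tmul_smul]

theorem eI_apply (X : 𝔤) : eI wd op ε X = ITot wd op ε X := rfl

/-- Left multiplication by `w ⊗ 1`. -/
def emul (A : Type) [Ring A] [Algebra ℝ A] : W →ₗ[ℝ] Module.End ℝ (W ⊗[ℝ] A) where
  toFun w := LinearMap.rTensor A (LinearMap.mulLeft ℝ w)
  map_add' w w' := by
    refine TensorProduct.ext' fun w a => ?_
    simp [add_mul, TensorProduct.add_tmul]
  map_smul' c w := by
    refine TensorProduct.ext' fun w a => ?_
    simp [TensorProduct.smul_tmul']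

theorem emul_tmul (w x : W) (a : A) : emul A w (x ⊗ₜ a) = (w * x) ⊗ₜ a := by
  simp [emul]

theorem D_D_tot (hε : IsSign wd.toOperation ε) : DTot wd op ε * DTot wd op ε = 0 := by
  refine TensorProduct.ext' fun w a => ?_
  have h1 : wd.d (wd.d w) = 0 := LinearMap.congr_fun wd.d_sq w
  have h2 : op.d (op.d a) = 0 := LinearMap.congr_fun op.d_sq a
  simp only [Module.End.mul_apply, DTot_tmul, map_add, h1, h2, hε.d, TensorProduct.zero_tmul,
    TensorProduct.tmul_zero, TensorProduct.neg_tmul, LinearMap.zero_apply]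
  abel

theorem L_D_tot (hε : IsSign wd.toOperation ε) (X : 𝔤) :
    LTot wd op X * DTot wd op ε = DTot wd op ε * LTot wd op X := by
  refine TensorProduct.ext' fun w a => ?_
  have h1 : wd.L X (wd.d w) = wd.d (wd.L X w) := LinearMap.congr_fun (wd.L_d X) w
  have h2 : op.L X (op.d a) = op.d (op.L X a) := LinearMap.congr_fun (op.L_d X) a
  simp only [Module.End.mul_apply, DTot_tmul, LTot_tmul, map_add, h1, h2, hε.L]
  abel

theorem D_I_tot (hε : IsSign wd.toOperation ε) (X : 𝔤) :
    DTot wd op ε * ITot wd op ε X = LTot wd op X - ITot wd op ε X * DTot wd op ε := by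
  refine TensorProduct.ext' fun w a => ?_
  have h1 : wd.L X w = wd.I X (wd.d w) + wd.d (wd.I X w) := (LinearMap.congr_fun (wd.cartan X) w).symm
  have h2 : op.L X a = op.I X (op.d a) + op.d (op.I X a) := (LinearMap.congr_fun (op.cartan X) a).symm
  simp only [Module.End.mul_apply, DTot_tmul, LTot_tmul, ITot_tmul, map_add, h1, h2, hε.I, hε.d,
    LinearMap.sub_apply, hε.sq, TensorProduct.add_tmul, TensorProduct.tmul_add,
    TensorProduct.neg_tmul]
  abel

theorem L_I_tot (hε : IsSign wd.toOperation ε) (X Y : 𝔤) :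
    LTot wd op X * ITot wd op ε Y = ITot wd op ε Y * LTot wd op X + ITot wd op ε ⁅X, Y⁆ := by
  refine TensorProduct.ext' fun w a => ?_
  have h1 : wd.I ⁅X, Y⁆ w = wd.L X (wd.I Y w) - wd.I Y (wd.L X w) :=
    (LinearMap.congr_fun (wd.L_I X Y) w).symm
  have h2 : op.I ⁅X, Y⁆ a = op.L X (op.I Y a) - op.I Y (op.L X a) :=
    (LinearMap.congr_fun (op.L_I X Y) a).symm
  simp only [Module.End.mul_apply, LTot_tmul, ITot_tmul, map_add, h1, h2, hε.L,
    LinearMap.add_apply, TensorProduct.sub_tmul, TensorProduct.tmul_sub]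
  abel

theorem I_I_tot (hε : IsSign wd.toOperation ε) (X Y : 𝔤) :
    ITot wd op ε X * ITot wd op ε Y = - (ITot wd op ε Y * ITot wd op ε X) := by
  refine TensorProduct.ext' fun w a => ?_
  have h1 : wd.I X (wd.I Y w) = - wd.I Y (wd.I X w) :=
    eq_neg_of_add_eq_zero_left (LinearMap.congr_fun (wd.I_I X Y) w)
  have h2 : op.I X (op.I Y a) = - op.I Y (op.I X a) :=
    eq_neg_of_add_eq_zero_left (LinearMap.congr_fun (op.I_I X Y) a)
  simp only [Module.End.mul_apply, ITot_tmul, map_add, h1, h2, hε.I, hε.sq,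
    LinearMap.neg_apply, TensorProduct.neg_tmul, TensorProduct.tmul_neg]
  abel

theorem wth_eps (hε : IsSign wd.toOperation ε) (η : Module.Dual ℝ 𝔤) (x : W) :
    ε (wth wd η * x) = - (wth wd η * ε x) := by
  rw [hε.mul (wth_mem wd η), sgn_one, neg_one_smul]

theorem wom_eps (hε : IsSign wd.toOperation ε) (η : Module.Dual ℝ 𝔤) (x : W) :
    ε (wom wd η * x) = wom wd η * ε x := by
  rw [hε.mul (wom_mem wd η), sgn_two, one_smul]

theorem wom_L (X : 𝔤) (η : Module.Dual ℝ 𝔤) :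
    wd.L X (wom wd η) = - wom wd (η ∘ₗ (LieAlgebra.ad ℝ 𝔤 X : Module.End ℝ 𝔤)) := by
  have h : ∀ i, wd.L (b i) (wom wd η) =
      - wom wd (η ∘ₗ (LieAlgebra.ad ℝ 𝔤 (b i) : Module.End ℝ 𝔤)) := by
    intro i
    rw [wom_apply, wom_apply, map_sum]
    simp only [map_smul, wd.L_Ω, smul_neg, Finset.smul_sum, smul_smul, Finset.sum_neg_distrib]
    congr 1
    rw [Finset.sum_comm]
    refine Finset.sum_congr rfl fun k _ => ?_
    rw [← Finset.sum_smul]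
    congr 1
    simp only [structConst]
    rw [dual_sum]
    simp
  rw [← b.sum_repr X]
  rw [map_sum, LinearMap.sum_apply]
  simp only [map_smul, LinearMap.smul_apply, h, map_sum]
  have : (η ∘ₗ (∑ i, b.repr X i • (LieAlgebra.ad ℝ 𝔤 (b i) : Module.End ℝ 𝔤))) =
      ∑ i, b.repr X i • (η ∘ₗ (LieAlgebra.ad ℝ 𝔤 (b i) : Module.End ℝ 𝔤)) := by
    ext y; simp [LinearMap.sum_apply]
  rw [this]
  simp

theorem I_th_tot (hε : IsSign wd.toOperation ε) (X : 𝔤) (η : Module.Dual ℝ 𝔤) :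
    ITot wd op ε X * emul A (wth wd η) =
      η X • 1 - emul A (wth wd η) * ITot wd op ε X := by
  refine TensorProduct.ext' fun w a => ?_
  simp only [Module.End.mul_apply, ITot_tmul, emul_tmul, map_add, wth_I, wth_eps wd ε hε,
    LinearMap.sub_apply, LinearMap.smul_apply, Module.End.one_apply, TensorProduct.sub_tmul,
    TensorProduct.neg_tmul, TensorProduct.smul_tmul']
  abel

theorem I_om_tot (hε : IsSign wd.toOperation ε) (X : 𝔤) (η : Module.Dual ℝ 𝔤) :
    ITot wd op ε X * emul A (wom wd η) = emul A (wom wd η) * ITot wd op ε X := by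
  refine TensorProduct.ext' fun w a => ?_
  simp only [Module.End.mul_apply, ITot_tmul, emul_tmul, map_add, wom_I, wom_eps wd ε hε]

theorem L_th_tot (X : 𝔤) (η : Module.Dual ℝ 𝔤) :
    LTot wd op X * emul A (wth wd η) = emul A (wth wd η) * LTot wd op X -
      emul A (wth wd (η ∘ₗ (LieAlgebra.ad ℝ 𝔤 X : Module.End ℝ 𝔤))) := by
  refine TensorProduct.ext' fun w a => ?_
  simp only [Module.End.mul_apply, LTot_tmul, emul_tmul, map_add, wd.L_mul, wth_L,
    LinearMap.sub_apply, neg_mul, TensorProduct.add_tmul, TensorProduct.neg_tmul]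
  abel

theorem L_om_tot (X : 𝔤) (η : Module.Dual ℝ 𝔤) :
    LTot wd op X * emul A (wom wd η) = emul A (wom wd η) * LTot wd op X -
      emul A (wom wd (η ∘ₗ (LieAlgebra.ad ℝ 𝔤 X : Module.End ℝ 𝔤))) := by
  refine TensorProduct.ext' fun w a => ?_
  simp only [Module.End.mul_apply, LTot_tmul, emul_tmul, map_add, wd.L_mul, wom_L,
    LinearMap.sub_apply, neg_mul, TensorProduct.add_tmul, TensorProduct.neg_tmul]
  abel

theorem th_th_tot (η η' : Module.Dual ℝ 𝔤) :
    emul A (wth wd η) * emul A (wth wd η') = - (emul A (wth wd η') * emul A (wth wd η)) := by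
  refine TensorProduct.ext' fun w a => ?_
  have h := wd.supercomm (wth_mem wd η) (wth_mem wd η')
  rw [one_mul, sgn_one, neg_one_smul] at h
  simp only [Module.End.mul_apply, emul_tmul, LinearMap.neg_apply, ← mul_assoc, h, neg_mul,
    TensorProduct.neg_tmul]

theorem th_om_tot (η η' : Module.Dual ℝ 𝔤) :
    emul A (wth wd η) * emul A (wom wd η') = emul A (wom wd η') * emul A (wth wd η) := by
  refine TensorProduct.ext' fun w a => ?_
  have h := wd.supercomm (wth_mem wd η) (wom_mem wd η')
  rw [one_mul, sgn_two, one_smul] at h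
  simp only [Module.End.mul_apply, emul_tmul, ← mul_assoc, h]

theorem D_th_tot (hε : IsSign wd.toOperation ε) (η : Module.Dual ℝ 𝔤) : ∃ c : ι → ι → ℝ,
    DTot wd op ε * emul A (wth wd η) = - (emul A (wth wd η) * DTot wd op ε) +
      emul A (wom wd η) +
      ∑ i, ∑ j, c i j • (emul A (wth wd (b.coord i)) * emul A (wth wd (b.coord j))) := by
  have hd : ∃ c : ι → ι → ℝ, wd.d (wth wd η) = wom wd η + ∑ i, ∑ j, c i j • (wd.θ i * wd.θ j) := by
    refine ⟨fun j k => ∑ i, η (b i) * (-(1/2 : ℝ) * structConst b i j k), ?_⟩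
    rw [wth_apply, wom_apply, map_sum]
    simp only [map_smul, wd.d_θ, smul_add, Finset.sum_add_distrib, Finset.sum_smul,
      Finset.smul_sum, smul_smul]
    rw [add_comm]
    congr 1
    rw [Finset.sum_comm]
    refine Finset.sum_congr rfl fun j _ => ?_
    rw [Finset.sum_comm]
  obtain ⟨c, hc⟩ := hd
  refine ⟨c, TensorProduct.ext' fun w a => ?_⟩
  simp only [Module.End.mul_apply, DTot_tmul, emul_tmul, map_add, wd.d_mul (wth_mem wd η), hc,
    LinearMap.add_apply, LinearMap.neg_apply, LinearMap.sum_apply, LinearMap.smul_apply,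
    wth_eps wd ε hε, TensorProduct.add_tmul, TensorProduct.neg_tmul, sgn_one, neg_one_smul,
    add_mul, Finset.sum_mul, TensorProduct.sum_tmul, smul_mul_assoc, TensorProduct.smul_tmul',
    wth_coord, mul_assoc]
  abel

/-- The sign twist for an operator of degree `q`. -/
def ep (q : ℤ) : Module.End ℝ W := if Even q then 1 else ε

theorem ep_even {q : ℤ} (hq : Even q) : ep ε q = 1 := if_pos hq
theorem ep_odd {q : ℤ} (hq : ¬ Even q) : ep ε q = ε := if_neg hq

/-- Left multiplication by `1 ⊗ a` for `a` of degree `q`. -/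
def nA (q : ℤ) : A →ₗ[ℝ] Module.End ℝ (W ⊗[ℝ] A) where
  toFun a := TensorProduct.map (ep ε q) (LinearMap.mulLeft ℝ a)
  map_add' a a' := by
    refine TensorProduct.ext' fun w x => ?_
    simp [add_mul, TensorProduct.tmul_add]
  map_smul' c a := by
    refine TensorProduct.ext' fun w x => ?_
    simp

theorem nA_tmul (q : ℤ) (a : A) (w : W) (x : A) :
    nA ε q a (w ⊗ₜ x) = ep ε q w ⊗ₜ (a * x) := by
  simp [nA]

/-- The set of left multiplications by elements of `A^q`. -/
def nSet (q : ℤ) : Set (Module.End ℝ (W ⊗[ℝ] A)) := {n | ∃ a ∈ op.grading q, n = nA ε q a}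

theorem ep_ep (q r : ℤ) (w : W) : ep ε q (ep ε r w) = ep ε r (ep ε q w) := by
  unfold ep
  split_ifs <;> rfl

theorem N_I_tot (hε : IsSign wd.toOperation ε) {q : ℤ} {n : Module.End ℝ (W ⊗[ℝ] A)}
    (h : n ∈ nSet op ε q) (X : 𝔤) : ∃ n' ∈ nSet op ε (q - 1),
      ITot wd op ε X * n = n' + sgn q • (n * ITot wd op ε X) := by
  obtain ⟨a, ha, rfl⟩ := h
  refine ⟨_, ⟨op.I X a, op.I_mem X ha, rfl⟩, TensorProduct.ext' fun w x => ?_⟩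
  by_cases hq : Even q
  · have hq' : ¬ Even (q - 1) := by rw [Int.even_sub_one]; simpa using hq
    have hs : sgn q = 1 := if_pos hq
    simp only [Module.End.mul_apply, LinearMap.add_apply, ITot_tmul, nA_tmul,
      op.I_mul X ha, hs, one_smul, ep_even ε hq, ep_odd ε hq', map_add, Module.End.one_apply,
      TensorProduct.tmul_add]
    abel
  · have hq' : Even (q - 1) := by rw [Int.even_sub_one]; exact hq
    have hs : sgn q = -1 := if_neg hq
    simp only [Module.End.mul_apply, LinearMap.add_apply, ITot_tmul, nA_tmul,
      op.I_mul X ha, hs, neg_one_smul, ep_odd ε hq, ep_even ε hq', map_add, Module.End.one_apply,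
      TensorProduct.tmul_add, LinearMap.neg_apply, hε.I, hε.sq, TensorProduct.neg_tmul,
      TensorProduct.tmul_neg]
    abel

theorem N_D_tot (hε : IsSign wd.toOperation ε) {q : ℤ} {n : Module.End ℝ (W ⊗[ℝ] A)}
    (h : n ∈ nSet op ε q) : ∃ n' ∈ nSet op ε (q + 1),
      DTot wd op ε * n = n' + sgn q • (n * DTot wd op ε) := by
  obtain ⟨a, ha, rfl⟩ := h
  refine ⟨_, ⟨op.d a, op.d_mem ha, rfl⟩, TensorProduct.ext' fun w x => ?_⟩
  by_cases hq : Even q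
  · have hq' : ¬ Even (q + 1) := by rw [Int.even_add_one]; simpa using hq
    have hs : sgn q = 1 := if_pos hq
    simp only [Module.End.mul_apply, LinearMap.add_apply, DTot_tmul, nA_tmul,
      op.d_mul ha, hs, one_smul, ep_even ε hq, ep_odd ε hq', map_add, Module.End.one_apply,
      TensorProduct.tmul_add]
    abel
  · have hq' : Even (q + 1) := by rw [Int.even_add_one]; exact hq
    have hs : sgn q = -1 := if_neg hq
    simp only [Module.End.mul_apply, LinearMap.add_apply, DTot_tmul, nA_tmul,
      op.d_mul ha, hs, neg_one_smul, ep_odd ε hq, ep_even ε hq', map_add, Module.End.one_apply,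
      TensorProduct.tmul_add, LinearMap.neg_apply, hε.d, hε.sq, TensorProduct.neg_tmul,
      TensorProduct.tmul_neg]
    abel

theorem N_th_tot (hε : IsSign wd.toOperation ε) {q : ℤ} {n : Module.End ℝ (W ⊗[ℝ] A)}
    (h : n ∈ nSet op ε q) (η : Module.Dual ℝ 𝔤) :
    emul A (wth wd η) * n = sgn q • (n * emul A (wth wd η)) := by
  obtain ⟨a, ha, rfl⟩ := h
  refine TensorProduct.ext' fun w x => ?_
  by_cases hq : Even q
  · have hs : sgn q = 1 := if_pos hq
    simp only [Module.End.mul_apply, emul_tmul, nA_tmul, hs, one_smul, ep_even ε hq,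
      Module.End.one_apply]
  · have hs : sgn q = -1 := if_neg hq
    simp only [Module.End.mul_apply, emul_tmul, nA_tmul, hs, neg_one_smul, ep_odd ε hq,
      LinearMap.neg_apply, wth_eps wd ε hε, TensorProduct.neg_tmul, neg_neg]

theorem N_om_tot (hε : IsSign wd.toOperation ε) {q : ℤ} {n : Module.End ℝ (W ⊗[ℝ] A)}
    (h : n ∈ nSet op ε q) (η : Module.Dual ℝ 𝔤) :
    emul A (wom wd η) * n = n * emul A (wom wd η) := by
  obtain ⟨a, ha, rfl⟩ := h
  refine TensorProduct.ext' fun w x => ?_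
  by_cases hq : Even q
  · simp only [Module.End.mul_apply, emul_tmul, nA_tmul, ep_even ε hq, Module.End.one_apply]
  · simp only [Module.End.mul_apply, emul_tmul, nA_tmul, ep_odd ε hq, wom_eps wd ε hε]

theorem N_N_tot {q r : ℤ} {n m : Module.End ℝ (W ⊗[ℝ] A)}
    (h : n ∈ nSet op ε q) (h' : m ∈ nSet op ε r) : n * m = sgn (q * r) • (m * n) := by
  obtain ⟨a, ha, rfl⟩ := h
  obtain ⟨a', ha', rfl⟩ := h'
  refine TensorProduct.ext' fun w x => ?_
  simp only [Module.End.mul_apply, nA_tmul, LinearMap.smul_apply, ← mul_assoc,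
    op.supercomm ha ha', ep_ep ε q r]
  rcases sgn_cases (q * r) with hs | hs <;>
    simp only [hs, one_smul, neg_one_smul, neg_mul, TensorProduct.tmul_neg]

theorem tmul_mem_gr {p q : ℤ} {w : W} {a : A} (hw : w ∈ wd.grading p) (ha : a ∈ op.grading q) :
    w ⊗ₜ a ∈ grTensor b wd op (p + q) := by
  refine Submodule.mem_iSup_of_mem p ?_
  have ha' : a ∈ op.grading (p + q - p) := by rwa [add_sub_cancel_left]
  exact ⟨(⟨w, hw⟩ : wd.grading p) ⊗ₜ (⟨a, ha'⟩ : op.grading (p + q - p)), by simp⟩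

theorem gr_map (F : Module.End ℝ (W ⊗[ℝ] A)) (k : ℤ)
    (h : ∀ p q, ∀ w ∈ wd.grading p, ∀ a ∈ op.grading q, F (w ⊗ₜ a) ∈ grTensor b wd op (p + q + k))
    {n : ℤ} {v : W ⊗[ℝ] A} (hv : v ∈ grTensor b wd op n) : F v ∈ grTensor b wd op (n + k) := by
  have : grTensor b wd op n ≤ (grTensor b wd op (n + k)).comap F := by
    refine iSup_le fun p => ?_
    rintro _ ⟨t, rfl⟩
    induction t with
    | zero => simp
    | add x y hx hy => rw [map_add]; exact Submodule.add_mem _ hx hy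
    | tmul w a =>
      have := h p (n - p) w w.2 a a.2
      rw [add_sub_cancel] at this
      simpa using this
  exact this hv

theorem gr_D_tot (hε : IsSign wd.toOperation ε) {n : ℤ} {v : W ⊗[ℝ] A}
    (hv : v ∈ grTensor b wd op n) : DTot wd op ε v ∈ grTensor b wd op (n + 1) := by
  refine gr_map wd op _ 1 ?_ hv
  intro p q w hw a ha
  rw [DTot_tmul]
  refine Submodule.add_mem _ ?_ ?_
  · have := tmul_mem_gr wd op (wd.d_mem hw) ha
    rwa [show p + 1 + q = p + q + 1 by ring] at this
  · have := tmul_mem_gr wd op (hε.mem hw) (op.d_mem ha)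
    rwa [← add_assoc] at this

theorem gr_I_tot (hε : IsSign wd.toOperation ε) (X : 𝔤) {n : ℤ} {v : W ⊗[ℝ] A}
    (hv : v ∈ grTensor b wd op n) : ITot wd op ε X v ∈ grTensor b wd op (n - 1) := by
  refine gr_map wd op _ (-1) ?_ hv
  intro p q w hw a ha
  rw [ITot_tmul]
  refine Submodule.add_mem _ ?_ ?_
  · have := tmul_mem_gr wd op (wd.I_mem X hw) ha
    rwa [show p - 1 + q = p + q + -1 by ring] at this
  · have := tmul_mem_gr wd op (hε.mem hw) (op.I_mem X ha)
    rwa [show p + (q - 1) = p + q + -1 by ring] at this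

theorem gr_th_tot (η : Module.Dual ℝ 𝔤) {n : ℤ} {v : W ⊗[ℝ] A}
    (hv : v ∈ grTensor b wd op n) : emul A (wth wd η) v ∈ grTensor b wd op (n + 1) := by
  refine gr_map wd op _ 1 ?_ hv
  intro p q w hw a ha
  rw [emul_tmul]
  have := tmul_mem_gr wd op (wd.mul_mem (wth_mem wd η) hw) ha
  rwa [show 1 + p + q = p + q + 1 by ring] at this

theorem gr_pd_tot (i : ι) {n : ℤ} {v : W ⊗[ℝ] A}
    (hv : v ∈ grTensor b wd op n) :
    LinearMap.rTensor A (wpd wd i) v ∈ grTensor b wd op (n + (-2)) := by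
  refine gr_map wd op _ (-2) ?_ hv
  intro p q w hw a ha
  rw [LinearMap.rTensor_tmul]
  have := tmul_mem_gr wd op (wpd_mem wd i hw) ha
  rwa [show p + -2 + q = p + q + -2 by ring] at this

theorem gr_nA_tot (hε : IsSign wd.toOperation ε) {a : A} (ha : a ∈ op.grading 1) {n : ℤ}
    {v : W ⊗[ℝ] A} (hv : v ∈ grTensor b wd op n) :
    nA ε 1 a v ∈ grTensor b wd op (n + 1) := by
  refine gr_map wd op _ 1 ?_ hv
  intro p q w hw x hx
  rw [nA_tmul, ep_odd ε (by decide)]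
  have := tmul_mem_gr wd op (hε.mem hw) (op.mul_mem ha hx)
  rwa [show p + (1 + q) = p + q + 1 by ring] at this

/-- The subspace `1 ⊗ A`. -/
def ebase (W A : Type) [Ring W] [Algebra ℝ W] [Ring A] [Algebra ℝ A] :
    Submodule ℝ (W ⊗[ℝ] A) := LinearMap.range (TensorProduct.mk ℝ W A 1)

theorem ebase_ind {P : W ⊗[ℝ] A → Prop} (h : ∀ a : A, P ((1 : W) ⊗ₜ a)) :
    ∀ v ∈ ebase W A, P v := by
  rintro _ ⟨a, rfl⟩
  exact h a

theorem mem_ebase (a : A) : ((1 : W) ⊗ₜ a : W ⊗[ℝ] A) ∈ ebase W A := ⟨a, rfl⟩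

theorem ebase_gen {W' : Type} [Ring W'] [Algebra ℝ W'] (S : Submodule ℝ (W' ⊗[ℝ] A))
    (f : W →ₐ[ℝ] W') (h0 : ebase W' A ≤ S)
    (hθ : ∀ i, ∀ v ∈ S, emul A (f (wd.θ i)) v ∈ S)
    (hΩ : ∀ i, ∀ v ∈ S, emul A (f (wd.Ω i)) v ∈ S) (w : W) (a : A) : f w ⊗ₜ a ∈ S := by
  have : (⨅ a : A, S.comap ((TensorProduct.mk ℝ W' A).flip a ∘ₗ f.toLinearMap)) = ⊤ := by
    apply weil_gen wd
    · simp only [Submodule.mem_iInf, Submodule.mem_comap]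
      intro a
      simpa using h0 (mem_ebase a)
    · simp only [Submodule.mem_iInf, Submodule.mem_comap]
      intro i x hx a
      have := hθ i _ (hx a)
      simpa [emul_tmul] using this
    · simp only [Submodule.mem_iInf, Submodule.mem_comap]
      intro i x hx a
      have := hΩ i _ (hx a)
      simpa [emul_tmul] using this
  have hw : w ∈ (⨅ a : A, S.comap ((TensorProduct.mk ℝ W' A).flip a ∘ₗ f.toLinearMap)) := by
    rw [this]; trivial
  simp only [Submodule.mem_iInf, Submodule.mem_comap] at hw
  simpa using hw a

end TensorOps

/-! ### Construction of the calculus -/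

/-- The subspace `j_W(W_Q) ⊗ A` of `W ⊗ A`. -/
def eR (jW : WQ →ₐ[ℝ] W) (A : Type) [Ring A] [Algebra ℝ A] : Submodule ℝ (W ⊗[ℝ] A) :=
  LinearMap.range (LinearMap.rTensor A jW.toLinearMap)

theorem tmul_mem_eR (jW : WQ →ₐ[ℝ] W) (x : WQ) (a : A) : jW x ⊗ₜ[ℝ] a ∈ eR jW A :=
  ⟨x ⊗ₜ a, by simp⟩

theorem eR_le (jW : WQ →ₐ[ℝ] W) (S : Submodule ℝ (W ⊗[ℝ] A))
    (h : ∀ x a, jW x ⊗ₜ a ∈ S) : eR jW A ≤ S := by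
  rintro _ ⟨t, rfl⟩
  induction t with
  | zero => simp
  | add x y hx hy => rw [map_add]; exact Submodule.add_mem _ hx hy
  | tmul x a => simpa using h x a

theorem eR_stable (jW : WQ →ₐ[ℝ] W) (F : Module.End ℝ (W ⊗[ℝ] A))
    (h : ∀ x a, F (jW x ⊗ₜ a) ∈ eR jW A) : ∀ v ∈ eR jW A, F v ∈ eR jW A := by
  have := eR_le jW ((eR jW A).comap F) h
  exact fun v hv => this hv

section MkCalc
variable {b : Module.Basis ι ℝ 𝔤} {bq : Module.Basis κ ℝ 𝔮} {π : 𝔤 →ₗ⁅ℝ⁆ 𝔮}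
  {wdG : WeilData ι b W} {wdQ : WeilData κ bq WQ} {jW : WQ →ₐ[ℝ] W}

/-- The calculus on `W_G ⊗ A`. -/
def mkCalc (op : Operation 𝔤 A)
    (𝔫 : Submodule ℝ 𝔤) (hn : ∀ (Y : 𝔤), ∀ x ∈ 𝔫, ⁅Y, x⁆ ∈ 𝔫)
    (hπsurj : Function.Surjective π)
    (hπker : ∀ X : 𝔤, π X = 0 ↔ X ∈ 𝔫)
    (θN : Module.Dual ℝ ↥𝔫 →ₗ[ℝ] A)
    (hmem : ∀ α, θN α ∈ op.grading 1)
    (hconn : ∀ (X : ↥𝔫) (α : Module.Dual ℝ ↥𝔫),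
      op.I (X : 𝔤) (θN α) = α X • (1 : A))
    (hequiv : ∀ (Y : 𝔤) (α : Module.Dual ℝ ↥𝔫),
      op.L Y (θN α) = -θN (α ∘ₗ adRes 𝔫 hn Y))
    {εG : Module.End ℝ W} (hεG : IsSign wdG.toOperation εG)
    {εQ : Module.End ℝ WQ} (hεQ : IsSign wdQ.toOperation εQ)
    (hjθ : ∀ k : κ, jW (wdQ.θ k) = wth wdG (xi π bq k))
    (hjΩ : ∀ k : κ, jW (wdQ.Ω k) = wom wdG (xi π bq k)) :
    Calc b 𝔫 hn (xi π bq) (W ⊗[ℝ] A) where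
  y k := (hπsurj (bq k)).choose
  ξ_y k l := by
    rw [xi_apply, (hπsurj (bq l)).choose_spec, Module.Basis.repr_self, Finsupp.single_apply]
    simp only [eq_comm]
  mem_n X := by
    rw [← hπker]
    constructor
    · intro h k
      rw [xi_apply, h]; simp
    · intro h
      apply bq.repr.injective
      ext k
      rw [← xi_apply, h k]; simp
  D := DTot wdG op εG
  L := LTot wdG op
  I := eI wdG op εG
  th := emul A ∘ₗ wth wdG
  om := emul A ∘ₗ wom wdG
  D_D := D_D_tot wdG op εG hεG
  L_D := L_D_tot wdG op εG hεG
  D_I := D_I_tot wdG op εG hεG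
  L_I := L_I_tot wdG op εG hεG
  I_I := I_I_tot wdG op εG hεG
  I_th := I_th_tot wdG op εG hεG
  I_om := I_om_tot wdG op εG hεG
  L_th := L_th_tot wdG op
  L_om := L_om_tot wdG op
  th_th := th_th_tot wdG
  th_om := th_om_tot wdG
  D_th := D_th_tot wdG op εG hεG
  N := nSet op εG
  N_I h X := N_I_tot wdG op εG hεG h X
  N_D h := N_D_tot wdG op εG hεG h
  N_th h η := N_th_tot wdG op εG hεG h η
  N_om h η := N_om_tot wdG op εG hεG h η
  N_N h h' := N_N_tot op εG h h'
  base := ebase W A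
  base_I X := ebase_ind fun a => by
    rw [eI_apply, ITot_tmul, weil_I_one, hεG.one, TensorProduct.zero_tmul, zero_add]
    exact mem_ebase _
  base_L X := ebase_ind fun a => by
    rw [LTot_tmul, op_L_one, TensorProduct.zero_tmul, zero_add]
    exact mem_ebase _
  base_N {q n} h := by
    obtain ⟨a', ha', rfl⟩ := h
    refine ebase_ind fun a => ?_
    rw [nA_tmul]
    have : ep εG q 1 = 1 := by
      unfold ep
      split_ifs
      · rfl
      · exact hεG.one
    rw [this]
    exact mem_ebase _
  gen S h0 hθ hΩ := by
    rw [eq_top_iff]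
    rintro v -
    induction v with
    | zero => simp
    | add x y hx hy => exact Submodule.add_mem _ hx hy
    | tmul w a =>
      refine ebase_gen wdG S (AlgHom.id ℝ W) h0 ?_ ?_ w a
      · intro i v hv
        have := hθ i v hv
        rwa [LinearMap.comp_apply, wth_coord] at this
      · intro i v hv
        have := hΩ i v hv
        rwa [LinearMap.comp_apply, wom_coord] at this
  gr := grTensor b wdG op
  gr_I X {_ _} hv := gr_I_tot wdG op εG hεG X hv
  gr_th η {_ _} hv := gr_th_tot wdG op η hv
  pd i := LinearMap.rTensor A (wpd wdG i)
  pd_base i := ebase_ind fun a => by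
    rw [LinearMap.rTensor_tmul, wpd_one, TensorProduct.zero_tmul]
  pd_th i η := by
    refine TensorProduct.ext' fun w a => ?_
    have h : ∀ x, wpd wdG i (wth wdG η * x) = wth wdG η * wpd wdG i x := by
      intro x
      rw [wth_apply, Finset.sum_mul, Finset.sum_mul, map_sum]
      simp only [smul_mul_assoc, map_smul, wpd_θ]
    simp only [Module.End.mul_apply, LinearMap.comp_apply, emul_tmul, LinearMap.rTensor_tmul, h]
  pd_om i η := by
    refine TensorProduct.ext' fun w a => ?_
    simp only [Module.End.mul_apply, LinearMap.comp_apply, emul_tmul, LinearMap.rTensor_tmul,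
      wpd_wom, LinearMap.add_apply, LinearMap.smul_apply, Module.End.one_apply,
      TensorProduct.add_tmul, TensorProduct.smul_tmul']
  pd_gr i {_ _} hv := gr_pd_tot wdG op i hv
  R := eR jW A
  base_R := ebase_ind fun a => by
    have := tmul_mem_eR jW 1 a
    rwa [map_one] at this
  R_D := eR_stable jW _ fun x a => by
    rw [DTot_tmul, ← jW_d hjθ hjΩ, jW_eps hjθ hjΩ hεG hεQ]
    exact Submodule.add_mem _ (tmul_mem_eR _ _ _) (tmul_mem_eR _ _ _)
  R_I X := eR_stable jW _ fun x a => by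
    rw [eI_apply, ITot_tmul, ← jW_I hjθ hjΩ, jW_eps hjθ hjΩ hεG hεQ]
    exact Submodule.add_mem _ (tmul_mem_eR _ _ _) (tmul_mem_eR _ _ _)
  R_th k := eR_stable jW _ fun x a => by
    rw [LinearMap.comp_apply, emul_tmul, ← hjθ, ← map_mul]
    exact tmul_mem_eR _ _ _
  R_gen S h0 hθ hΩ := eR_le jW S fun x a => by
    refine ebase_gen wdQ S jW h0 ?_ ?_ x a
    · intro k v hv
      rw [hjθ]; exact hθ k v hv
    · intro k v hv
      rw [hjΩ]; exact hΩ k v hv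
  nth := nA εG 1 ∘ₗ θN
  nth_N α := ⟨θN α, hmem α, rfl⟩
  nth_I X α := by
    refine TensorProduct.ext' fun w a => ?_
    have h := op.I_mul (X : 𝔤) (hmem α) a
    rw [hconn, sgn_one, neg_one_smul, smul_mul_assoc, one_mul] at h
    simp only [Module.End.mul_apply, LinearMap.comp_apply, eI_apply, ITot_tmul, nA_tmul,
      ep_odd εG (show ¬ Even (1 : ℤ) by decide), h, LinearMap.sub_apply, LinearMap.smul_apply,
      Module.End.one_apply, map_add, TensorProduct.tmul_add, TensorProduct.tmul_neg,
      TensorProduct.tmul_smul, hεG.sq, hεG.I, TensorProduct.neg_tmul]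
    abel
  nth_L X α := by
    refine TensorProduct.ext' fun w a => ?_
    simp only [Module.End.mul_apply, LinearMap.comp_apply, LTot_tmul, nA_tmul,
      ep_odd εG (show ¬ Even (1 : ℤ) by decide), op.L_mul, hequiv, LinearMap.sub_apply,
      map_add, TensorProduct.tmul_add, neg_mul, TensorProduct.tmul_neg, hεG.L]
    abel
  nth_gr α {_ _} hv := gr_nA_tot wdG op εG hεG (hmem α) hv
  nth_R α := eR_stable jW _ fun x a => by
    rw [LinearMap.comp_apply, nA_tmul, ep_odd εG (show ¬ Even (1 : ℤ) by decide),
      jW_eps hjθ hjΩ hεG hεQ]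
    exact tmul_mem_eR _ _ _

end MkCalc

namespace Calc

variable {b : Module.Basis ι ℝ 𝔤}
    {𝔫 : Submodule ℝ 𝔤} {hn : ∀ (Y : 𝔤), ∀ x ∈ 𝔫, ⁅Y, x⁆ ∈ 𝔫}
    {ξ : κ → Module.Dual ℝ 𝔤} {E : Type} [AddCommGroup E] [Module ℝ E]
    (C : Calc b 𝔫 hn ξ E)

/-- Basic elements of degree `m`. -/
def V (m : ℤ) : Submodule ℝ E :=
  ((⨅ X : 𝔤, LinearMap.ker (C.L X)) ⊓ (⨅ X : 𝔤, LinearMap.ker (C.I X))) ⊓ C.gr m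

theorem mem_V {m : ℤ} {v : E} :
    v ∈ C.V m ↔ ((∀ X, C.L X v = 0) ∧ (∀ X, C.I X v = 0)) ∧ v ∈ C.gr m := by
  simp [V, Submodule.mem_inf, Submodule.mem_iInf, LinearMap.mem_ker]

theorem V_T (hD : ∀ m, ∀ v ∈ C.gr m, C.D v ∈ C.gr (m + 1)) {m : ℤ} :
    ∀ v ∈ C.V m, C.T v ∈ C.V m := by
  intro v hv
  rw [mem_V] at hv ⊢
  refine ⟨⟨fun X => ?_, fun X => ?_⟩, C.T_gr hD hv.2⟩
  · rw [← Module.End.mul_apply, ← C.T_L, Module.End.mul_apply, hv.1.1, map_zero]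
  · rw [← Module.End.mul_apply, ← C.T_I, Module.End.mul_apply, hv.1.2, map_zero]

theorem V_K {m : ℤ} : ∀ v ∈ C.V m, C.K v ∈ C.V (m - 1) := by
  intro v hv
  rw [mem_V] at hv ⊢
  refine ⟨⟨fun X => ?_, fun X => ?_⟩, C.K_gr hv.2⟩
  · rw [← Module.End.mul_apply, ← C.K_L, Module.End.mul_apply, hv.1.1, map_zero]
  · have := LinearMap.congr_fun (C.K_I X) v
    rw [Module.End.mul_apply, LinearMap.neg_apply, Module.End.mul_apply, hv.1.2, map_zero] at this
    exact neg_eq_zero.1 this.symm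

theorem final_surj (hD : ∀ m, ∀ v ∈ C.gr m, C.D v ∈ C.gr (m + 1)) {m : ℤ} {v : E}
    (hv : v ∈ C.V m) (hd : C.D v = 0) :
    ∃ r ∈ C.R, r ∈ C.V m ∧ C.D r = 0 ∧ ∃ u ∈ C.V (m - 1), r - v = C.D u := by
  obtain ⟨M, hM⟩ := C.exists_fT v
  have hc := fpol_eval M
  set c := (fpol M).eval 0 with hcdef
  have hg : C.gT M v ∈ C.V m := C.aeval_mem (C.V_T hD) _ v hv
  have hf : C.fT M v ∈ C.V m := C.aeval_mem (C.V_T hD) _ v hv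
  have hgd : C.D (C.gT M v) = 0 := by
    rw [← Module.End.mul_apply, ← C.gT_comm C.T_D, Module.End.mul_apply, hd, map_zero]
  have hfd : C.D (C.fT M v) = 0 := by
    rw [← Module.End.mul_apply, ← C.fT_comm C.T_D, Module.End.mul_apply, hd, map_zero]
  refine ⟨c⁻¹ • C.fT M v, Submodule.smul_mem _ _ hM, Submodule.smul_mem _ _ hf, ?_,
    -(c⁻¹ • C.K (C.gT M v)), Submodule.neg_mem _ (Submodule.smul_mem _ _ (C.V_K _ hg)), ?_⟩
  · rw [map_smul, hfd, smul_zero]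
  · have h1 : C.fT M v = c • v + C.T (C.gT M v) := by
      rw [C.fT_eq]; rfl
    have h2 : C.T (C.gT M v) = - C.D (C.K (C.gT M v)) := by
      simp [T, hgd]
    rw [h1, h2, smul_add, smul_smul, inv_mul_cancel₀ hc, one_smul, map_neg, map_smul, smul_neg]
    abel

theorem final_inj (hD : ∀ m, ∀ v ∈ C.gr m, C.D v ∈ C.gr (m + 1)) {m : ℤ} {v : E}
    (hv : v ∈ C.V m) (hw : C.D v ∈ C.R) :
    ∃ r ∈ C.R, r ∈ C.V m ∧ C.D r = C.D v := by
  obtain ⟨M, hM⟩ := C.exists_fT v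
  have hc := fpol_eval M
  set c := (fpol M).eval 0 with hcdef
  have hf : C.fT M v ∈ C.V m := C.aeval_mem (C.V_T hD) _ v hv
  refine ⟨c⁻¹ • C.fT M v, Submodule.smul_mem _ _ hM, Submodule.smul_mem _ _ hf, ?_⟩
  rw [map_smul, ← Module.End.mul_apply, ← C.fT_comm C.T_D, Module.End.mul_apply,
    C.fT_R M _ hw, smul_smul, inv_mul_cancel₀ hc, one_smul]

end Calc

/-! ### Descent from `j_W(W_Q) ⊗ A` to `W_Q ⊗ B` -/

/-- Elements of `W ⊗ A` killed by all `1 ⊗ f` come from `W ⊗ ⋂ ker f`. -/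
theorem descend {J : Type} {U : Type} [AddCommGroup U] [Module ℝ U]
    (w : Module.Basis J ℝ U) {S : Type} (f : S → Module.End ℝ A) (ψ : B →ₗ[ℝ] A)
    (hψ : ∀ a, (∀ s, f s a = 0) → a ∈ LinearMap.range ψ) (y : U ⊗[ℝ] A)
    (hy : ∀ s, LinearMap.lTensor U (f s) y = 0) : ∃ y', LinearMap.lTensor U ψ y' = y := by
  classical
  let e : U ⊗[ℝ] A ≃ₗ[ℝ] J →₀ A :=
    (TensorProduct.congr w.repr (LinearEquiv.refl ℝ A)).trans
      (TensorProduct.finsuppScalarLeft ℝ A J)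
  have he : ∀ (g : Module.End ℝ A) (t : U ⊗[ℝ] A) (i : J),
      e (LinearMap.lTensor U g t) i = g (e t i) := by
    intro g t i
    induction t with
    | zero => simp
    | add x y hx hy => simp only [map_add, Finsupp.add_apply, hx, hy]
    | tmul u a => simp [e]
  have hsum : y = ∑ i ∈ (e y).support, w i ⊗ₜ (e y i) := by
    apply e.injective
    have h1 : ∀ i a, e (w i ⊗ₜ a) = Finsupp.single i a := by
      intro i a
      ext j
      by_cases h : i = j
      · subst h; simp [e]
      · simp [e, Finsupp.single_eq_of_ne' h]
    rw [map_sum]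
    simp only [h1]
    exact (Finsupp.sum_single (e y)).symm
  have hr : ∀ i, ∃ x, ψ x = e y i := by
    intro i
    apply hψ
    intro s
    rw [← he, hy s]; simp
  choose x hx using hr
  refine ⟨∑ i ∈ (e y).support, w i ⊗ₜ x i, ?_⟩
  conv_rhs => rw [hsum]
  simp [hx]

/-! ### Degrees in the tensor product -/

/-- Elements that are the finite sum of their components under `P`. -/
def compSum {Z E : Type} [AddCommGroup E] [Module ℝ E] (P : Z → Module.End ℝ E) :
    Submodule ℝ E where
  carrier := {x | ∃ s : Finset Z, (∀ z ∉ s, P z x = 0) ∧ ∑ z ∈ s, P z x = x}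
  zero_mem' := ⟨∅, by simp⟩
  add_mem' := by
    classical
    rintro x y ⟨s, hs, hx⟩ ⟨t, ht, hy⟩
    refine ⟨s ∪ t, ?_, ?_⟩
    · intro z hz
      rw [Finset.mem_union, not_or] at hz
      rw [map_add, hs z hz.1, ht z hz.2, add_zero]
    · have h1 : ∑ z ∈ s ∪ t, P z x = x := by
        rw [← Finset.sum_subset Finset.subset_union_left fun z _ hz => hs z hz, hx]
      have h2 : ∑ z ∈ s ∪ t, P z y = y := by
        rw [← Finset.sum_subset Finset.subset_union_right fun z _ hz => ht z hz, hy]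
      simp only [map_add, Finset.sum_add_distrib, h1, h2]
  smul_mem' := by
    rintro c x ⟨s, hs, hx⟩
    refine ⟨s, ?_, ?_⟩
    · intro z hz
      rw [map_smul, hs z hz, smul_zero]
    · simp only [map_smul, ← Finset.smul_sum, hx]

section Deg
variable {b : Module.Basis ι ℝ 𝔤} (wd : WeilData ι b W) (op : Operation 𝔤 A)

/-- The projection to bidegree `z`. -/
def bproj (z : ℤ × ℤ) : Module.End ℝ (W ⊗[ℝ] A) :=
  TensorProduct.map (gproj wd.toOperation z.1) (gproj op z.2)

theorem bproj_ne {p q : ℤ} {w : W} {a : A} (hw : w ∈ wd.grading p) (ha : a ∈ op.grading q)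
    {z : ℤ × ℤ} (hz : z ≠ (p, q)) : bproj wd op z (w ⊗ₜ a) = 0 := by
  rw [bproj, TensorProduct.map_tmul]
  by_cases h : p = z.1
  · have h2 : q ≠ z.2 := by
      rintro rfl
      exact hz (by rw [h])
    rw [gproj_ne op ha h2, TensorProduct.tmul_zero]
  · rw [gproj_ne wd.toOperation hw h, TensorProduct.zero_tmul]

theorem bproj_same {p q : ℤ} {w : W} {a : A} (hw : w ∈ wd.grading p) (ha : a ∈ op.grading q) :
    bproj wd op (p, q) (w ⊗ₜ a) = w ⊗ₜ a := by
  rw [bproj, TensorProduct.map_tmul, gproj_same op ha, gproj_same wd.toOperation hw]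

theorem mem_iSup_grading (op : Operation 𝔤 A) (S : Submodule ℝ A)
    (h : ∀ n, op.grading n ≤ S) (a : A) : a ∈ S := by
  have : (⨆ n, op.grading n) ≤ S := iSup_le h
  rw [gr_iSup] at this
  exact this trivial

theorem compSum_top (x : W ⊗[ℝ] A) : x ∈ compSum (bproj wd op) := by
  induction x with
  | zero => exact Submodule.zero_mem _
  | add x y hx hy => exact Submodule.add_mem _ hx hy
  | tmul w a =>
    refine mem_iSup_grading wd.toOperation
      ((compSum (bproj wd op)).comap ((TensorProduct.mk ℝ W A).flip a)) ?_ w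
    intro p w hw
    refine mem_iSup_grading op
      ((compSum (bproj wd op)).comap (TensorProduct.mk ℝ W A w)) ?_ a
    intro q a ha
    refine ⟨{(p, q)}, ?_, ?_⟩
    · intro z hz
      exact bproj_ne wd op hw ha (by simpa using hz)
    · rw [Finset.sum_singleton]
      exact bproj_same wd op hw ha

theorem bproj_mem (z : ℤ × ℤ) (x : W ⊗[ℝ] A) :
    bproj wd op z x ∈ grTensor b wd op (z.1 + z.2) := by
  induction x with
  | zero => simp
  | add x y hx hy => rw [map_add]; exact Submodule.add_mem _ hx hy
  | tmul w a =>
    rw [bproj, TensorProduct.map_tmul]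
    exact tmul_mem_gr wd op (gproj_mem _ _ _) (gproj_mem _ _ _)

theorem mem_grTensor_iff (n : ℤ) (x : W ⊗[ℝ] A) :
    x ∈ grTensor b wd op n ↔ ∀ z : ℤ × ℤ, z.1 + z.2 ≠ n → bproj wd op z x = 0 := by
  constructor
  · intro hx z hz
    have : grTensor b wd op n ≤ LinearMap.ker (bproj wd op z) := by
      refine iSup_le fun p => ?_
      rintro _ ⟨t, rfl⟩
      induction t with
      | zero => simp
      | add x y hx hy => rw [map_add]; exact Submodule.add_mem _ hx hy
      | tmul w a =>
        rw [LinearMap.mem_ker]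
        refine bproj_ne wd op w.2 a.2 ?_
        rintro rfl
        exact hz (by simp)
    exact this hx
  · intro h
    obtain ⟨s, -, hs⟩ := compSum_top wd op x
    rw [← hs]
    refine Submodule.sum_mem _ fun z _ => ?_
    by_cases hz : z.1 + z.2 = n
    · rw [← hz]; exact bproj_mem wd op z x
    · rw [h z hz]; exact Submodule.zero_mem _

end Deg

/-! ### The map `j` -/

section JMap
variable {b : Module.Basis ι ℝ 𝔤} {bq : Module.Basis κ ℝ 𝔮} {π : 𝔤 →ₗ⁅ℝ⁆ 𝔮}
  {wdG : WeilData ι b W} {wdQ : WeilData κ bq WQ} {jW : WQ →ₐ[ℝ] W}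
  {op : Operation 𝔤 A} {opQ : Operation 𝔮 B} {ψ : B →ₐ[ℝ] A}

theorem j_D (hjθ : ∀ k : κ, jW (wdQ.θ k) = wth wdG (xi π bq k))
    (hjΩ : ∀ k : κ, jW (wdQ.Ω k) = wom wdG (xi π bq k))
    {εG : Module.End ℝ W} (hεG : IsSign wdG.toOperation εG)
    {εQ : Module.End ℝ WQ} (hεQ : IsSign wdQ.toOperation εQ)
    (hψd : ∀ x : B, ψ (opQ.d x) = op.d (ψ x)) (x : WQ ⊗[ℝ] B) :
    DTot wdG op εG (TensorProduct.map jW.toLinearMap ψ.toLinearMap x) =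
      TensorProduct.map jW.toLinearMap ψ.toLinearMap (DTot wdQ opQ εQ x) := by
  induction x with
  | zero => simp
  | add x y hx hy => simp only [map_add, hx, hy]
  | tmul w a =>
    simp only [TensorProduct.map_tmul, DTot_tmul, map_add, AlgHom.toLinearMap_apply, hψd,
      jW_d hjθ hjΩ, jW_eps hjθ hjΩ hεG hεQ]

theorem j_L (hjθ : ∀ k : κ, jW (wdQ.θ k) = wth wdG (xi π bq k))
    (hjΩ : ∀ k : κ, jW (wdQ.Ω k) = wom wdG (xi π bq k))
    (hψL : ∀ (Y : 𝔤) (x : B), ψ (opQ.L (π Y) x) = op.L Y (ψ x)) (Y : 𝔤) (x : WQ ⊗[ℝ] B) :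
    LTot wdG op Y (TensorProduct.map jW.toLinearMap ψ.toLinearMap x) =
      TensorProduct.map jW.toLinearMap ψ.toLinearMap (LTot wdQ opQ (π Y) x) := by
  induction x with
  | zero => simp
  | add x y hx hy => simp only [map_add, hx, hy]
  | tmul w a =>
    simp only [TensorProduct.map_tmul, LTot_tmul, map_add, AlgHom.toLinearMap_apply, hψL,
      jW_L hjθ hjΩ]

theorem j_I (hjθ : ∀ k : κ, jW (wdQ.θ k) = wth wdG (xi π bq k))
    (hjΩ : ∀ k : κ, jW (wdQ.Ω k) = wom wdG (xi π bq k))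
    {εG : Module.End ℝ W} (hεG : IsSign wdG.toOperation εG)
    {εQ : Module.End ℝ WQ} (hεQ : IsSign wdQ.toOperation εQ)
    (hψI : ∀ (Y : 𝔤) (x : B), ψ (opQ.I (π Y) x) = op.I Y (ψ x)) (Y : 𝔤) (x : WQ ⊗[ℝ] B) :
    ITot wdG op εG Y (TensorProduct.map jW.toLinearMap ψ.toLinearMap x) =
      TensorProduct.map jW.toLinearMap ψ.toLinearMap (ITot wdQ opQ εQ (π Y) x) := by
  induction x with
  | zero => simp
  | add x y hx hy => simp only [map_add, hx, hy]
  | tmul w a =>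
    simp only [TensorProduct.map_tmul, ITot_tmul, map_add, AlgHom.toLinearMap_apply, hψI,
      jW_I hjθ hjΩ, jW_eps hjθ hjΩ hεG hεQ]

theorem j_bproj (hjθ : ∀ k : κ, jW (wdQ.θ k) = wth wdG (xi π bq k))
    (hjΩ : ∀ k : κ, jW (wdQ.Ω k) = wom wdG (xi π bq k))
    (hψgr : ∀ m : ℤ, opQ.grading m = Submodule.comap ψ.toLinearMap (op.grading m))
    (z : ℤ × ℤ) (x : WQ ⊗[ℝ] B) :
    bproj wdG op z (TensorProduct.map jW.toLinearMap ψ.toLinearMap x) =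
      TensorProduct.map jW.toLinearMap ψ.toLinearMap (bproj wdQ opQ z x) := by
  have hψ : ∀ a, gproj op z.2 (ψ a) = ψ (gproj opQ z.2 a) := by
    intro a
    have := gproj_comm opQ op 0 ψ.toLinearMap (fun n a ha => by
      rw [hψgr] at ha; rw [add_zero]; exact ha) z.2 a
    rwa [sub_zero] at this
  induction x with
  | zero => simp
  | add x y hx hy => simp only [map_add, hx, hy]
  | tmul w a =>
    simp only [bproj, TensorProduct.map_tmul, AlgHom.toLinearMap_apply, hψ, jW_proj hjθ hjΩ]

theorem j_inj (hjθ : ∀ k : κ, jW (wdQ.θ k) = wth wdG (xi π bq k))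
    (hjΩ : ∀ k : κ, jW (wdQ.Ω k) = wom wdG (xi π bq k)) (hπ : Function.Surjective π)
    (hψ : Function.Injective ψ) :
    Function.Injective (TensorProduct.map jW.toLinearMap ψ.toLinearMap) :=
  TensorProduct.map_injective_of_flat_flat _ _ (jW_inj hjθ hjΩ hπ) hψ

theorem j_descend (hjθ : ∀ k : κ, jW (wdQ.θ k) = wth wdG (xi π bq k))
    (hjΩ : ∀ k : κ, jW (wdQ.Ω k) = wom wdG (xi π bq k)) (hπ : Function.Surjective π)
    {εG : Module.End ℝ W} (hεG : IsSign wdG.toOperation εG)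
    {εQ : Module.End ℝ WQ} (hεQ : IsSign wdQ.toOperation εQ)
    {𝔫 : Submodule ℝ 𝔤} (hπker : ∀ X : 𝔤, π X = 0 ↔ X ∈ 𝔫)
    (hψrange : LinearMap.range ψ.toLinearMap =
      (⨅ X : ↥𝔫, LinearMap.ker (op.L (X : 𝔤))) ⊓
        (⨅ X : ↥𝔫, LinearMap.ker (op.I (X : 𝔤))))
    {v : W ⊗[ℝ] A} (hv : v ∈ eR jW A) (hL : ∀ X, LTot wdG op X v = 0)
    (hI : ∀ X, ITot wdG op εG X v = 0) :
    ∃ x : WQ ⊗[ℝ] B, TensorProduct.map jW.toLinearMap ψ.toLinearMap x = v := by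
  obtain ⟨y, rfl⟩ := hv
  have hinj : Function.Injective (LinearMap.rTensor A jW.toLinearMap) :=
    Module.Flat.rTensor_preserves_injective_linearMap _ (jW_inj hjθ hjΩ hπ)
  have hL' : ∀ X : ↥𝔫, LinearMap.lTensor WQ (op.L (X : 𝔤)) y = 0 := by
    intro X
    have hX : π (X : 𝔤) = 0 := (hπker _).2 X.2
    apply hinj
    rw [map_zero, ← hL (X : 𝔤)]
    generalize y = y
    induction y with
    | zero => simp
    | add x y hx hy => simp only [map_add, hx, hy]
    | tmul w a =>
      simp only [LinearMap.rTensor_tmul, LinearMap.lTensor_tmul, AlgHom.toLinearMap_apply,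
        LTot_tmul, ← jW_L hjθ hjΩ, hX]
      simp
  have hI' : ∀ X : ↥𝔫, LinearMap.lTensor WQ (op.I (X : 𝔤)) y = 0 := by
    intro X
    have hX : π (X : 𝔤) = 0 := (hπker _).2 X.2
    have h1 : TensorProduct.map εQ (op.I (X : 𝔤)) y = 0 := by
      apply hinj
      rw [map_zero, ← hI (X : 𝔤)]
      generalize y = y
      induction y with
      | zero => simp
      | add x y hx hy => simp only [map_add, hx, hy]
      | tmul w a =>
        simp only [LinearMap.rTensor_tmul, TensorProduct.map_tmul, AlgHom.toLinearMap_apply,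
          ITot_tmul, ← jW_I hjθ hjΩ, hX, jW_eps hjθ hjΩ hεG hεQ]
        simp
    have h2 : LinearMap.lTensor WQ (op.I (X : 𝔤)) y =
        LinearMap.rTensor A εQ (TensorProduct.map εQ (op.I (X : 𝔤)) y) := by
      generalize y = y
      induction y with
      | zero => simp
      | add x y hx hy => simp only [map_add, hx, hy]
      | tmul w a => simp [hεQ.sq]
    rw [h2, h1, map_zero]
  obtain ⟨y', hy'⟩ := descend (wbas wdQ)
    (fun s : ↥𝔫 ⊕ ↥𝔫 => s.elim (fun X : ↥𝔫 => op.L (X : 𝔤)) (fun X : ↥𝔫 => op.I (X : 𝔤)))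
    ψ.toLinearMap (by
      intro a ha
      rw [hψrange]
      simp only [Submodule.mem_inf, Submodule.mem_iInf, LinearMap.mem_ker]
      exact ⟨fun X => ha (Sum.inl X), fun X => ha (Sum.inr X)⟩) y
    (by
      rintro (X | X)
      · exact hL' X
      · exact hI' X)
  refine ⟨y', ?_⟩
  rw [← hy', ← LinearMap.comp_apply, LinearMap.rTensor_comp_lTensor]

end JMap

/-- **Cartan.**  Let `N ⊴ G` be a closed normal subgroup, `Q = G/N`
(infinitesimally: an ideal `𝔫 ⊆ 𝔤` and the quotient `𝔮 = 𝔤/𝔫`, presented by a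
surjective morphism `π` with kernel `𝔫`), and let `A` be a `G`-operation with a
`G`-invariant `N`-connection `θ̃`.  Let `B = A_{N,bas}` be the `N`-basic subalgebra with
its residual `Q`-operation structure (presented by an embedding `ψ : B → A` with image
the `N`-basic elements).  Then the natural inclusion
`j = j_W ⊗ ψ : W_Q ⊗ B → W_G ⊗ A` maps `Q`-basic elements to `G`-basic elements and
induces an isomorphism `WH^*_Q(B) ≅ WH^*_G(A)` in basic cohomology: any linear map of
cohomologies induced by `j` is bijective. -/
theorem cartan_reduction_theorem
    (b : Module.Basis ι ℝ 𝔤) (op : Operation 𝔤 A)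
    -- the ideal 𝔫 and the quotient Lie algebra 𝔮 = 𝔤/𝔫:
    (𝔫 : Submodule ℝ 𝔤) (hn : ∀ (Y : 𝔤), ∀ x ∈ 𝔫, ⁅Y, x⁆ ∈ 𝔫)
    (π : 𝔤 →ₗ⁅ℝ⁆ 𝔮) (hπsurj : Function.Surjective π)
    (hπker : ∀ X : 𝔤, π X = 0 ↔ X ∈ 𝔫)
    (bq : Module.Basis κ ℝ 𝔮)
    -- the `G`-invariant `N`-connection `θ̃` on `A`:
    (θN : Module.Dual ℝ ↥𝔫 →ₗ[ℝ] A)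
    (hmem : ∀ α, θN α ∈ op.grading 1)
    (hconn : ∀ (X : ↥𝔫) (α : Module.Dual ℝ ↥𝔫),
      op.I (X : 𝔤) (θN α) = α X • (1 : A))
    (hequiv : ∀ (Y : 𝔤) (α : Module.Dual ℝ ↥𝔫),
      op.L Y (θN α) = -θN (α ∘ₗ adRes 𝔫 hn Y))
    -- `B = A_{N,bas}` with its residual `𝔮`-operation structure, embedded in `A` by `ψ`:
    (opQ : Operation 𝔮 B) (ψ : B →ₐ[ℝ] A)
    (hψinj : Function.Injective ψ)
    (hψrange : LinearMap.range ψ.toLinearMap =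
      (⨅ X : ↥𝔫, LinearMap.ker (op.L (X : 𝔤))) ⊓
        (⨅ X : ↥𝔫, LinearMap.ker (op.I (X : 𝔤))))
    (hψd : ∀ x : B, ψ (opQ.d x) = op.d (ψ x))
    (hψL : ∀ (Y : 𝔤) (x : B), ψ (opQ.L (π Y) x) = op.L Y (ψ x))
    (hψI : ∀ (Y : 𝔤) (x : B), ψ (opQ.I (π Y) x) = op.I Y (ψ x))
    (hψgr : ∀ m : ℤ, opQ.grading m = Submodule.comap ψ.toLinearMap (op.grading m))
    -- the Weil algebras of `𝔤` and `𝔮`, and the inclusion `j_W : W_Q → W_G`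
    -- induced by `𝔮* = (𝔤/𝔫)* ⊆ 𝔤*`:
    (wdG : WeilData ι b W) (wdQ : WeilData κ bq WQ)
    (εG : Module.End ℝ W) (hεG : ∀ (n : ℤ), ∀ w ∈ wdG.grading n, εG w = sgn n • w)
    (εQ : Module.End ℝ WQ) (hεQ : ∀ (n : ℤ), ∀ w ∈ wdQ.grading n, εQ w = sgn n • w)
    (jW : WQ →ₐ[ℝ] W)
    (hjθ : ∀ k : κ, jW (wdQ.θ k) = ∑ i, (bq.dualBasis k) (π (b i)) • wdG.θ i)
    (hjΩ : ∀ k : κ, jW (wdQ.Ω k) = ∑ i, (bq.dualBasis k) (π (b i)) • wdG.Ω i)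
    -- the `G`- and `Q`-basic subcomplexes of `W_G ⊗ A` and `W_Q ⊗ B`,
    -- and the inclusion `j = j_W ⊗ ψ`; `j` maps cocycles to cocycles:
    (hjcoc : ∀ (m : ℤ) (x : WQ ⊗[ℝ] B),
      x ∈ cocycles (DTot wdQ opQ εQ)
        (fun n => ((⨅ X : 𝔮, LinearMap.ker (LTot wdQ opQ X)) ⊓
          (⨅ X : 𝔮, LinearMap.ker (ITot wdQ opQ εQ X))) ⊓ grTensor bq wdQ opQ n) m →
      TensorProduct.map jW.toLinearMap ψ.toLinearMap x ∈
        cocycles (DTot wdG op εG)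
          (fun n => ((⨅ X : 𝔤, LinearMap.ker (LTot wdG op X)) ⊓
            (⨅ X : 𝔤, LinearMap.ker (ITot wdG op εG X))) ⊓ grTensor b wdG op n) m) :
    -- conclusion: `j` maps basic elements to basic elements and induces an
    -- isomorphism in basic cohomology
    (∀ x : WQ ⊗[ℝ] B,
      x ∈ (⨅ X : 𝔮, LinearMap.ker (LTot wdQ opQ X)) ⊓
          (⨅ X : 𝔮, LinearMap.ker (ITot wdQ opQ εQ X)) →
      TensorProduct.map jW.toLinearMap ψ.toLinearMap x ∈
        (⨅ X : 𝔤, LinearMap.ker (LTot wdG op X)) ⊓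
          (⨅ X : 𝔤, LinearMap.ker (ITot wdG op εG X))) ∧
    (∀ (m : ℤ)
      (F : gradedCoh (DTot wdQ opQ εQ)
          (fun n => ((⨅ X : 𝔮, LinearMap.ker (LTot wdQ opQ X)) ⊓
            (⨅ X : 𝔮, LinearMap.ker (ITot wdQ opQ εQ X))) ⊓ grTensor bq wdQ opQ n) m
        →ₗ[ℝ]
        gradedCoh (DTot wdG op εG)
          (fun n => ((⨅ X : 𝔤, LinearMap.ker (LTot wdG op X)) ⊓
            (⨅ X : 𝔤, LinearMap.ker (ITot wdG op εG X))) ⊓ grTensor b wdG op n) m),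
      (∀ (x : WQ ⊗[ℝ] B) (hx : _),
        F (Submodule.Quotient.mk ⟨x, hx⟩) =
          Submodule.Quotient.mk
            ⟨TensorProduct.map jW.toLinearMap ψ.toLinearMap x, hjcoc m x hx⟩) →
      Function.Bijective F) := by
  have hjθ' : ∀ k : κ, jW (wdQ.θ k) = wth wdG (xi π bq k) := by
    intro k
    rw [hjθ k, wth_apply]
    simp [xi_apply]
  have hjΩ' : ∀ k : κ, jW (wdQ.Ω k) = wom wdG (xi π bq k) := by
    intro k
    rw [hjΩ k, wom_apply]
    simp [xi_apply]
  have hsG : IsSign wdG.toOperation εG := hεG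
  have hsQ : IsSign wdQ.toOperation εQ := hεQ
  have jD := j_D (op := op) (opQ := opQ) (ψ := ψ) hjθ' hjΩ' hsG hsQ hψd
  have jL := j_L (op := op) (opQ := opQ) (ψ := ψ) hjθ' hjΩ' hψL
  have jI := j_I (op := op) (opQ := opQ) (ψ := ψ) hjθ' hjΩ' hsG hsQ hψI
  have jinj := j_inj (ψ := ψ) hjθ' hjΩ' hπsurj hψinj
  have hbas : ∀ x : WQ ⊗[ℝ] B,
      x ∈ (⨅ X : 𝔮, LinearMap.ker (LTot wdQ opQ X)) ⊓
          (⨅ X : 𝔮, LinearMap.ker (ITot wdQ opQ εQ X)) ↔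
      (TensorProduct.map jW.toLinearMap ψ.toLinearMap) x ∈ (⨅ X : 𝔤, LinearMap.ker (LTot wdG op X)) ⊓
          (⨅ X : 𝔤, LinearMap.ker (ITot wdG op εG X)) := by
    intro x
    simp only [Submodule.mem_inf, Submodule.mem_iInf, LinearMap.mem_ker, jL, jI,
      map_eq_zero_iff (TensorProduct.map jW.toLinearMap ψ.toLinearMap) jinj]
    constructor
    · rintro ⟨h1, h2⟩
      exact ⟨fun X => h1 _, fun X => h2 _⟩
    · rintro ⟨h1, h2⟩
      refine ⟨fun X => ?_, fun X => ?_⟩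
      · obtain ⟨Y, rfl⟩ := hπsurj X
        exact h1 Y
      · obtain ⟨Y, rfl⟩ := hπsurj X
        exact h2 Y
  refine ⟨fun x hx => (hbas x).1 hx, ?_⟩
  let C := mkCalc op 𝔫 hn hπsurj hπker θN hmem hconn hequiv hsG hsQ hjθ' hjΩ'
  have hCD : ∀ m, ∀ v ∈ C.gr m, C.D v ∈ C.gr (m + 1) := fun m v hv =>
    gr_D_tot wdG op εG hsG hv
  have hdesc : ∀ (m : ℤ) (r : W ⊗[ℝ] A), r ∈ C.R → r ∈ C.V m → ∃ x : WQ ⊗[ℝ] B,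
      (TensorProduct.map jW.toLinearMap ψ.toLinearMap) x = r ∧ x ∈ ((⨅ X : 𝔮, LinearMap.ker (LTot wdQ opQ X)) ⊓
          (⨅ X : 𝔮, LinearMap.ker (ITot wdQ opQ εQ X))) ⊓ grTensor bq wdQ opQ m := by
    intro m r hrR hrV
    have hrV' := C.mem_V.1 hrV
    obtain ⟨x, hx⟩ := j_descend (op := op) (ψ := ψ) hjθ' hjΩ' hπsurj hsG hsQ hπker hψrange
      hrR hrV'.1.1 hrV'.1.2
    refine ⟨x, hx, (hbas x).2 ?_, ?_⟩
    · rw [hx]; exact hrV.1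
    · refine (mem_grTensor_iff wdQ opQ m x).2 ?_
      intro z hz
      apply jinj
      rw [map_zero, ← j_bproj (op := op) hjθ' hjΩ' hψgr, hx]
      exact (mem_grTensor_iff wdG op m r).1 hrV.2 z hz
  intro m F hF
  constructor
  · rw [injective_iff_map_eq_zero]
    intro q hq
    obtain ⟨⟨x, hx⟩, rfl⟩ := Submodule.Quotient.mk_surjective _ q
    rw [hF x hx, Submodule.Quotient.mk_eq_zero] at hq
    obtain ⟨v, hvV, hvD⟩ := hq
    have hvD' : C.D v = (TensorProduct.map jW.toLinearMap ψ.toLinearMap) x := hvD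
    have hxR : (TensorProduct.map jW.toLinearMap ψ.toLinearMap) x ∈ C.R := by
      have : (TensorProduct.map jW.toLinearMap ψ.toLinearMap) x = LinearMap.rTensor A jW.toLinearMap (LinearMap.lTensor WQ ψ.toLinearMap x) := by
        rw [← LinearMap.comp_apply, LinearMap.rTensor_comp_lTensor]
      rw [this]
      exact ⟨_, rfl⟩
    obtain ⟨r, hrR, hrV, hrD⟩ := C.final_inj hCD (v := v) (m := m - 1) hvV (hvD' ▸ hxR)
    obtain ⟨y, hy, hyV⟩ := hdesc _ r hrR hrV
    rw [Submodule.Quotient.mk_eq_zero]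
    refine ⟨y, hyV, ?_⟩
    apply jinj
    rw [← jD, hy]
    exact hrD.trans hvD'
  · intro q
    obtain ⟨⟨v, hv⟩, rfl⟩ := Submodule.Quotient.mk_surjective _ q
    obtain ⟨r, hrR, hrV, hrD, u, huV, hu⟩ := C.final_surj hCD (v := v) (m := m) hv.1 hv.2
    obtain ⟨y, hy, hyV⟩ := hdesc _ r hrR hrV
    have hyc : DTot wdQ opQ εQ y = 0 := by
      apply jinj
      rw [map_zero, ← jD, hy]
      exact hrD
    refine ⟨Submodule.Quotient.mk ⟨y, hyV, hyc⟩, ?_⟩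
    rw [hF y ⟨hyV, hyc⟩, Submodule.Quotient.eq]
    refine ⟨u, huV, ?_⟩
    have : C.D u = (TensorProduct.map jW.toLinearMap ψ.toLinearMap) y - v := by rw [hy]; exact hu.symm
    exact this

end
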